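/- Let K be a number field, B ⊆ K an order, S ⊆ B a multiplicative submonoid with 0 ∉ S, and R = BS⁻¹ the localization of B at S. Assume the group of units Rˣ is infinite. Then for every unit α ∈ Rˣ with α² ≠ 1, the subgroup of SL₂(R) generated by U_α ∪ U_αᵗ has finite index in SL₂(R). -/

import Mathlib

/-!
The subgroup in question contains `E k`, the group generated by the elementary matrices with
off-diagonal entry in `kR`, for some positive integer `k` divisible by `α² - 1`. So it is enough
that every `E k` has finite index in `SL₂(R)`. The argument combines congruence computations in the
style of Mennicke and Vaserstein with the choice of Dirichlet primes of Carter and Keller.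

*The ring.* Only the properties collected in `Hyp` are used: quotients are finite, `R/p` has at
most `pⁿ` elements, there is a unit `w` of infinite order, and a unimodular row `(a, b)` can be
changed to `(a, b₁)` with `b₁ ≡ b` modulo `a` and `R/b₁` a quotient of `ℤ` (`Loc.cyc`). For the last
one, `b₁` is chosen so that `b₁/a` generates `K` and `b₁` is prime to the denominators that occur
when the generators of the order are written as polynomials in `b₁/a`. The unit exists because the
torsion units of a number field are finite in number.

*Control of exponents.* The order of `(R/ℓ)ˣ` divides a number `ee n ℓ`, a power of `ℓ` times the
product of the `ℓⁱ - 1` with `1 ≤ i ≤ n`. For each prime `lam` there is a residue class of primes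
`ℓ` for which the `lam`-part of `ee n ℓ` is bounded by that of the constant `MM n`
(`exists_control`).

*The normal core.* If `u` is a unit which is `1` modulo the first entry of the row of `g`, diagonal
conjugation of `g` by `u` is realised by elementary factors (`sig_eq`). Applied to two rows in the
same orbit and to powers of `w`, this puts elementary matrices into `g⁻¹ E k g ∩ E k`
(`mem_J_of`). By `Hyp.cyc` and Dirichlet's theorem the first entry can be moved to a product of
primes whose `ee` is under control, one `lam` at a time, which gives bounds independent of `g`. It
follows that the normal core of `E k` contains `E κ` for some `κ ≠ 0` (`Hyp.core`).

*Trivial actions.* The same control shows that diagonal conjugation by `w ^ (MM n ^ 2)` is trivial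
modulo the normal core (`Hyp.sig_triv`). Hence so is, at deep level, conjugation by every
elementary matrix over the field of fractions, first for multiples of `w ^ (MM n ^ 2) - 1` and
then, by rescaling, for all entries (`Hyp.Zf_cj`). In particular the classes of `Del κ κ` are
central modulo the normal core (`Hyp.cent`), and diagonal conjugation by squares is trivial at deep
level (`Hyp.Zf_sq`). Quadratic reciprocity and a norm form argument give the same for every odd
prime (`Hyp.Zf_prime`).

*Counting.* For an odd prime `ℓ` prime to `κ`, the map `A ↦ dl A * A⁻¹`, where `dl` is diagonal
conjugation by `ℓ`, is by centrality a homomorphism modulo the normal core. It is trivial on the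
matrices whose first entry is `1` modulo `ℓ`, so its image is a quotient of a subgroup of
`(R/ℓ)ˣ`; and it hits every class whose second entry can be moved to `κℓ` (`Hyp.exists_P`). A
suitable choice of `ℓ` therefore puts any finite set of classes of `Del κ κ` into a subgroup of
order dividing `MM n` (`Hyp.finset_P`), so that these classes are finite in number.
-/

/-- The set `U_α` of upper unitriangular matrices with upper-right entry in the
principal ideal `(α² - 1)R`. -/
def upperUnip {R : Type*} [CommRing R] (α : Rˣ) :
    Set (Matrix.SpecialLinearGroup (Fin 2) R) :=
  { g | ∃ r : R, (g : Matrix (Fin 2) (Fin 2) R) = !![1, ((α : R) ^ 2 - 1) * r; 0, 1] }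

/-- The set `U_αᵗ` of transposes of elements of `U_α`. -/
def lowerUnip {R : Type*} [CommRing R] (α : Rˣ) :
    Set (Matrix.SpecialLinearGroup (Fin 2) R) :=
  { g | ∃ r : R, (g : Matrix (Fin 2) (Fin 2) R) = !![1, 0; ((α : R) ^ 2 - 1) * r, 1] }

namespace SLU

open Matrix

/-! ### Elementary subgroups and congruence conditions in `SL₂` -/

section Basic

variable {R : Type*} [CommRing R]

/-- The special linear group `SL₂(R)`. -/
abbrev G (R : Type*) [CommRing R] := Matrix.SpecialLinearGroup (Fin 2) R

@[ext]
theorem ext4 {g h : G R} (h00 : g 0 0 = h 0 0) (h01 : g 0 1 = h 0 1)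
    (h10 : g 1 0 = h 1 0) (h11 : g 1 1 = h 1 1) : g = h := by
  apply Matrix.SpecialLinearGroup.ext
  intro i j
  fin_cases i <;> fin_cases j <;> assumption

theorem det4 (g : G R) : g 0 0 * g 1 1 - g 0 1 * g 1 0 = 1 := by
  have := g.det_coe
  rwa [Matrix.det_fin_two] at this

/-- The matrix with rows `(a, b)` and `(c, d)`, where `ad - bc = 1`. -/
def mk4 (a b c d : R) (h : a * d - b * c = 1) : G R :=
  ⟨!![a, b; c, d], by rw [Matrix.det_fin_two_of, h]⟩

@[simp] theorem mk4_00 (a b c d : R) (h) : mk4 a b c d h 0 0 = a := rfl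
@[simp] theorem mk4_01 (a b c d : R) (h) : mk4 a b c d h 0 1 = b := rfl
@[simp] theorem mk4_10 (a b c d : R) (h) : mk4 a b c d h 1 0 = c := rfl
@[simp] theorem mk4_11 (a b c d : R) (h) : mk4 a b c d h 1 1 = d := rfl

@[simp] theorem mul00 (g h : G R) : (g * h) 0 0 = g 0 0 * h 0 0 + g 0 1 * h 1 0 := by
  rw [Matrix.SpecialLinearGroup.coe_mul, Matrix.mul_apply, Fin.sum_univ_two]
@[simp] theorem mul01 (g h : G R) : (g * h) 0 1 = g 0 0 * h 0 1 + g 0 1 * h 1 1 := by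
  rw [Matrix.SpecialLinearGroup.coe_mul, Matrix.mul_apply, Fin.sum_univ_two]
@[simp] theorem mul10 (g h : G R) : (g * h) 1 0 = g 1 0 * h 0 0 + g 1 1 * h 1 0 := by
  rw [Matrix.SpecialLinearGroup.coe_mul, Matrix.mul_apply, Fin.sum_univ_two]
@[simp] theorem mul11 (g h : G R) : (g * h) 1 1 = g 1 0 * h 0 1 + g 1 1 * h 1 1 := by
  rw [Matrix.SpecialLinearGroup.coe_mul, Matrix.mul_apply, Fin.sum_univ_two]
@[simp] theorem one00 : (1 : G R) 0 0 = 1 := by simp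
@[simp] theorem one01 : (1 : G R) 0 1 = 0 := by simp
@[simp] theorem one10 : (1 : G R) 1 0 = 0 := by simp
@[simp] theorem one11 : (1 : G R) 1 1 = 1 := by simp
@[simp] theorem inv00 (g : G R) : g⁻¹ 0 0 = g 1 1 := by
  rw [Matrix.SpecialLinearGroup.SL2_inv_expl]; rfl
@[simp] theorem inv01 (g : G R) : g⁻¹ 0 1 = - g 0 1 := by
  rw [Matrix.SpecialLinearGroup.SL2_inv_expl]; rfl
@[simp] theorem inv10 (g : G R) : g⁻¹ 1 0 = - g 1 0 := by
  rw [Matrix.SpecialLinearGroup.SL2_inv_expl]; rfl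
@[simp] theorem inv11 (g : G R) : g⁻¹ 1 1 = g 0 0 := by
  rw [Matrix.SpecialLinearGroup.SL2_inv_expl]; rfl

/-- The upper elementary matrix with off-diagonal entry `s`. -/
def X (s : R) : G R := mk4 1 s 0 1 (by ring)
/-- The lower elementary matrix with off-diagonal entry `s`. -/
def Y (s : R) : G R := mk4 1 0 s 1 (by ring)

@[simp] theorem X00 (s : R) : X s 0 0 = 1 := rfl
@[simp] theorem X01 (s : R) : X s 0 1 = s := rfl
@[simp] theorem X10 (s : R) : X s 1 0 = 0 := rfl
@[simp] theorem X11 (s : R) : X s 1 1 = 1 := rfl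
@[simp] theorem Y00 (s : R) : Y s 0 0 = 1 := rfl
@[simp] theorem Y01 (s : R) : Y s 0 1 = 0 := rfl
@[simp] theorem Y10 (s : R) : Y s 1 0 = s := rfl
@[simp] theorem Y11 (s : R) : Y s 1 1 = 1 := rfl

theorem X_add (s t : R) : X (s + t) = X s * X t := by ext <;> simp <;> ring
theorem Y_add (s t : R) : Y (s + t) = Y s * Y t := by ext <;> simp
theorem X_neg (s : R) : X (-s) = (X s)⁻¹ := by ext <;> simp
theorem Y_neg (s : R) : Y (-s) = (Y s)⁻¹ := by ext <;> simp
@[simp] theorem X_zero : X (0 : R) = 1 := by ext <;> simp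
@[simp] theorem Y_zero : Y (0 : R) = 1 := by ext <;> simp

/-- The subgroup generated by the upper elementary matrices with entry in `iR` and the lower
elementary matrices with entry in `jR`. -/
def E2 (i j : R) : Subgroup (G R) :=
  Subgroup.closure {g | ∃ r : R, g = X (i * r) ∨ g = Y (j * r)}

/-- The subgroup generated by the elementary matrices with off-diagonal entry in `kR`. -/
abbrev E (k : R) : Subgroup (G R) := E2 k k

theorem X_mem_E2 {i j s : R} (h : i ∣ s) : X s ∈ E2 i j := by
  obtain ⟨r, rfl⟩ := h
  exact Subgroup.subset_closure ⟨r, Or.inl rfl⟩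

theorem Y_mem_E2 {i j s : R} (h : j ∣ s) : Y s ∈ E2 i j := by
  obtain ⟨r, rfl⟩ := h
  exact Subgroup.subset_closure ⟨r, Or.inr rfl⟩

theorem E2_le {i j : R} {H : Subgroup (G R)} (hX : ∀ r, X (i * r) ∈ H)
    (hY : ∀ r, Y (j * r) ∈ H) : E2 i j ≤ H := by
  rw [E2, Subgroup.closure_le]
  rintro g ⟨r, rfl | rfl⟩
  exacts [hX r, hY r]

theorem E2_mono {i j i' j' : R} (hi : i ∣ i') (hj : j ∣ j') : E2 i' j' ≤ E2 i j :=
  E2_le (fun _ => X_mem_E2 (hi.mul_right _)) (fun _ => Y_mem_E2 (hj.mul_right _))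

/-- Matrices `(a, b; c, d)` with `ij ∣ a - 1`, `i ∣ b` and `j ∣ c`; the condition `ij ∣ d - 1`
then follows from the determinant. -/
def Del (i j : R) : Subgroup (G R) where
  carrier := {g | i * j ∣ g 0 0 - 1 ∧ i ∣ g 0 1 ∧ j ∣ g 1 0}
  one_mem' := by simp
  mul_mem' := by
    rintro g h ⟨h1, ⟨x, h2⟩, ⟨y, h3⟩⟩ ⟨h1', ⟨x', h2'⟩, ⟨y', h3'⟩⟩
    refine ⟨?_, ?_, ?_⟩
    · have : (g * h) 0 0 - 1 = (g 0 0 - 1) * h 0 0 + (h 0 0 - 1) + i * j * (x * y') := by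
        rw [mul00, h2, h3']; ring
      rw [this]
      exact ((h1.mul_right _).add h1').add (Dvd.intro _ rfl)
    · rw [mul01, h2, h2']
      exact ⟨g 0 0 * x' + x * h 1 1, by ring⟩
    · rw [mul10, h3, h3']
      exact ⟨y * h 0 0 + g 1 1 * y', by ring⟩
  inv_mem' := by
    rintro g ⟨h1, ⟨x, h2⟩, ⟨y, h3⟩⟩
    refine ⟨?_, ?_, ?_⟩
    · have : g⁻¹ 0 0 - 1 = - (g 0 0 - 1) * g 1 1 + i * j * (x * y) := by
        rw [inv00]
        have := det4 g
        rw [h2, h3] at this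
        linear_combination this
      rw [this]
      exact ((h1.neg_right).mul_right _).add (Dvd.intro _ rfl)
    · rw [inv01, h2]; exact ⟨-x, by ring⟩
    · rw [inv10, h3]; exact ⟨-y, by ring⟩

theorem mem_Del {i j : R} {g : G R} :
    g ∈ Del i j ↔ i * j ∣ g 0 0 - 1 ∧ i ∣ g 0 1 ∧ j ∣ g 1 0 := Iff.rfl

theorem Del_d {i j : R} {g : G R} (h : g ∈ Del i j) : i * j ∣ g 1 1 - 1 := by
  have := (Del i j).inv_mem h
  simpa using this.1

theorem E2_le_Del (i j : R) : E2 i j ≤ Del i j :=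
  E2_le (fun r => by simp [mem_Del]) (fun r => by simp [mem_Del])

theorem Del_mono {i j i' j' : R} (hi : i ∣ i') (hj : j ∣ j') : Del i' j' ≤ Del i j :=
  fun _ h => ⟨(mul_dvd_mul hi hj).trans h.1, hi.trans h.2.1, hj.trans h.2.2⟩

/-- The principal congruence subgroup of level `k`. -/
def Gam (k : R) : Subgroup (G R) :=
  (Matrix.SpecialLinearGroup.map (n := Fin 2) (Ideal.Quotient.mk (Ideal.span {k}))).ker

instance (k : R) : (Gam k).Normal := by unfold Gam; infer_instance

theorem mem_Gam {k : R} {g : G R} :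
    g ∈ Gam k ↔ k ∣ g 0 0 - 1 ∧ k ∣ g 0 1 ∧ k ∣ g 1 0 ∧ k ∣ g 1 1 - 1 := by
  have key : ∀ x y : R, Ideal.Quotient.mk (Ideal.span {k}) x = Ideal.Quotient.mk _ y ↔ k ∣ x - y :=
    fun x y => by rw [Ideal.Quotient.eq, Ideal.mem_span_singleton]
  rw [Gam, MonoidHom.mem_ker]
  constructor
  · intro h
    have h' : ∀ i j, Ideal.Quotient.mk (Ideal.span {k}) (g i j)
        = (1 : G (R ⧸ Ideal.span {k})) i j := fun i j => by rw [← h]; rfl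
    refine ⟨(key _ _).1 ?_, ?_, ?_, (key _ _).1 ?_⟩
    · rw [h', one00, map_one]
    · rw [← sub_zero (g 0 1)]; refine (key _ _).1 ?_; rw [h', one01, map_zero]
    · rw [← sub_zero (g 1 0)]; refine (key _ _).1 ?_; rw [h', one10, map_zero]
    · rw [h', one11, map_one]
  · rintro ⟨h1, h2, h3, h4⟩
    apply ext4
    · rw [one00]; exact ((key _ _).2 h1).trans (map_one _)
    · rw [one01]; exact ((key _ 0).2 (by simpa using h2)).trans (map_zero _)
    · rw [one10]; exact ((key _ 0).2 (by simpa using h3)).trans (map_zero _)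
    · rw [one11]; exact ((key _ _).2 h4).trans (map_one _)

theorem Gam_mono {k k' : R} (h : k ∣ k') : Gam k' ≤ Gam k := fun g hg => by
  rw [mem_Gam] at hg ⊢
  exact ⟨h.trans hg.1, h.trans hg.2.1, h.trans hg.2.2.1, h.trans hg.2.2.2⟩

theorem Gam_le_Del {k i j : R} (h : i * j ∣ k) : Gam k ≤ Del i j := fun g hg => by
  rw [mem_Gam] at hg
  exact ⟨h.trans hg.1, (Dvd.intro _ rfl).trans (h.trans hg.2.1),
    (Dvd.intro_left _ rfl).trans (h.trans hg.2.2.1)⟩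

theorem E_le_Gam {k l : R} (h : k ∣ l) : E l ≤ Gam k :=
  E2_le (fun r => by simp [mem_Gam, h.mul_right]) (fun r => by simp [mem_Gam, h.mul_right])

theorem Del_one (g : G R) : g ∈ Del (1 : R) 1 := by simp [mem_Del]

theorem finiteIndex_Gam {k : R} [Finite (R ⧸ Ideal.span {k})] : (Gam k).FiniteIndex := by
  have : Finite (G (R ⧸ Ideal.span {k})) := by
    unfold G Matrix.SpecialLinearGroup; infer_instance
  unfold Gam
  infer_instance

/-- Diagonal conjugation `(a, b; c, d) ↦ (a, ub; u⁻¹c, d)`. -/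
def sig (u : Rˣ) : G R →* G R where
  toFun g := mk4 (g 0 0) (u * g 0 1) (↑u⁻¹ * g 1 0) (g 1 1) (by
    have := det4 g
    linear_combination this - g 0 1 * g 1 0 * u.mul_inv)
  map_one' := by ext <;> simp
  map_mul' g h := by
    ext
    · simp only [mk4_00, mul00, mk4_01, mk4_10]
      linear_combination (- g 0 1 * h 1 0) * u.mul_inv
    · simp; ring
    · simp; ring
    · simp only [mk4_11, mul11, mk4_01, mk4_10]
      linear_combination (- g 1 0 * h 0 1) * u.mul_inv

@[simp] theorem sig00 (u : Rˣ) (g : G R) : sig u g 0 0 = g 0 0 := rfl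
@[simp] theorem sig01 (u : Rˣ) (g : G R) : sig u g 0 1 = u * g 0 1 := rfl
@[simp] theorem sig10 (u : Rˣ) (g : G R) : sig u g 1 0 = ↑u⁻¹ * g 1 0 := rfl
@[simp] theorem sig11 (u : Rˣ) (g : G R) : sig u g 1 1 = g 1 1 := rfl

@[simp] theorem sig_X (u : Rˣ) (s : R) : sig u (X s) = X (u * s) := by ext <;> simp
@[simp] theorem sig_Y (u : Rˣ) (s : R) : sig u (Y s) = Y (↑u⁻¹ * s) := by ext <;> simp
theorem sig_mul (u v : Rˣ) (g : G R) : sig (u * v) g = sig u (sig v g) := by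
  ext <;> simp <;> ring
@[simp] theorem sig_one (g : G R) : sig (1 : Rˣ) g = g := by ext <;> simp
theorem sig_inv_sig (u : Rˣ) (g : G R) : sig u⁻¹ (sig u g) = g := by
  rw [← sig_mul, inv_mul_cancel, sig_one]
theorem sig_sig_inv (u : Rˣ) (g : G R) : sig u (sig u⁻¹ g) = g := by
  rw [← sig_mul, mul_inv_cancel, sig_one]

theorem sig_mem_E2 (u : Rˣ) {i j : R} {g : G R} (hg : g ∈ E2 i j) : sig u g ∈ E2 i j := by
  suffices E2 i j ≤ (E2 i j).comap (sig u) from this hg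
  refine E2_le (fun r => ?_) (fun r => ?_)
  · rw [Subgroup.mem_comap, sig_X]; exact X_mem_E2 ⟨u * r, by ring⟩
  · rw [Subgroup.mem_comap, sig_Y]; exact Y_mem_E2 ⟨↑u⁻¹ * r, by ring⟩

theorem sig_mem_Del (u : Rˣ) {i j : R} {g : G R} (hg : g ∈ Del i j) : sig u g ∈ Del i j :=
  ⟨hg.1, hg.2.1.mul_left _, hg.2.2.mul_left _⟩

/-- The Weyl element. -/
def w0 : G R := mk4 0 1 (-1) 0 (by ring)

@[simp] theorem w000 : (w0 : G R) 0 0 = 0 := rfl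
@[simp] theorem w001 : (w0 : G R) 0 1 = 1 := rfl
@[simp] theorem w010 : (w0 : G R) 1 0 = -1 := rfl
@[simp] theorem w011 : (w0 : G R) 1 1 = 0 := rfl

theorem w0_X (s : R) : w0 * X s * w0⁻¹ = Y (-s) := by ext <;> simp
theorem w0_Y (s : R) : w0 * Y s * w0⁻¹ = X (-s) := by ext <;> simp
theorem w0_X' (s : R) : w0⁻¹ * X s * w0 = Y (-s) := by ext <;> simp
theorem w0_Y' (s : R) : w0⁻¹ * Y s * w0 = X (-s) := by ext <;> simp

theorem w0_mem_E {k : R} {g : G R} (hg : g ∈ E k) : w0 * g * w0⁻¹ ∈ E k := by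
  suffices h : E k ≤ (E k).comap (MulAut.conj w0).toMonoidHom from h hg
  refine E2_le (fun r => ?_) (fun r => ?_)
  · change w0 * X (k * r) * w0⁻¹ ∈ E k
    rw [w0_X]; exact Y_mem_E2 (by simp)
  · change w0 * Y (k * r) * w0⁻¹ ∈ E k
    rw [w0_Y]; exact X_mem_E2 (by simp)

theorem w0_mem_E' {k : R} {g : G R} (hg : g ∈ E k) : w0⁻¹ * g * w0 ∈ E k := by
  have h : w0⁻¹ * g * w0 = w0 * g * w0⁻¹ := by ext <;> simp
  rw [h]; exact w0_mem_E hg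

theorem row_coprime (g : G R) : IsCoprime (g 0 0) (g 0 1) :=
  ⟨g 1 1, -g 1 0, by linear_combination det4 g⟩

/-- Two matrices with equal first rows differ by a lower elementary matrix. -/
theorem same_row {g h : G R} (h0 : g 0 0 = h 0 0) (h1 : g 0 1 = h 0 1) :
    h = Y (h 1 0 * g 1 1 - h 1 1 * g 1 0) * g := by
  have hg := det4 g
  have hh := det4 h
  rw [← h0, ← h1] at hh
  ext
  · simp [h0]
  · simp [h1]
  · simp only [mul10, Y10, Y11]; linear_combination (-h 1 0) * hg + g 1 0 * hh
  · simp only [mul11, Y10, Y11]; linear_combination (-h 1 1) * hg + g 1 1 * hh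

end Basic

end SLU

namespace SLU

open Matrix

/-! ### Finite quotients and reduction to deep congruence subgroups -/

section Reduction

variable {R : Type*} [CommRing R]

/-- A finite ring is semilocal: a unimodular pair modulo `y` can be improved to a unit
modulo `y` by adding a multiple of its second entry to the first one. -/
theorem exists_coprime_add {x c y : R} [Finite (R ⧸ Ideal.span {y})]
    (h : Ideal.span {x} ⊔ Ideal.span {c} ⊔ Ideal.span {y} = ⊤) :
    ∃ t, IsCoprime (x + c * t) y := by
  classical
  have hinj : Function.Injective (fun m : {m : Ideal R // m.IsMaximal ∧ y ∈ m} =>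
      m.1.map (Ideal.Quotient.mk (Ideal.span {y}))) := by
    rintro ⟨m, hm, hy⟩ ⟨m', hm', hy'⟩ hmm
    simp only at hmm
    have hc : ∀ I : Ideal R, y ∈ I →
        (I.map (Ideal.Quotient.mk (Ideal.span {y}))).comap (Ideal.Quotient.mk (Ideal.span {y})) = I := by
      intro I hI
      rw [Ideal.comap_map_of_surjective _ Ideal.Quotient.mk_surjective,
        ← RingHom.ker_eq_comap_bot, Ideal.mk_ker, sup_eq_left, Ideal.span_singleton_le_iff_mem]
      exact hI
    apply Subtype.ext
    exact (hc m hy).symm.trans ((congrArg _ hmm).trans (hc m' hy'))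
  have : Finite (Ideal (R ⧸ Ideal.span {y})) :=
    Finite.of_injective (fun I => (I : Set (R ⧸ Ideal.span {y}))) SetLike.coe_injective
  have hfin : Finite {m : Ideal R // m.IsMaximal ∧ y ∈ m} := Finite.of_injective _ hinj
  have := Fintype.ofFinite {m : Ideal R // m.IsMaximal ∧ y ∈ m}
  obtain ⟨t, ht⟩ := Ideal.exists_forall_sub_mem_ideal 
    (I := fun m : {m : Ideal R // m.IsMaximal ∧ y ∈ m} => m.1)
    (fun m m' hne => by
      have := m.2.1
      have := m'.2.1
      exact Ideal.isCoprime_of_isMaximal (fun h => hne (Subtype.ext h)))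
    (fun m => if x ∈ m.1 then 1 else 0)
  refine ⟨t, ?_⟩
  rw [← Ideal.isCoprime_span_singleton_iff, Ideal.isCoprime_iff_sup_eq]
  by_contra hne
  obtain ⟨m, hm, hle⟩ := Ideal.exists_le_maximal _ hne
  rw [sup_le_iff, Ideal.span_singleton_le_iff_mem, Ideal.span_singleton_le_iff_mem] at hle
  have h1 := ht ⟨m, hm, hle.2⟩
  simp only at h1
  split_ifs at h1 with hx
  · have hct : c * t ∈ m := (Ideal.add_mem_iff_right _ hx).1 hle.1
    rcases hm.isPrime.mem_or_mem hct with hc | ht'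
    · apply hm.ne_top
      rw [eq_top_iff, ← h, sup_le_iff, sup_le_iff]
      simp only [Ideal.span_singleton_le_iff_mem]
      exact ⟨⟨hx, hc⟩, hle.2⟩
    · apply hm.ne_top
      rw [Ideal.eq_top_iff_one]
      have := m.sub_mem ht' h1
      simpa using this
  · apply hx
    rw [sub_zero] at h1
    exact (Ideal.add_mem_iff_left _ (m.mul_mem_left c h1)).1 hle.1

theorem exists_coprime_add' {x c y : R} [Finite (R ⧸ Ideal.span {y})]
    (h : IsCoprime x c) : ∃ t, IsCoprime (x + c * t) y := by
  apply exists_coprime_add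
  rw [← Ideal.isCoprime_span_singleton_iff, Ideal.isCoprime_iff_sup_eq] at h
  rw [h, top_sup_eq]

/-- Four elementary factors move a matrix of `Del i j` into a given principal congruence
subgroup. -/
theorem reduction {i j f : R} [Finite (R ⧸ Ideal.span {f})] {A : G R} (hA : A ∈ Del i j) :
    ∃ x₁ x₂ x₃ x₄, A * X (i * x₁) * Y (j * x₂) * X (i * x₃) * Y (j * x₄) ∈ Gam f := by
  obtain ⟨⟨a', ha⟩, ⟨b', hb⟩, hc⟩ := hA
  have hco : IsCoprime b' (A 0 0) := by
    have := (row_coprime A).symm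
    rw [hb] at this
    exact this.of_mul_left_right
  obtain ⟨x₁, u, v, huv⟩ := exists_coprime_add' (y := f) hco
  set x₂ := -a' * u with hx₂
  set x₃ := -(b' + A 0 0 * x₁) with hx₃
  set A3 := A * X (i * x₁) * Y (j * x₂) * X (i * x₃) with hA3
  have hA' : A ∈ Del i j := ⟨⟨a', ha⟩, ⟨b', hb⟩, hc⟩
  have hA3D : A3 ∈ Del i j := by
    have hX : ∀ r, X (i * r) ∈ Del i j := fun r => E2_le_Del i j (X_mem_E2 (Dvd.intro _ rfl))
    have hY : ∀ r, Y (j * r) ∈ Del i j := fun r => E2_le_Del i j (Y_mem_E2 (Dvd.intro _ rfl))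
    exact mul_mem (mul_mem (mul_mem hA' (hX _)) (hY _)) (hX _)
  have e00 : f ∣ A3 0 0 - 1 := by
    refine ⟨i * j * a' * v, ?_⟩
    simp [hA3]
    rw [hb]
    linear_combination ha - i * j * a' * huv
  have e01 : f ∣ A3 0 1 := by
    have : A3 0 1 = (A3 0 0 - 1) * (i * x₃) := by
      simp [hA3]; rw [hb]; ring
    rw [this]; exact e00.mul_right _
  have e11 : f ∣ A3 1 1 - 1 := by
    have : A3 1 1 - 1 = -(A3 0 0 - 1) * A3 1 1 + A3 0 1 * A3 1 0 := by
      linear_combination det4 A3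
    rw [this]
    exact (e00.neg_right.mul_right _).add (e01.mul_right _)
  obtain ⟨c', hc'⟩ := hA3D.2.2
  refine ⟨x₁, x₂, x₃, -c', mem_Gam.2 ⟨?_, ?_, ?_, ?_⟩⟩
  · have : (A3 * Y (j * -c')) 0 0 - 1 = (A3 0 0 - 1) + A3 0 1 * (j * -c') := by simp; ring
    rw [this]; exact e00.add (e01.mul_right _)
  · rw [mul01, Y01, Y11]; simpa only [mul_zero, mul_one, zero_add] using e01
  · have : (A3 * Y (j * -c')) 1 0 = -(A3 1 1 - 1) * (j * c') := by simp [hc']; ring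
    rw [this]; exact e11.neg_right.mul_right _
  · rw [mul11, Y01, Y11]; simpa only [mul_zero, mul_one, zero_add] using e11

/-- An element of `Del i j` is the product of an element of a deep congruence subgroup and an
element of `E2 i j`. -/
theorem reduction_left {i j f : R} [Finite (R ⧸ Ideal.span {f})] {A : G R} (hA : A ∈ Del i j) :
    ∃ e ∈ E2 i j, ∃ g ∈ Gam f, A = e * g := by
  obtain ⟨x₁, x₂, x₃, x₄, h⟩ := reduction (f := f) ((Del i j).inv_mem hA)
  set e := X (i * x₁) * Y (j * x₂) * X (i * x₃) * Y (j * x₄) with he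
  have heE : e ∈ E2 i j := by
    have hX : ∀ r, X (i * r) ∈ E2 i j := fun r => (X_mem_E2 (Dvd.intro _ rfl))
    have hY : ∀ r, Y (j * r) ∈ E2 i j := fun r => (Y_mem_E2 (Dvd.intro _ rfl))
    exact mul_mem (mul_mem (mul_mem (hX _) (hY _)) (hX _)) (hY _)
  have h' : A⁻¹ * e ∈ Gam f := by
    rw [he]; simpa only [mul_assoc] using h
  refine ⟨e, heE, (A⁻¹ * e)⁻¹, inv_mem h', by group⟩

end Reduction

end SLU

namespace SLU

open Matrix

/-! ### Exponents of unit groups modulo well-chosen integers -/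

section Control

set_option linter.unusedSectionVars false

/-- The base of the control constant. -/
def cc (n : ℕ) : ℕ := 1 + (n + 1).factorial

/-- The control constant: it bounds the exponents of unit groups modulo suitable primes. -/
def MM (n : ℕ) : ℕ := ∏ i ∈ Finset.Icc 1 n, (cc n ^ i - 1)

/-- A multiple of the order of `(R/ℓ)ˣ` when `|R/ℓ| ≤ ℓⁿ`. -/
def ee (n ℓ : ℕ) : ℕ := ℓ ^ (n * n) * ∏ i ∈ Finset.Icc 1 n, (ℓ ^ i - 1)

theorem cc_gt (n : ℕ) : 1 < cc n := by
  have := Nat.factorial_pos (n + 1); unfold cc; omega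

theorem pow_sub_one_pos {c i : ℕ} (hc : 1 < c) (hi : 1 ≤ i) : c ^ i - 1 ≠ 0 := by
  have : 1 < c ^ i := Nat.one_lt_pow (by omega) hc
  omega

theorem MM_ne (n : ℕ) : MM n ≠ 0 :=
  Finset.prod_ne_zero_iff.2 fun _ hi => pow_sub_one_pos (cc_gt n) (Finset.mem_Icc.1 hi).1

theorem ee_ne {n ℓ : ℕ} (hl : ℓ.Prime) : ee n ℓ ≠ 0 :=
  mul_ne_zero (pow_ne_zero _ hl.ne_zero)
    (Finset.prod_ne_zero_iff.2 fun _ hi => pow_sub_one_pos hl.one_lt (Finset.mem_Icc.1 hi).1)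

theorem card_GL_dvd {n j ℓ : ℕ} (hj : j ≤ n) :
    ∏ i : Fin j, (ℓ ^ j - ℓ ^ (i : ℕ)) ∣ ee n ℓ := by
  rw [Fin.prod_univ_eq_prod_range (fun i => ℓ ^ j - ℓ ^ i) j]
  have h : ∀ i ∈ Finset.range j, ℓ ^ j - ℓ ^ i = ℓ ^ i * (ℓ ^ (j - i) - 1) := by
    intro i hi
    have : i ≤ j := (Finset.mem_range.1 hi).le
    rw [Nat.mul_sub, mul_one, ← pow_add, Nat.add_sub_cancel' this]
  rw [Finset.prod_congr rfl h, Finset.prod_mul_distrib, Finset.prod_pow_eq_pow_sum]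
  unfold ee
  apply mul_dvd_mul
  · apply pow_dvd_pow
    calc ∑ i ∈ Finset.range j, i ≤ ∑ i ∈ Finset.range j, j :=
          Finset.sum_le_sum fun i hi => (Finset.mem_range.1 hi).le
      _ = j * j := by simp
      _ ≤ n * n := Nat.mul_le_mul hj hj
  · have : ∏ i ∈ Finset.range j, (ℓ ^ (j - i) - 1) = ∏ i ∈ Finset.Icc 1 j, (ℓ ^ i - 1) := by
      refine Finset.prod_bij' (fun i _ => j - i) (fun i _ => j - i) ?_ ?_ ?_ ?_ ?_ <;>
        simp <;> intros <;> omega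
    rw [this]
    exact Finset.prod_dvd_prod_of_subset _ _ _ (Finset.Icc_subset_Icc_right hj)

/-- The order of the unit group of `R/ℓ` divides `ee n ℓ`: the units embed into a general linear
group over `𝔽_ℓ`. -/
theorem card_units_dvd {A : Type*} [CommRing A] [Finite A] {n ℓ : ℕ} (hl : ℓ.Prime)
    (hA : (ℓ : A) = 0) (hc : Nat.card A ≤ ℓ ^ n) : Nat.card Aˣ ∣ ee n ℓ := by
  have : Fact ℓ.Prime := ⟨hl⟩
  rcases subsingleton_or_nontrivial A with hs | hs
  · rw [Nat.card_unique]; exact one_dvd _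
  have : CharP A ℓ := (CharP.charP_iff_prime_eq_zero hl).2 hA
  let _ : Algebra (ZMod ℓ) A := ZMod.algebra A ℓ
  have : Module.Finite (ZMod ℓ) A := Module.Finite.of_finite
  set j := Module.finrank (ZMod ℓ) A with hj
  have hcard : Nat.card A = ℓ ^ j := by
    have := Module.natCard_eq_pow_finrank (K := ZMod ℓ) (V := A)
    rwa [Nat.card_zmod] at this
  have hjn : j ≤ n := by
    rw [hcard] at hc
    exact (Nat.pow_le_pow_iff_right hl.one_lt).1 hc
  let b := Module.finBasis (ZMod ℓ) A
  have hinj := Algebra.leftMulMatrix_injective b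
  have h1 : Nat.card Aˣ ∣ Nat.card (GL (Fin j) (ZMod ℓ)) :=
    Subgroup.card_dvd_of_injective
      (Units.map (Algebra.leftMulMatrix b : A →* Matrix (Fin j) (Fin j) (ZMod ℓ)))
      (Units.map_injective hinj)
  rw [Matrix.card_GL_field, ZMod.card] at h1
  exact h1.trans (card_GL_dvd hjn)

/-- The modulus governing the control of `lam`-parts of exponents. -/
def mu (n lam : ℕ) : ℕ := if lam ∣ MM n then MM n ^ 2 else lam

theorem mu_ne {n lam : ℕ} (hl : lam.Prime) : mu n lam ≠ 0 := by
  unfold mu; split_ifs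
  exacts [pow_ne_zero _ (MM_ne n), hl.ne_zero]

theorem fact_le {lam a b m : ℕ} (hl : lam.Prime) (ha : a ≠ 0) (hb : b ≠ 0)
    (hm : lam ^ (b.factorization lam + 1) ∣ m)
    (h : ∀ k, k ∣ m → k ∣ a → k ∣ b) : a.factorization lam ≤ b.factorization lam := by
  by_contra hlt
  rw [not_le] at hlt
  have := h _ hm ((hl.pow_dvd_iff_le_factorization ha).2 hlt)
  rw [hl.pow_dvd_iff_le_factorization hb] at this
  omega

/-- A residue class of primes `ℓ` for which the `lam`-part of `ee n ℓ` divides `MM n`; the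
inverse class has the same property. -/
theorem exists_control (n lam : ℕ) (hl : lam.Prime) :
    ∃ c : ℕ, c.Coprime (mu n lam) ∧ (lam ∣ MM n → c = cc n) ∧ ∀ ℓ : ℕ, ℓ.Prime → ℓ ≠ lam →
      (ℓ ≡ c [MOD mu n lam] ∨ c * ℓ ≡ 1 [MOD mu n lam]) →
      (ee n ℓ).factorization lam ≤ (MM n).factorization lam := by
  have hee : ∀ ℓ : ℕ, ℓ.Prime → ℓ ≠ lam → (ee n ℓ).factorization lam =
      ∑ i ∈ Finset.Icc 1 n, (ℓ ^ i - 1).factorization lam := by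
    intro ℓ hp hne
    have hprod : ∏ i ∈ Finset.Icc 1 n, (ℓ ^ i - 1) ≠ 0 :=
      Finset.prod_ne_zero_iff.2 fun _ hi => pow_sub_one_pos hp.one_lt (Finset.mem_Icc.1 hi).1
    rw [ee, Nat.factorization_mul (pow_ne_zero _ hp.ne_zero) hprod, Nat.factorization_prod
      fun i hi => pow_sub_one_pos hp.one_lt (Finset.mem_Icc.1 hi).1,
      Nat.factorization_pow, hp.factorization]
    simp [hne]
  have hdvd : ∀ (c ℓ i k : ℕ), 1 ≤ c → 1 ≤ ℓ → (ℓ ≡ c [MOD k] ∨ c * ℓ ≡ 1 [MOD k]) →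
      k ∣ ℓ ^ i - 1 → k ∣ c ^ i - 1 := by
    intro c ℓ i k hc hl h hk
    have h1 : 1 ≡ ℓ ^ i [MOD k] := (Nat.modEq_iff_dvd' (Nat.one_le_pow _ _ hl)).2 hk
    refine (Nat.modEq_iff_dvd' (Nat.one_le_pow _ _ hc)).1 ?_
    rcases h with h | h
    · exact h1.trans (h.pow i)
    · have h2 := (h.pow i).symm
      rw [one_pow, mul_pow] at h2
      have h3 := h1.mul_left (c ^ i)
      rw [mul_one] at h3
      exact h2.trans h3.symm
  by_cases hM : lam ∣ MM n
  · refine ⟨cc n, ?_, fun _ => rfl, ?_⟩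
    · rw [mu, if_pos hM]
      refine Nat.Coprime.pow_right _ (Nat.Coprime.prod_right fun i hi => ?_)
      have h1 := (Finset.mem_Icc.1 hi).1
      have hc := cc_gt n
      apply Nat.Coprime.coprime_dvd_left (dvd_pow_self _ (by omega : i ≠ 0))
      have : 1 ≤ cc n ^ i := Nat.one_le_pow _ _ (by omega)
      obtain ⟨t, ht⟩ : ∃ t, cc n ^ i = t + 1 := ⟨cc n ^ i - 1, by omega⟩
      rw [ht]; simp
    · intro ℓ hp hne h
      rw [mu, if_pos hM] at h
      rw [hee ℓ hp hne, MM, Nat.factorization_prod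
        fun i hi => pow_sub_one_pos (cc_gt n) (Finset.mem_Icc.1 hi).1]
      rw [Finset.sum_apply']
      refine Finset.sum_le_sum fun i hi => ?_
      have hi' := (Finset.mem_Icc.1 hi).1
      refine fact_le (m := MM n ^ 2) hl (pow_sub_one_pos hp.one_lt hi')
        (pow_sub_one_pos (cc_gt n) hi') ?_ ?_
      · rw [pow_succ, pow_two]
        refine mul_dvd_mul ((Nat.ordProj_dvd _ _).trans ?_) hM
        exact Finset.dvd_prod_of_mem (fun i => cc n ^ i - 1) hi
      · intro k hk hk'
        exact hdvd _ _ _ _ (cc_gt n).le hp.one_lt.le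
          (h.imp (fun h => h.of_dvd hk) (fun h => h.of_dvd hk)) hk'
  · have hlam : n + 1 < lam := by
      by_contra hle
      rw [not_lt] at hle
      apply hM
      rcases Nat.eq_zero_or_pos n with rfl | hn
      · have := hl.two_le; omega
      · have h1 : lam ∣ cc n ^ 1 - 1 := by
          rw [pow_one, cc, Nat.add_sub_cancel_left]
          exact hl.dvd_factorial.2 hle
        exact h1.trans (Finset.dvd_prod_of_mem (fun i => cc n ^ i - 1)
          (Finset.mem_Icc.2 ⟨le_rfl, hn⟩))
    have : Fact lam.Prime := ⟨hl⟩
    obtain ⟨g, hg⟩ := IsCyclic.exists_ofOrder_eq_natCard (α := (ZMod lam)ˣ)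
    have hcard : Nat.card (ZMod lam)ˣ = lam - 1 := by
      rw [Nat.card_eq_fintype_card, ZMod.card_units]
    rw [hcard] at hg
    have hval : ((g : ZMod lam).val : ZMod lam) = g := ZMod.natCast_zmod_val _
    have hpos : 1 ≤ (g : ZMod lam).val := by
      rw [Nat.one_le_iff_ne_zero, Ne, ZMod.val_eq_zero]
      exact g.ne_zero
    refine ⟨(g : ZMod lam).val, ?_, fun h => absurd h hM, ?_⟩
    · rw [mu, if_neg hM]; exact ZMod.val_coe_unit_coprime g
    · intro ℓ hp hne h
      rw [mu, if_neg hM] at h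
      rw [hee ℓ hp hne, Finset.sum_eq_zero]
      · exact Nat.zero_le _
      intro i hi
      obtain ⟨hi1, hi2⟩ := Finset.mem_Icc.1 hi
      apply Nat.factorization_eq_zero_of_not_dvd
      intro hd
      have := hdvd _ _ i _ hpos hp.one_lt.le h hd
      have h2 : 1 ≡ (g : ZMod lam).val ^ i [MOD lam] :=
        (Nat.modEq_iff_dvd' (Nat.one_le_pow _ _ hpos)).2 this
      rw [← ZMod.natCast_eq_natCast_iff, Nat.cast_pow, hval] at h2
      have h3 : g ^ i = 1 := by
        apply Units.ext; push_cast; rw [← h2]; simp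
      have h4 := Nat.le_of_dvd hi1 (orderOf_dvd_of_pow_eq_one h3)
      omega

/-- Standing properties of the ring `R`: nonzero elements divide nonzero integers, quotients by
nonzero elements are finite, `R/p` has at most `pⁿ` elements, the residue class of a unimodular
pair contains an element modulo which every element is congruent to an integer (and which is
prime to a given integer), and `w` is a unit of infinite order. -/
structure Hyp (R : Type*) [CommRing R] (n : ℕ) (w : Rˣ) : Prop where
  dvd : ∀ r : R, r ≠ 0 → ∃ N : ℕ, N ≠ 0 ∧ r ∣ (N : R)
  fin : ∀ r : R, r ≠ 0 → Finite (R ⧸ Ideal.span {r})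
  card : ∀ p : ℕ, p.Prime → Nat.card (R ⧸ Ideal.span {(p : R)}) ≤ p ^ n
  cyc : ∀ a b : R, IsCoprime a b → ∀ m : ℕ, m ≠ 0 → ∃ x, IsCoprime (b + a * x) (m : R) ∧
    ∀ r : R, ∃ z : ℤ, b + a * x ∣ r - z
  unit : ∀ m : ℕ, m ≠ 0 → w ^ m ≠ 1

variable {R : Type*} [CommRing R] [IsDomain R] [CharZero R] {n : ℕ} {w : Rˣ}

theorem Hyp.finN (H : Hyp R n w) {k : ℕ} (hk : k ≠ 0) : Finite (R ⧸ Ideal.span {(k : R)}) :=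
  H.fin _ (Nat.cast_ne_zero.2 hk)

theorem Hyp.units_card (H : Hyp R n w) {ℓ : ℕ} (hl : ℓ.Prime) :
    Nat.card (R ⧸ Ideal.span {(ℓ : R)})ˣ ∣ ee n ℓ := by
  have := H.finN hl.ne_zero
  refine card_units_dvd hl ?_ (H.card ℓ hl)
  have : Ideal.Quotient.mk (Ideal.span {(ℓ : R)}) (ℓ : R) = 0 :=
    Ideal.Quotient.eq_zero_iff_mem.2 (Ideal.mem_span_singleton_self _)
  simpa using this

theorem Hyp.dvd_unit_pow (H : Hyp R n w) {ℓ : ℕ} (hl : ℓ.Prime) (u : Rˣ) :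
    (ℓ : R) ∣ ((u ^ ee n ℓ : Rˣ) : R) - 1 := by
  have := H.finN hl.ne_zero
  obtain ⟨t, ht⟩ := H.units_card hl
  rw [← Ideal.mem_span_singleton, ← Ideal.Quotient.eq]
  set q := Ideal.Quotient.mk (Ideal.span {(ℓ : R)})
  have h : Units.map (q : R →* R ⧸ Ideal.span {(ℓ : R)}) u ^ ee n ℓ = 1 := by
    rw [ht, pow_mul, pow_card_eq_one', one_pow]
  have h' := congrArg Units.val h
  rw [map_one, Units.val_pow_eq_pow_val, map_pow]
  simpa using h'

theorem isCoprime_cast {R : Type*} [CommRing R] {a b : ℕ} (h : a.Coprime b) :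
    IsCoprime (a : R) (b : R) := by
  simpa using h.isCoprime.map (Int.castRingHom R)

theorem exists_prime_modEq {q a : ℕ} (hq : q ≠ 0) (h : a.Coprime q) (B : ℕ) :
    ∃ p, B < p ∧ p.Prime ∧ p ≡ a [MOD q] := by
  obtain ⟨p, h1, h2, h3⟩ := Nat.forall_exists_prime_gt_and_modEq B hq h
  exact ⟨p, h1, h2, h3⟩

/-- A residue class coprime to the modulus and `≡ 1` modulo `mu n lam` contains a product `A` of
two large primes such that an exponent of the unit group modulo `A` has small `lam`-part. -/
theorem two_primes (H : Hyp R n w) {lam Q t : ℕ} (hl : lam.Prime) (hQ : Q ≠ 0)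
    (hmu : mu n lam ∣ Q) (ht : t.Coprime Q) (ht1 : t ≡ 1 [MOD mu n lam]) (B : ℕ) :
    ∃ A e : ℕ, A ≡ t [MOD Q] ∧ (B ≠ 0 → A.Coprime B) ∧ B < A ∧ e ≠ 0 ∧
      e.factorization lam ≤ 2 * (MM n).factorization lam ∧
      ∀ u : Rˣ, (A : R) ∣ ((u ^ e : Rˣ) : R) - 1 := by
  obtain ⟨c, hc, -, hctl⟩ := exists_control n lam hl
  obtain ⟨ρ, hρ, hρp, hρc⟩ := exists_prime_modEq (mu_ne hl) hc (Q + B + lam)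
  have hρQ : ρ.Coprime Q := Nat.coprime_of_lt_prime (by omega) (by omega) hρp
  obtain ⟨s, hs⟩ : ∃ s, ρ * s ≡ t [MOD Q] := by
    obtain ⟨z, hz0, hz1⟩ := Nat.chineseRemainder hρQ 0 t
    obtain ⟨s, rfl⟩ := (Nat.modEq_zero_iff_dvd).1 hz0
    exact ⟨s, hz1⟩
  have hsQ : s.Coprime Q := by
    have h1 : (ρ * s).Coprime Q := by
      rw [Nat.Coprime, hs.gcd_eq]; exact ht
    exact Nat.Coprime.coprime_mul_left h1
  obtain ⟨ℓ, hℓ, hℓp, hℓs⟩ := exists_prime_modEq hQ hsQ (ρ + B + lam)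
  have hA : ρ * ℓ ≡ t [MOD Q] := (hℓs.mul_left ρ).trans hs
  refine ⟨ρ * ℓ, ee n ρ * ee n ℓ, hA, ?_, ?_, mul_ne_zero (ee_ne hρp) (ee_ne hℓp), ?_, ?_⟩
  · intro hB
    exact Nat.Coprime.mul_left (Nat.coprime_of_lt_prime hB (by omega) hρp)
      (Nat.coprime_of_lt_prime hB (by omega) hℓp)
  · have := hℓp.two_le
    nlinarith
  · rw [Nat.factorization_mul (ee_ne hρp) (ee_ne hℓp), two_mul]
    refine add_le_add (hctl ρ hρp (by omega) (Or.inl hρc)) (hctl ℓ hℓp (by omega) (Or.inr ?_))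
    exact ((hρc.symm.mul_right ℓ).trans (hA.of_dvd hmu)).trans ht1
  · intro u
    push_cast
    refine IsCoprime.mul_dvd (isCoprime_cast ((Nat.coprime_primes hρp hℓp).2 (by omega))) ?_ ?_
    · refine (H.dvd_unit_pow hρp u).trans ?_
      rw [pow_mul]; push_cast
      exact sub_one_dvd_pow_sub_one _ _
    · refine (H.dvd_unit_pow hℓp (u ^ ee n ρ)).trans ?_
      rw [pow_mul]; push_cast
      exact dvd_rfl

end Control

end SLU

namespace SLU

/-! ### Conjugates of small elementary matrices -/

section Conj

set_option linter.unusedSectionVars false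

/-- A subgroup of `ℤ` contains `T` as soon as, for every prime, it contains a nonzero element
at most as divisible by that prime as `T`. -/
theorem mem_of_local (H : AddSubgroup ℤ) {T : ℕ} (hT : T ≠ 0)
    (h : ∀ lam : ℕ, lam.Prime → ∃ e : ℕ, e ≠ 0 ∧ e.factorization lam ≤ T.factorization lam ∧
      (e : ℤ) ∈ H) : (T : ℤ) ∈ H := by
  obtain ⟨a, rfl⟩ := Int.subgroup_cyclic H
  have key : ∀ m : ℕ, (m : ℤ) ∈ AddSubgroup.closure {a} ↔ a.natAbs ∣ m := by
    intro m
    rw [← AddSubgroup.zmultiples_eq_closure, Int.mem_zmultiples_iff, ← Int.natAbs_dvd_natAbs,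
      Int.natAbs_natCast]
  rw [key, Nat.dvd_iff_prime_pow_dvd_dvd]
  intro p j hp hj
  obtain ⟨e, he, hle, hm⟩ := h p hp
  rw [hp.pow_dvd_iff_le_factorization hT]
  refine le_trans ?_ hle
  rw [← hp.pow_dvd_iff_le_factorization he]
  exact hj.trans ((key e).1 hm)

variable {R : Type*} [CommRing R]

theorem dvd_sub_of_modEq {q a b : ℕ} (h : a ≡ b [MOD q]) : (q : R) ∣ (a : R) - b := by
  have h1 : (q : ℤ) ∣ (a : ℤ) - b := (Nat.modEq_iff_dvd.1 h.symm)
  obtain ⟨z, hz⟩ := h1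
  exact ⟨z, by exact_mod_cast congrArg (Int.cast : ℤ → R) hz⟩

theorem stable_pow (J : AddSubgroup R) (u : Rˣ)
    (hu : ∀ τ, (u : R) * τ ∈ J ↔ τ ∈ J) (m : ℤ) (τ : R) :
    ((u ^ m : Rˣ) : R) * τ ∈ J ↔ τ ∈ J := by
  induction m generalizing τ with
  | zero => simp
  | succ m ih =>
    rw [zpow_add_one, Units.val_mul, mul_assoc, ih, hu]
  | pred m ih =>
    rw [zpow_sub_one, Units.val_mul, mul_assoc, ih, ← hu, Units.mul_inv_cancel_left]

theorem stable_local (J : AddSubgroup R) (w : Rˣ) {T : ℕ} (hT : T ≠ 0)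
    (h : ∀ lam : ℕ, lam.Prime → ∃ e : ℕ, e ≠ 0 ∧ e.factorization lam ≤ T.factorization lam ∧
      ∀ τ, ((w ^ e : Rˣ) : R) * τ ∈ J ↔ τ ∈ J) (τ : R) :
    ((w ^ T : Rˣ) : R) * τ ∈ J ↔ τ ∈ J := by
  let H : AddSubgroup ℤ :=
    { carrier := {m | ∀ τ, ((w ^ m : Rˣ) : R) * τ ∈ J ↔ τ ∈ J}
      zero_mem' := by intro τ; simp
      add_mem' := by
        intro a b ha hb τ
        rw [zpow_add, Units.val_mul, mul_assoc, ha, hb]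
      neg_mem' := by
        intro a ha τ
        rw [← ha, ← mul_assoc, ← Units.val_mul, ← zpow_add]; simp }
  have hm : (T : ℤ) ∈ H := mem_of_local H hT fun lam hl => by
    obtain ⟨e, h1, h2, h3⟩ := h lam hl
    refine ⟨e, h1, h2, fun τ => ?_⟩
    rw [zpow_natCast]; exact h3 τ
  have := hm τ
  rwa [zpow_natCast] at this

theorem translate_local (J : AddSubgroup R) (u : Rˣ)
    (hu : ∀ τ, (u : R) * τ ∈ J ↔ τ ∈ J) (c : R) {T : ℕ} (hT : T ≠ 0)
    (h : ∀ lam : ℕ, lam.Prime → ∃ e : ℕ, e ≠ 0 ∧ e.factorization lam ≤ T.factorization lam ∧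
      (((u ^ e : Rˣ) : R) - 1) * c ∈ J) : (((u ^ T : Rˣ) : R) - 1) * c ∈ J := by
  let H : AddSubgroup ℤ :=
    { carrier := {m | (((u ^ m : Rˣ) : R) - 1) * c ∈ J}
      zero_mem' := by simp
      add_mem' := by
        intro a b ha hb
        have h1 := J.add_mem ((stable_pow J u hu a _).2 hb) ha
        have : ((u ^ a : Rˣ) : R) * ((((u ^ b : Rˣ) : R) - 1) * c) + (((u ^ a : Rˣ) : R) - 1) * c
            = (((u ^ (a + b) : Rˣ) : R) - 1) * c := by
          rw [zpow_add, Units.val_mul]; ring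
        rw [this] at h1
        exact h1
      neg_mem' := by
        intro a ha
        have h1 := J.neg_mem ((stable_pow J u hu (-a) _).2 ha)
        have h2 : ((u ^ (-a) : Rˣ) : R) * ((u ^ a : Rˣ) : R) = 1 := by
          rw [← Units.val_mul, ← zpow_add]; simp
        have : -(((u ^ (-a) : Rˣ) : R) * ((((u ^ a : Rˣ) : R) - 1) * c))
            = (((u ^ (-a) : Rˣ) : R) - 1) * c := by
          linear_combination (-c) * h2
        rw [this] at h1
        exact h1 }
  have hm : (T : ℤ) ∈ H := mem_of_local H hT fun lam hl => by
    obtain ⟨e, h1, h2, h3⟩ := h lam hl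
    refine ⟨e, h1, h2, ?_⟩
    change (((u ^ (e : ℤ) : Rˣ) : R) - 1) * c ∈ J
    rw [zpow_natCast]; exact h3
  change (((u ^ (T : ℤ) : Rˣ) : R) - 1) * c ∈ J at hm
  rwa [zpow_natCast] at hm

/-- The entries `τ` for which the conjugate by `g` of the lower elementary matrix of `τ` lies
in `E k`. -/
def J (k : R) (g : G R) : AddSubgroup R where
  carrier := {τ | g⁻¹ * Y τ * g ∈ E k}
  zero_mem' := by simp
  add_mem' := by
    intro a b ha hb
    have := (E k).mul_mem ha hb
    rw [Set.mem_ofPred, Y_add]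
    convert this using 1
    group
  neg_mem' := by
    intro a ha
    have := (E k).inv_mem ha
    rw [Set.mem_ofPred, Y_neg]
    convert this using 1
    group

theorem mem_J {k τ : R} {g : G R} : τ ∈ J k g ↔ g⁻¹ * Y τ * g ∈ E k := Iff.rfl

theorem mem_conj_iff {Γ : Type*} [Group Γ] {H : Subgroup Γ} {x e : Γ} (he : e ∈ H) :
    e⁻¹ * x * e ∈ H ↔ x ∈ H := by
  rw [Subgroup.mul_mem_cancel_right _ he, Subgroup.mul_mem_cancel_left _ (H.inv_mem he)]

theorem J_mul {k : R} {g e : G R} (he : e ∈ E k) : J k (g * e) = J k g := by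
  ext τ
  rw [mem_J, mem_J, ← mem_conj_iff he (x := g⁻¹ * Y τ * g)]
  have : (g * e)⁻¹ * Y τ * (g * e) = e⁻¹ * (g⁻¹ * Y τ * g) * e := by group
  rw [this]

theorem J_anti {k l : R} (h : k ∣ l) (g : G R) : J l g ≤ J k g :=
  fun _ hτ => E2_mono h h hτ

/-- Diagonal conjugation by a unit congruent to `1` modulo the corner entry is realised by
elementary operations. -/
theorem sig_eq {g : G R} {u : Rˣ} {v : R} (hv : (u : R) - 1 = g 0 0 * v) :
    sig u g = Y (-(↑u⁻¹ * v * g 1 0)) * g * X (v * g 0 1) := by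
  have hd := det4 g
  have hui : (↑u⁻¹ : R) * u = 1 := u.inv_mul
  ext
  · simp
  · simp; linear_combination g 0 1 * hv
  · simp; linear_combination (-(↑u⁻¹ * g 1 0)) * hv + g 1 0 * hui
  · simp; linear_combination (- v * g 0 1 * g 1 0 * ↑u⁻¹) * hv + (v * g 0 1 * g 1 0) * hui

theorem J_stable {k : R} {g : G R} {u : Rˣ} {v : R} (hv : (u : R) - 1 = g 0 0 * v)
    (hk : k ∣ v * g 0 1) (τ : R) : (u : R) * τ ∈ J k g ↔ τ ∈ J k g := by
  set s := -(↑u⁻¹ * v * g 1 0)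
  have hs := sig_eq hv
  have hX : X (v * g 0 1) ∈ E k := X_mem_E2 hk
  have hsig : ∀ x : G R, sig u x ∈ E k ↔ x ∈ E k := fun x =>
    ⟨fun h => by simpa [sig_inv_sig] using sig_mem_E2 u⁻¹ h, sig_mem_E2 u⟩
  rw [mem_J, mem_J, ← hsig, map_mul, map_mul, map_inv, hs, sig_Y, ← mul_assoc (↑u⁻¹ : R),
    Units.inv_mul, one_mul, ← mem_conj_iff hX (x := g⁻¹ * Y τ * g)]
  have h2 : (Y s)⁻¹ * Y τ * Y s = Y τ := by
    rw [← Y_neg, ← Y_add, ← Y_add]; congr 1; ring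
  have : (Y s * g * X (v * g 0 1))⁻¹ * Y τ * (Y s * g * X (v * g 0 1)) =
      (X (v * g 0 1))⁻¹ * (g⁻¹ * ((Y s)⁻¹ * Y τ * Y s) * g) * X (v * g 0 1) := by group
  rw [this, h2]

/-- Comparing the elementary realisations of diagonal conjugation for two rows of an orbit
produces elements of `J`. -/
theorem mem_J_of {k : R} {g : G R} {u : Rˣ} {z t : R} (hz : k ∣ z)
    (hu : (u : R) - 1 = g 0 0 * (g 0 0 + g 0 1 * z) * t) (hk : k ∣ t * g 0 1) :
    ↑u⁻¹ * t * z ∈ J k g := by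
  have h1 : sig u g = _ := sig_eq (v := (g 0 0 + g 0 1 * z) * t) (by rw [hu]; ring)
  have h2 : sig u (g * Y z) = _ :=
    sig_eq (v := g 0 0 * t) (by rw [hu]; simp; ring)
  rw [map_mul, h1, sig_Y] at h2
  set s := -(↑u⁻¹ * ((g 0 0 + g 0 1 * z) * t) * g 1 0) with hs
  set s' := -(↑u⁻¹ * (g 0 0 * t) * (g * Y z) 1 0) with hs'
  set x := (g 0 0 + g 0 1 * z) * t * g 0 1 with hx
  set x' := g 0 0 * t * (g * Y z) 0 1 with hx'
  have hss : ↑u⁻¹ * t * z = -(-s + s') := by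
    rw [hs, hs']; simp only [mul10, Y00, Y10]
    linear_combination (-(↑u⁻¹ * t * z)) * det4 g
  rw [hss]
  refine (J k g).neg_mem ?_
  rw [mem_J, Y_add, Y_neg]
  have : g⁻¹ * ((Y s)⁻¹ * Y s') * g = X x * Y (↑u⁻¹ * z) * (X x')⁻¹ * (Y z)⁻¹ := by
    have h3 : X x * Y (↑u⁻¹ * z) = (Y s * g)⁻¹ * (Y s * g * X x * Y (↑u⁻¹ * z)) := by group
    rw [h3, h2]; group
  rw [this]
  refine mul_mem (mul_mem (mul_mem (X_mem_E2 ?_) (Y_mem_E2 (hz.mul_left _)))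
    (inv_mem (X_mem_E2 ?_))) (inv_mem (Y_mem_E2 hz))
  · rw [hx, mul_assoc]; exact hk.mul_left _
  · rw [hx']; simp only [mul01, Y01, Y11, mul_zero, zero_add, mul_one]
    rw [mul_assoc]; exact hk.mul_left _

variable [IsDomain R] [CharZero R] {n : ℕ} {w : Rˣ}

theorem Hyp.char (H : Hyp R n w) {b : R} (hb : b ≠ 0) :
    ∃ N : ℕ, N ≠ 0 ∧ ∀ z : ℤ, b ∣ (z : R) ↔ (N : ℤ) ∣ z := by
  have := H.fin b hb
  let q := Ideal.Quotient.mk (Ideal.span {b})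
  refine ⟨addOrderOf (1 : R ⧸ Ideal.span {b}), (addOrderOf_pos _).ne', fun z => ?_⟩
  rw [addOrderOf_dvd_iff_zsmul_eq_zero, zsmul_one, ← Ideal.mem_span_singleton,
    ← Ideal.Quotient.eq_zero_iff_mem, map_intCast]

theorem Hyp.coprime_char (_ : Hyp R n w) {b : R} {N m : ℕ} (hN0 : N ≠ 0)
    (hN : ∀ z : ℤ, b ∣ (z : R) ↔ (N : ℤ) ∣ z) (hm : IsCoprime b (m : R)) : N.Coprime m := by
  apply Nat.coprime_of_dvd
  intro p hp hpN hpm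
  obtain ⟨N', rfl⟩ := hpN
  obtain ⟨m', rfl⟩ := hpm
  have h1 : b ∣ ((p * N' : ℕ) : R) := by
    have := (hN (p * N' : ℕ)).2 dvd_rfl
    simpa using this
  push_cast at h1 hm
  have h2 := hm.of_mul_right_left.dvd_of_dvd_mul_left h1
  have h3 : ((p * N' : ℕ) : ℤ) ∣ (N' : ℤ) := (hN (N' : ℤ)).1 (by simpa using h2)
  have h4 : p * N' ∣ N' := by exact_mod_cast h3
  have hN' : 0 < N' := Nat.pos_of_ne_zero (right_ne_zero_of_mul hN0)
  have := Nat.le_of_dvd hN' h4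
  have := hp.two_le
  nlinarith

/-- A nonzero element coprime to `m` divides a nonzero integer coprime to `m`. -/
theorem Hyp.dvd_coprime (H : Hyp R n w) {b : R} (hb : b ≠ 0) {m : ℕ} (hm : IsCoprime b (m : R)) :
    ∃ N : ℕ, N ≠ 0 ∧ b ∣ (N : R) ∧ N.Coprime m := by
  obtain ⟨N, hN0, hN⟩ := H.char hb
  refine ⟨N, hN0, ?_, H.coprime_char hN0 hN hm⟩
  simpa using (hN N).2 dvd_rfl

/-- An element modulo which everything is an integer is nonzero. -/
theorem Hyp.ne_zero_of_cyc (H : Hyp R n w) {b : R} (hb : ∀ r : R, ∃ z : ℤ, b ∣ r - z) : b ≠ 0 := by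
  rintro rfl
  obtain ⟨z, hz⟩ := hb w
  obtain ⟨z', hz'⟩ := hb ↑w⁻¹
  rw [zero_dvd_iff, sub_eq_zero] at hz hz'
  have h1 : (z : R) * z' = 1 := by rw [← hz, ← hz', Units.mul_inv]
  have h2 : z * z' = 1 := by exact_mod_cast h1
  have h3 : z ^ 2 = 1 := by
    rcases Int.isUnit_iff.1 (IsUnit.of_mul_eq_one _ h2) with rfl | rfl <;> norm_num
  apply H.unit 2 two_ne_zero
  apply Units.ext
  rw [Units.val_pow_eq_pow_val, hz]
  have h4 := congrArg (Int.cast : ℤ → R) h3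
  push_cast at h4
  simpa using h4

/-- The first row of a matrix of `Del k k` can be moved by `E k` so that its first entry becomes
any positive integer in a suitable residue class. -/
theorem Hyp.rowDir (H : Hyp R n w) {k Q₀ : ℕ} (hk : k ≠ 0) (hQ₀ : Q₀ ≠ 0) {g : G R}
    (hg : g ∈ Del (k : R) k) :
    ∃ (b : R) (Q t : ℕ), Q ≠ 0 ∧ k ^ 2 * Q₀ ∣ Q ∧ t.Coprime Q ∧ t ≡ 1 [MOD k ^ 2 * Q₀] ∧
      IsCoprime b ((k * Q₀ : ℕ) : R) ∧
      ∀ A : ℕ, A ≡ t [MOD Q] → ∃ e ∈ E (k : R), (g * e) 0 0 = A ∧ (g * e) 0 1 = k * b := by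
  obtain ⟨⟨a', ha⟩, ⟨b', hb⟩, -⟩ := hg
  have hco : IsCoprime (g 0 0) b' := by
    have := row_coprime g
    rw [hb] at this
    exact this.of_mul_right_right
  have hkQ : k * Q₀ ≠ 0 := mul_ne_zero hk hQ₀
  obtain ⟨x, hx, hz⟩ := H.cyc _ _ hco (k * Q₀) hkQ
  set b := b' + g 0 0 * x with hbdef
  have hb0 := H.ne_zero_of_cyc hz
  obtain ⟨N, hN0, hN⟩ := H.char hb0
  have hNk : N.Coprime (k ^ 2 * Q₀) := by
    have := H.coprime_char hN0 hN hx
    have h1 := Nat.Coprime.coprime_mul_left_right this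
    have h2 := Nat.Coprime.coprime_mul_right_right this
    exact Nat.Coprime.mul_right (Nat.Coprime.pow_right 2 h2) h1
  have hab : IsCoprime (g 0 0) b := by
    rw [hbdef, add_comm]
    exact (IsCoprime.add_mul_left_right_iff (z := x) (x := g 0 0) (y := b')).2 hco |> fun h => by
      rwa [add_comm] at h
  obtain ⟨z, hz1⟩ := hz (g 0 0)
  obtain ⟨p, q, hpq⟩ := hab
  obtain ⟨z', hz2⟩ := hz p
  have hzz : (N : ℤ) ∣ z * z' - 1 := by
    rw [← hN]
    push_cast
    obtain ⟨c1, hc1⟩ := hz1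
    obtain ⟨c2, hc2⟩ := hz2
    exact ⟨-(q + c1 * p + z * c2), by linear_combination (-p) * hc1 - z * hc2 + hpq⟩
  obtain ⟨z₁, hz₁⟩ : ∃ z₁ : ℕ, (N : ℤ) ∣ z₁ - z := by
    refine ⟨(z % N).toNat, ?_⟩
    rw [Int.toNat_of_nonneg (Int.emod_nonneg _ (by exact_mod_cast hN0))]
    exact ⟨-(z / N), by have := Int.mul_ediv_add_emod z N; linarith⟩
  have hz₁N : z₁.Coprime N := by
    rw [← Nat.isCoprime_iff_coprime]
    obtain ⟨c1, hc1⟩ := hzz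
    obtain ⟨c2, hc2⟩ := hz₁
    exact ⟨z', -(c1 + c2 * z'), by linear_combination z' * hc2 + hc1⟩
  obtain ⟨t, ht1, ht2⟩ := Nat.chineseRemainder hNk z₁ 1
  refine ⟨b, k ^ 2 * Q₀ * N, t, ?_, Dvd.intro _ rfl, ?_, ht2, hx, ?_⟩
  · exact mul_ne_zero (mul_ne_zero (pow_ne_zero _ hk) hQ₀) hN0
  · refine Nat.Coprime.mul_right ?_ ?_
    · rw [Nat.Coprime, ht2.gcd_eq]; simp
    · rw [Nat.Coprime, ht1.gcd_eq]; exact hz₁N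
  · intro A hA
    have hA1 : ((k : R) ^ 2) ∣ (A : R) - g 0 0 := by
      have h1 : A ≡ 1 [MOD k ^ 2] :=
        ((hA.of_dvd (Dvd.intro _ rfl)).trans ht2).of_dvd (Dvd.intro _ rfl)
      have h2 := dvd_sub_of_modEq (R := R) h1
      push_cast at h2
      obtain ⟨c, hc⟩ := h2
      exact ⟨c - a', by linear_combination hc - ha⟩
    have hA2 : b ∣ (A : R) - g 0 0 := by
      have h1 : A ≡ z₁ [MOD N] := (hA.of_dvd (Dvd.intro_left _ rfl)).trans ht1
      have h2 : b ∣ ((A - z : ℤ) : R) := by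
        rw [hN]
        have := Nat.modEq_iff_dvd.1 h1.symm
        have h3 := this.add hz₁
        simpa using h3
      push_cast at h2
      obtain ⟨c1, hc1⟩ := hz1
      obtain ⟨c2, hc2⟩ := h2
      exact ⟨c2 - c1, by linear_combination hc2 - hc1⟩
    have hcop : IsCoprime ((k : R) ^ 2) b := by
      have : IsCoprime b (k : R) := by
        have := hx; push_cast at this; exact this.of_mul_right_left
      exact this.symm.pow_left
    obtain ⟨y, hy⟩ := hcop.mul_dvd hA1 hA2
    refine ⟨X (k * x) * Y (k * y), mul_mem (X_mem_E2 (Dvd.intro _ rfl))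
      (Y_mem_E2 (Dvd.intro _ rfl)), ?_, ?_⟩
    · simp [hb]; linear_combination (-1 : R) * hy + k ^ 2 * y * hbdef
    · simp [hb]; linear_combination (-(k : R)) * hbdef

end Conj

end SLU

namespace SLU

/-! ### Uniform conjugation bounds -/

section Uniform

set_option linter.unusedSectionVars false

variable {R : Type*} [CommRing R] [IsDomain R] [CharZero R] {n : ℕ} {w : Rˣ}

theorem mu_or (n lam : ℕ) : (lam ∣ MM n ∧ mu n lam = MM n ^ 2) ∨ (mu n lam = lam) := by
  unfold mu; split_ifs with h
  exacts [Or.inl ⟨h, rfl⟩, Or.inr rfl]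

theorem Hyp.J_stable_w (H : Hyp R n w) {k : ℕ} (hk : k ≠ 0) {g : G R}
    (hg : g ∈ Del (k : R) k) (τ : R) :
    ((w ^ (MM n ^ 2) : Rˣ) : R) * τ ∈ J (k : R) g ↔ τ ∈ J (k : R) g := by
  refine stable_local _ w (pow_ne_zero _ (MM_ne n)) (fun lam hl => ?_) τ
  obtain ⟨b, Q, t, hQ, hkQ, ht, ht1, -, hrow⟩ := H.rowDir hk (mu_ne (n := n) hl) hg
  obtain ⟨A, e, hA, -, -, he, hval, hdiv⟩ := two_primes H hl hQ
    ((Dvd.intro_left _ rfl).trans hkQ) ht (ht1.of_dvd (Dvd.intro_left _ rfl)) 0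
  obtain ⟨x, hx, h00, h01⟩ := hrow A hA
  refine ⟨e, he, ?_, fun τ => ?_⟩
  · rw [Nat.factorization_pow]; simpa using hval
  · obtain ⟨v, hv⟩ := hdiv w
    rw [← J_mul hx]
    refine J_stable (v := v) ?_ ?_ τ
    · rw [h00, hv]
    · rw [h01]; exact (Dvd.intro _ rfl : (k : R) ∣ k * b).mul_left _

theorem Hyp.natCast_ne (_ : Hyp R n w) {k : ℕ} (hk : k ≠ 0) : (k : R) ≠ 0 := Nat.cast_ne_zero.2 hk

/-- The core computation: `J` contains a fixed nonzero multiple of `kR`. -/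
theorem Hyp.translate_mem_J (H : Hyp R n w) {k : ℕ} (hk : k ≠ 0) {g : G R}
    (hg : g ∈ Del (k : R) k) (y : R) :
    ((((w ^ (MM n ^ 2)) ^ (MM n ^ 4) : Rˣ) : R) - 1) * (k * y) ∈ J (k : R) g := by
  set u₀ := w ^ (MM n ^ 2) with hu₀
  have hst := H.J_stable_w hk hg
  refine translate_local _ u₀ hst _ (pow_ne_zero _ (MM_ne n)) (fun lam hl => ?_)
  obtain ⟨b, Q, t, hQ, hkQ, ht, ht1, -, hrow⟩ := H.rowDir hk (mu_ne (n := n) hl) hg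
  obtain ⟨A, e₁, hA, -, hA0, he₁, hval₁, hdiv₁⟩ := two_primes H hl hQ
    ((Dvd.intro_left _ rfl).trans hkQ) ht (ht1.of_dvd (Dvd.intro_left _ rfl)) 0
  obtain ⟨x, hx, h00, h01⟩ := hrow A hA
  have hA1 : A ≡ 1 [MOD k ^ 2 * mu n lam] := (hA.of_dvd hkQ).trans ht1
  have hAk : A.Coprime (k ^ 2 * mu n lam) := by rw [Nat.Coprime, hA1.gcd_eq]; simp
  have hAR : (A : R) ≠ 0 := H.natCast_ne hA0.ne'
  -- an inverse `ζ` of `b` modulo `A`, chosen so that `ζ` and `ζ + Ay` are nonzero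
  have hcop : IsCoprime (A : R) (k * b) := by
    have := row_coprime (g * x); rwa [h00, h01] at this
  obtain ⟨p, ζ', hζ'⟩ := hcop.of_mul_right_right
  obtain ⟨m, hm0, hm1⟩ : ∃ m : ℕ, ζ' + A * m ≠ 0 ∧ ζ' + A * m + A * y ≠ 0 := by
    by_contra hcon
    push Not at hcon
    by_cases h0 : ζ' = 0
    · have h1 := hcon 1 (by rw [h0]; simpa using hAR)
      have h2 := hcon 2 (by rw [h0]; simpa using hAR)
      apply hAR; push_cast at h1 h2; linear_combination h2 - h1
    · have h3 := hcon 0 (by simpa using h0)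
      by_cases h1 : ζ' + A = 0
      · have h2 := hcon 2 (by
          intro h; apply hAR; push_cast at h; linear_combination h - h1)
        have : (A : R) * 2 = 0 := by push_cast at h2 h3; linear_combination h2 - h3
        exact (mul_ne_zero hAR two_ne_zero) this
      · have h2 := hcon 1 (by simpa using h1)
        apply hAR; push_cast at h2 h3; linear_combination h2 - h3
  set ζ₀ := ζ' + A * m with hζ₀
  set ζ₁ := ζ₀ + A * y with hζ₁
  have hb0 : ζ₀ * b + (p - m * b) * A = 1 := by rw [hζ₀]; linear_combination hζ'
  have hb1 : ζ₁ * b + (p - m * b - y * b) * A = 1 := by rw [hζ₁]; linear_combination hb0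
  obtain ⟨N, hN0, ⟨M, hM⟩, hNA⟩ := H.dvd_coprime (mul_ne_zero hm0 hm1) (m := A) (by
    refine IsCoprime.mul_left ⟨b, p - m * b, ?_⟩ ⟨b, p - m * b - y * b, ?_⟩
    · linear_combination hb0
    · linear_combination hb1)
  -- the second prime pair, congruent to `A` modulo `k²N` and to `k²` modulo `A`
  have hcop2 : (k ^ 2 * mu n lam * N).Coprime A := Nat.Coprime.mul_left hAk.symm hNA
  obtain ⟨t₂, ht₂, ht₂A⟩ := Nat.chineseRemainder hcop2 A (k ^ 2)
  have hmuQ : mu n lam ∣ k ^ 2 * mu n lam * N * A :=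
    ((Dvd.intro_left _ rfl).trans (Dvd.intro _ rfl)).trans (Dvd.intro _ rfl)
  obtain ⟨a₂, e₂, ha₂, -, -, he₂, hval₂, hdiv₂⟩ := two_primes H hl
    (mul_ne_zero (mul_ne_zero (mul_ne_zero (pow_ne_zero _ hk) (mu_ne (n := n) hl)) hN0) hA0.ne')
    hmuQ (t := t₂) (by
      refine Nat.Coprime.mul_right ?_ ?_
      · rw [Nat.Coprime, ht₂.gcd_eq]; exact hcop2.symm
      · rw [Nat.Coprime, ht₂A.gcd_eq]
        exact (Nat.Coprime.coprime_mul_right_right hAk).symm)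
    (((ht₂.trans (hA1.of_dvd dvd_rfl |> fun h => Nat.ModEq.rfl)).of_dvd
      ((Dvd.intro_left _ rfl).trans (Dvd.intro _ rfl))).trans
      (hA1.of_dvd (Dvd.intro_left _ rfl))) 0
  obtain ⟨s, hs⟩ := dvd_sub_of_modEq (R := R)
    (((ha₂.of_dvd (Dvd.intro _ rfl)).trans ht₂).of_dvd
      (mul_dvd_mul_right (Dvd.intro _ rfl) N : k ^ 2 * N ∣ k ^ 2 * mu n lam * N))
  obtain ⟨s', hs'⟩ := dvd_sub_of_modEq (R := R) ((ha₂.of_dvd (Dvd.intro_left _ rfl)).trans ht₂A)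
  have hkA : IsCoprime (A : R) ((k : R) ^ 2) := by
    have := isCoprime_cast (R := R) (Nat.Coprime.coprime_mul_right_right hAk)
    simpa using this
  have hAa₂ : IsCoprime (A : R) (a₂ : R) := by
    have h := hkA.add_mul_left_right s'
    have h1 : (a₂ : R) = k ^ 2 + A * s' := by push_cast at hs'; linear_combination hs'
    rwa [h1]
  -- the unit congruent to `1` modulo both
  obtain ⟨t', ht'⟩ : (A : R) * a₂ ∣ ((u₀ ^ (e₁ * e₂) : Rˣ) : R) - 1 := by
    refine hAa₂.mul_dvd ?_ ?_
    · refine (hdiv₁ u₀).trans ?_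
      rw [pow_mul]; push_cast
      exact sub_one_dvd_pow_sub_one _ _
    · rw [pow_mul]
      exact hdiv₂ (u₀ ^ e₁)
  set u := u₀ ^ (e₁ * e₂) with hu
  push_cast at hs hs'
  have key : ∀ ζ P M' : R, ζ * M' = N → ζ * b + P * A = 1 →
      ↑u⁻¹ * t' * (k * ζ) ∈ J (k : R) g := by
    intro ζ P M' hζM hζb
    have hβ : (k : R) ^ 2 * ζ * (M' * s) = a₂ - A := by rw [hs, ← hζM]; ring
    obtain ⟨r, hr⟩ : (A : R) ∣ M' * s - b := by
      have h1 : IsCoprime (A : R) (k ^ 2 * ζ) :=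
        hkA.mul_right ⟨P, b, by linear_combination hζb⟩
      refine h1.dvd_of_dvd_mul_left ?_
      exact ⟨s' - 1 + k ^ 2 * P, by linear_combination hβ + hs' - k ^ 2 * hζb⟩
    have hxr : x * X (k * r) ∈ E (k : R) := mul_mem hx (X_mem_E2 (Dvd.intro _ rfl))
    have g00 : (g * (x * X (k * r))) 0 0 = A := by
      rw [← mul_assoc, mul00, h00]; simp
    have g01 : (g * (x * X (k * r))) 0 1 = k * (M' * s) := by
      rw [← mul_assoc, mul01, h00, h01]; simp; linear_combination (-(k : R)) * hr
    rw [← J_mul hxr]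
    refine mem_J_of (Dvd.intro _ rfl) ?_ ?_
    · rw [g00, g01, ht']
      linear_combination (-(A : R) * t') * hβ
    · rw [g01]; exact (Dvd.intro _ rfl : (k : R) ∣ k * (M' * s)).mul_left _
  have k0 := key ζ₀ _ (ζ₁ * M) (by rw [hM]; ring) hb0
  have k1 := key ζ₁ _ (ζ₀ * M) (by rw [hM]; ring) hb1
  have k2 : ↑u⁻¹ * ((((u : Rˣ) : R) - 1) * (k * y)) ∈ J (k : R) g := by
    have := (J (k : R) g).nsmul_mem ((J (k : R) g).sub_mem k1 k0) a₂
    convert this using 1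
    rw [nsmul_eq_mul, ht', hζ₁]; ring
  refine ⟨e₁ * e₂, mul_ne_zero he₁ he₂, ?_, ?_⟩
  · rw [Nat.factorization_mul he₁ he₂, Nat.factorization_pow]
    simp only [Finsupp.coe_add, Pi.add_apply, Finsupp.coe_smul, Pi.smul_apply, smul_eq_mul]
    omega
  · have := (stable_pow _ u₀ hst (-((e₁ * e₂ : ℕ) : ℤ))
      ((((u : Rˣ) : R) - 1) * (k * y))).1 (by rwa [zpow_neg, zpow_natCast])
    exact this

theorem w0_mem_Del {k : R} {g : G R} (hg : g ∈ Del k k) : w0⁻¹ * g * w0 ∈ Del k k := by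
  have h := Del_d hg
  obtain ⟨h1, h2, h3⟩ := hg
  refine ⟨?_, ?_, ?_⟩ <;> simpa

/-- Passing from lower elementary matrices to the whole group `E l`, by symmetry under the
Weyl element. -/
theorem conj_mem_of_J {k l : R} {g : G R} (h1 : ∀ y, l * y ∈ J k g)
    (h2 : ∀ y, l * y ∈ J k (w0⁻¹ * g * w0)) {e : G R} (he : e ∈ E l) : g⁻¹ * e * g ∈ E k := by
  suffices h : E l ≤ (E k).comap (MulAut.conj g⁻¹).toMonoidHom by
    have := h he
    change g⁻¹ * e * g⁻¹⁻¹ ∈ E k at this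
    rwa [inv_inv] at this
  refine E2_le (fun r => ?_) (fun r => ?_)
  · change g⁻¹ * X (l * r) * g⁻¹⁻¹ ∈ E k
    rw [inv_inv]
    have h3 := w0_mem_E (h2 (-r))
    have h4 : w0 * ((w0⁻¹ * g * w0)⁻¹ * Y (l * -r) * (w0⁻¹ * g * w0)) * w0⁻¹
        = g⁻¹ * (w0 * Y (l * -r) * w0⁻¹) * g := by group
    rw [h4, w0_Y] at h3
    simpa using h3
  · change g⁻¹ * Y (l * r) * g⁻¹⁻¹ ∈ E k
    rw [inv_inv]
    exact h1 r

/-- Conjugation by elements of `Del k k` loses only a bounded factor, independent of `k`. -/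
theorem Hyp.conj_Del (H : Hyp R n w) : ∃ q₀ : ℕ, q₀ ≠ 0 ∧ ∀ k : ℕ, k ≠ 0 →
    ∀ g ∈ Del (k : R) k, ∀ e ∈ E ((k : R) * q₀), g⁻¹ * e * g ∈ E (k : R) := by
  obtain ⟨q, hq, c, hc⟩ := H.dvd ((((w ^ (MM n ^ 2)) ^ (MM n ^ 4) : Rˣ) : R) - 1) (by
    rw [sub_ne_zero, ← pow_mul]
    intro h
    exact H.unit (MM n ^ 2 * MM n ^ 4) (mul_ne_zero (pow_ne_zero _ (MM_ne n))
      (pow_ne_zero _ (MM_ne n))) (Units.ext h))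
  have key : ∀ k : ℕ, k ≠ 0 → ∀ g ∈ Del (k : R) k, ∀ y, (k : R) * q * y ∈ J (k : R) g := by
    intro k hk g hg y
    have := H.translate_mem_J hk hg (c * y)
    convert this using 1
    rw [hc]; ring
  exact ⟨q, hq, fun k hk g hg e he =>
    conj_mem_of_J (key k hk g hg) (key k hk _ (w0_mem_Del hg)) he⟩

/-- For a fixed upper elementary matrix, `J` contains a nonzero ideal. -/
theorem Hyp.exists_J_X (H : Hyp R n w) {k : ℕ} (hk : k ≠ 0) (hMk : MM n ^ 2 ∣ k) {s : R}
    (hs : s ≠ 0) : ∃ q : ℕ, q ≠ 0 ∧ ∀ y : R, (q : R) * y ∈ J (k : R) (X (-s)) := by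
  obtain ⟨Ns, hNs, s', hs'⟩ := H.dvd s hs
  have hs'0 : s' ≠ 0 := by
    rintro rfl
    exact H.natCast_ne hNs (by simpa using hs')
  -- a power of `w` congruent to `1` modulo `k`
  obtain ⟨j, hj, v, hv⟩ : ∃ j : ℕ, j ≠ 0 ∧ (k : R) ∣ ((w ^ j : Rˣ) : R) - 1 := by
    have := H.finN hk
    let q := Ideal.Quotient.mk (Ideal.span {(k : R)})
    refine ⟨Nat.card (R ⧸ Ideal.span {(k : R)})ˣ, Nat.card_pos.ne', ?_⟩
    rw [← Ideal.mem_span_singleton, ← Ideal.Quotient.eq]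
    have h : Units.map (q : R →* R ⧸ Ideal.span {(k : R)}) w ^
      Nat.card (R ⧸ Ideal.span {(k : R)})ˣ = 1 := pow_card_eq_one'
    have h' := congrArg Units.val h
    rw [Units.val_pow_eq_pow_val, Units.val_one] at h'
    rw [Units.val_pow_eq_pow_val, map_pow, map_one]
    exact h'
  set w₁ := w ^ j with hw₁
  have hst : ∀ τ, (w₁ : R) * τ ∈ J (k : R) (X (-s)) ↔ τ ∈ J (k : R) (X (-s)) := fun τ =>
    J_stable (v := k * v) (by rw [hv]; simp) ((Dvd.intro _ rfl : (k : R) ∣ k * v).mul_right _) τ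
  have good : ∀ y : R, 1 + k * y ≠ 0 →
      (((w₁ ^ (MM n ^ 2) : Rˣ) : R) - 1) * (k ^ 2 * s' * y) ∈ J (k : R) (X (-s)) := by
    intro y hy
    refine translate_local _ w₁ hst _ (pow_ne_zero _ (MM_ne n)) (fun lam hl => ?_)
    obtain ⟨N, hN0, ⟨M, hM⟩, hNk⟩ := H.dvd_coprime hy (m := k) ⟨1, -y, by ring⟩
    obtain ⟨lam', hlam0, hlamk, hmul⟩ : ∃ l : ℕ, l ≠ 0 ∧ l.Coprime k ∧ mu n lam ∣ k * l := by
      rcases mu_or n lam with ⟨-, h⟩ | h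
      · exact ⟨1, one_ne_zero, by simp, by rw [h, mul_one]; exact hMk⟩
      · rw [h]
        by_cases hd : lam ∣ k
        · exact ⟨1, one_ne_zero, by simp, by rwa [mul_one]⟩
        · exact ⟨lam, hl.ne_zero, (hl.coprime_iff_not_dvd).2 hd, Dvd.intro_left _ rfl⟩
    have hcop : (N * lam').Coprime k := Nat.Coprime.mul_left hNk hlamk
    obtain ⟨η₀, hη₀, hη₁⟩ := Nat.chineseRemainder hcop 0 (k - 1)
    obtain ⟨η', rfl⟩ := (Nat.modEq_zero_iff_dvd).1 hη₀
    set t := 1 + k * Ns * (N * lam' * η') with ht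
    have ht1 : t ≡ 1 [MOD k * Ns * (N * lam')] := by
      refine ((Nat.modEq_iff_dvd' (by omega)).2 ?_).symm
      rw [ht, Nat.add_sub_cancel_left]
      exact ⟨η', by ring⟩
    have htc : t.Coprime (k * Ns * (N * lam')) := by rw [Nat.Coprime, ht1.gcd_eq]; simp
    have htk : t.Coprime k :=
      htc.coprime_dvd_right ((Dvd.intro _ rfl : k ∣ k * Ns).trans (Dvd.intro _ rfl))
    obtain ⟨a₂, e, ha₂, -, ha₂0, he, hval, hdiv⟩ := two_primes H hl
      (Q := k * (k * Ns * (N * lam'))) (t := t)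
      (mul_ne_zero hk (mul_ne_zero (mul_ne_zero hk hNs) (mul_ne_zero hN0 hlam0)))
      (hmul.trans ⟨k * Ns * N, by ring⟩) (Nat.Coprime.mul_right htk htc)
      (ht1.of_dvd (hmul.trans ⟨Ns * N, by ring⟩)) 0
    obtain ⟨s₁, hs₁⟩ := dvd_sub_of_modEq (R := R) ha₂
    -- `a₂ = 1 + k Nₛ N η` with `Nη ≡ -1` modulo `k`
    obtain ⟨η, hη, κ, hκ⟩ : ∃ η : R, (a₂ : R) = 1 + k * Ns * (N * η) ∧ (k : R) ∣ N * η + 1 := by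
      refine ⟨lam' * η' + k * lam' * s₁, ?_, ?_⟩
      · rw [ht] at hs₁; push_cast at hs₁; linear_combination hs₁
      · obtain ⟨c, hc⟩ := dvd_sub_of_modEq (R := R) hη₁
        rw [Nat.cast_sub (Nat.one_le_iff_ne_zero.2 hk)] at hc
        push_cast at hc
        exact ⟨c + N * lam' * s₁ + 1, by linear_combination hc⟩
    have hka : IsCoprime (a₂ : R) (k : R) := ⟨1, -(Ns * (N * η)), by rw [hη]; ring⟩
    obtain ⟨t', ht'⟩ : (a₂ : R) * k ∣ ((w₁ ^ e : Rˣ) : R) - 1 := by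
      refine hka.mul_dvd (hdiv w₁) ?_
      refine (Dvd.intro _ hv.symm).trans ?_
      push_cast
      exact sub_one_dvd_pow_sub_one _ _
    set u := w₁ ^ e with hu
    have key : ∀ ζ M' r : R, ζ * M' = N → M' * η + 1 = k * r →
        ↑u⁻¹ * (k * t') * (k * (s' * ζ)) ∈ J (k : R) (X (-s)) := by
      intro ζ M' r hζ hr
      rw [← J_mul (X_mem_E2 (Dvd.intro (s * r) rfl : (k : R) ∣ k * (s * r)))]
      have g00 : (X (-s) * X (k * (s * r))) 0 0 = 1 := by simp
      have g01 : (X (-s) * X (k * (s * r))) 0 1 = s * (M' * η) := by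
        simp; linear_combination (-s) * hr
      refine mem_J_of (Dvd.intro _ rfl) ?_ ?_
      · rw [g00, g01, ht', hη]
        rw [hs', ← hζ]; ring
      · exact (Dvd.intro _ rfl : (k : R) ∣ k * t').mul_right _
    have k0 := key 1 N κ (one_mul _) hκ
    have k1 := key (1 + k * y) M (κ - y * M * η) hM.symm
      (by linear_combination hκ - η * hM)
    have k2 : ↑u⁻¹ * ((((u : Rˣ) : R) - 1) * (k ^ 2 * s' * y)) ∈ J (k : R) (X (-s)) := by
      have := (J (k : R) (X (-s))).nsmul_mem ((J (k : R) (X (-s))).sub_mem k1 k0) a₂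
      convert this using 1
      rw [nsmul_eq_mul, ht']; ring
    refine ⟨e, he, ?_, ?_⟩
    · rw [Nat.factorization_pow]; simpa using hval
    · exact (stable_pow _ w₁ hst (-(e : ℤ)) _).1 (by rwa [zpow_neg, zpow_natCast])
  have all : ∀ y : R, (((w₁ ^ (MM n ^ 2) : Rˣ) : R) - 1) * (k ^ 2 * s' * y) ∈
      J (k : R) (X (-s)) := by
    intro y
    by_cases hy : 1 + k * y = 0
    · have h1 := good (y + 1) (by
        have : 1 + (k : R) * (y + 1) = k := by linear_combination hy
        rw [this]; exact H.natCast_ne hk)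
      have h2 := good 1 (by
        have : (1 : R) + k * 1 = ((1 + k : ℕ) : R) := by push_cast; ring
        rw [this]; exact H.natCast_ne (by omega))
      convert (J (k : R) (X (-s))).sub_mem h1 h2 using 1
      ring
    · exact good y hy
  obtain ⟨q, hq, c, hc⟩ := H.dvd ((((w₁ ^ (MM n ^ 2) : Rˣ) : R) - 1) * (k ^ 2 * s')) (by
    refine mul_ne_zero ?_ (mul_ne_zero (pow_ne_zero _ (H.natCast_ne hk)) hs'0)
    rw [sub_ne_zero, hw₁, ← pow_mul]
    intro h
    exact H.unit (j * MM n ^ 2) (mul_ne_zero hj (pow_ne_zero _ (MM_ne n))) (Units.ext h))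
  refine ⟨q, hq, fun y => ?_⟩
  convert all (c * y) using 1
  rw [hc]; ring

/-- Conjugation by an arbitrary upper elementary matrix, uniformly in its entry. -/
theorem Hyp.conj_X (H : Hyp R n w) {k : ℕ} (hk : k ≠ 0) : ∃ k' : ℕ, k' ≠ 0 ∧
    ∀ s : R, ∀ e ∈ E (k' : R), X s * e * (X s)⁻¹ ∈ E (k : R) := by
  set K := k * MM n ^ 2 with hK
  have hK0 : K ≠ 0 := mul_ne_zero hk (pow_ne_zero _ (MM_ne n))
  have := H.finN hK0
  have := Fintype.ofFinite (R ⧸ Ideal.span {(K : R)})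
  have hex : ∀ s : R, ∃ q : ℕ, q ≠ 0 ∧ ∀ y : R, (q : R) * y ∈ J (K : R) (X (-s)) := by
    intro s
    by_cases hs : s = 0
    · refine ⟨K, hK0, fun y => ?_⟩
      rw [hs, mem_J]
      simpa using Y_mem_E2 (Dvd.intro _ rfl)
    · exact H.exists_J_X hK0 (Dvd.intro_left _ rfl) hs
  choose q hq0 hq using hex
  let P : ℕ := ∏ x : R ⧸ Ideal.span {(K : R)}, q (Quotient.out x)
  have hP : P ≠ 0 := Finset.prod_ne_zero_iff.2 fun _ _ => hq0 _
  refine ⟨K * P, mul_ne_zero hK0 hP, fun s e he => ?_⟩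
  have hKk : (k : R) ∣ (K : R) := by rw [hK]; push_cast; exact Dvd.intro _ rfl
  refine E2_mono hKk hKk ?_
  suffices h : E ((K * P : ℕ) : R) ≤ (E (K : R)).comap (MulAut.conj (X s)).toMonoidHom from h he
  refine E2_le (fun r => ?_) (fun r => ?_)
  · change X s * X _ * (X s)⁻¹ ∈ E (K : R)
    rw [← X_neg, ← X_add, ← X_add]
    refine X_mem_E2 ⟨P * r, ?_⟩
    push_cast; ring
  · change X s * Y _ * (X s)⁻¹ ∈ E (K : R)
    set x : R ⧸ Ideal.span {(K : R)} := Ideal.Quotient.mk _ s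
    have hx : (K : R) ∣ x.out - s := by
      rw [← Ideal.mem_span_singleton, ← Ideal.Quotient.eq]
      exact Quotient.out_eq' x
    obtain ⟨c, hc⟩ := hx
    have h1 : X (-x.out) * X (K * c) = X (-s) := by
      rw [← X_add]; congr 1; linear_combination -hc
    have h2 : ((K * P : ℕ) : R) * r ∈ J (K : R) (X (-s)) := by
      rw [← h1, J_mul (X_mem_E2 (Dvd.intro _ rfl))]
      obtain ⟨d, hd⟩ : q x.out ∣ P := Finset.dvd_prod_of_mem (fun x => q (Quotient.out x))
        (Finset.mem_univ x)
      have := hq x.out (K * d * r)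
      convert this using 1
      rw [hd]; push_cast; ring
    rw [mem_J, X_neg, inv_inv] at h2
    exact h2

theorem Hyp.conj_Y (H : Hyp R n w) {k : ℕ} (hk : k ≠ 0) : ∃ k' : ℕ, k' ≠ 0 ∧
    ∀ s : R, ∀ e ∈ E (k' : R), Y s * e * (Y s)⁻¹ ∈ E (k : R) := by
  obtain ⟨k', hk', h⟩ := H.conj_X hk
  refine ⟨k', hk', fun s e he => ?_⟩
  have h1 := w0_mem_E (h (-s) _ (w0_mem_E' he))
  have h2 : w0 * (X (-s) * (w0⁻¹ * e * w0) * (X (-s))⁻¹) * w0⁻¹ =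
      (w0 * X (-s) * w0⁻¹) * e * (w0 * X (-s) * w0⁻¹)⁻¹ := by group
  rwa [h2, w0_X, neg_neg] at h1

/-- The normal core of `E k` contains some `E κ`. -/
theorem Hyp.core (H : Hyp R n w) {k : ℕ} (hk : k ≠ 0) : ∃ κ : ℕ, κ ≠ 0 ∧
    E (κ : R) ≤ (E (k : R)).normalCore := by
  obtain ⟨k₁, h₁, hc₁⟩ := H.conj_X hk
  obtain ⟨k₂, h₂, hc₂⟩ := H.conj_Y h₁
  obtain ⟨k₃, h₃, hc₃⟩ := H.conj_X h₂
  obtain ⟨k₄, h₄, hc₄⟩ := H.conj_Y h₃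
  obtain ⟨q, hq, hc⟩ := H.conj_Del
  refine ⟨k₄ * q, mul_ne_zero h₄ hq, fun e he g => ?_⟩
  have hk4 : k₄ ^ 2 ≠ 0 := pow_ne_zero _ h₄
  have := H.finN hk4
  obtain ⟨x₁, x₂, x₃, x₄, hx⟩ := reduction (f := ((k₄ ^ 2 : ℕ) : R)) (Del_one g⁻¹)
  simp only [one_mul] at hx
  set γ := g⁻¹ * X x₁ * Y x₂ * X x₃ * Y x₄ with hγ
  have hγD : γ ∈ Del (k₄ : R) k₄ := Gam_le_Del (by push_cast; rw [pow_two]) hx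
  rw [Nat.cast_mul] at he
  have h6 := hc₁ x₁ _ (hc₂ x₂ _ (hc₃ x₃ _ (hc₄ x₄ _ (hc k₄ h₄ γ hγD e he))))
  have h7 : g * e * g⁻¹ = X x₁ * (Y x₂ * (X x₃ * (Y x₄ * (γ⁻¹ * e * γ) * (Y x₄)⁻¹) * (X x₃)⁻¹)
      * (Y x₂)⁻¹) * (X x₁)⁻¹ := by rw [hγ]; group
  change g * e * g⁻¹ ∈ E (k : R)
  rw [h7]
  exact h6

end Uniform

end SLU

namespace SLU

/-! ### Triviality of conjugation modulo elementary matrices -/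

section Triv

set_option linter.unusedSectionVars false

variable {R : Type*} [CommRing R] [IsDomain R] [CharZero R] {n : ℕ} {w : Rˣ}

/-- The class of a matrix modulo the normal core of `E k`. -/
abbrev cls (k : R) : G R →* G R ⧸ (E k).normalCore := QuotientGroup.mk' _

theorem cls_one {k : R} {g : G R} : cls k g = 1 ↔ g ∈ (E k).normalCore :=
  QuotientGroup.eq_one_iff g

theorem cls_eq {k : R} {g h : G R} : cls k g = cls k h ↔ g * h⁻¹ ∈ (E k).normalCore := by
  rw [← cls_one, map_mul, map_inv, mul_inv_eq_one]

theorem cls_E {k κ : R} (h : E κ ≤ (E k).normalCore) {e : G R} (he : e ∈ E κ) : cls k e = 1 :=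
  cls_one.2 (h he)

theorem sig_core {k : R} (u : Rˣ) {g : G R} (hg : g ∈ (E k).normalCore) :
    sig u g ∈ (E k).normalCore := by
  intro h
  have h1 : h * sig u g * h⁻¹ = sig u (sig u⁻¹ h * g * (sig u⁻¹ h)⁻¹) := by
    rw [map_mul, map_mul, map_inv, sig_sig_inv]
  rw [h1]
  exact sig_mem_E2 u (hg _)

theorem cls_sig {k : R} (u : Rˣ) {g h : G R} (hgh : cls k g = cls k h) :
    cls k (sig u g) = cls k (sig u h) := by
  rw [cls_eq] at hgh ⊢
  rw [← map_inv, ← map_mul]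
  exact sig_core u hgh

/-- A fixed power of `w` acts trivially, by diagonal conjugation, modulo the normal core. -/
theorem Hyp.sig_triv (H : Hyp R n w) {k : R} {κ : ℕ} (hκ : κ ≠ 0)
    (hk : E (κ : R) ≤ (E k).normalCore) {g : G R} (hg : g ∈ Del (κ : R) κ) :
    cls k (sig (w ^ (MM n ^ 2)) g) = cls k g := by
  let A : AddSubgroup ℤ :=
    { carrier := {m | cls k (sig (w ^ m) g) = cls k g}
      zero_mem' := by simp
      add_mem' := by
        intro a b ha hb
        change _ = _ at ha hb ⊢
        rw [zpow_add, sig_mul, ← ha]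
        exact cls_sig _ hb
      neg_mem' := by
        intro a ha
        change _ = _ at ha ⊢
        have := cls_sig (w ^ (-a)) ha
        rw [← sig_mul, ← zpow_add, neg_add_cancel, zpow_zero, sig_one] at this
        exact this.symm }
  have key : ((MM n ^ 2 : ℕ) : ℤ) ∈ A := by
    refine mem_of_local A (pow_ne_zero _ (MM_ne n)) fun lam hl => ?_
    obtain ⟨b, Q, t, hQ, hkQ, ht, ht1, -, hrow⟩ := H.rowDir hκ (mu_ne (n := n) hl) hg
    obtain ⟨B, e, hB, -, -, he, hval, hdiv⟩ := two_primes H hl hQ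
      ((Dvd.intro_left _ rfl).trans hkQ) ht (ht1.of_dvd (Dvd.intro_left _ rfl)) 0
    obtain ⟨x, hx, h00, h01⟩ := hrow B hB
    refine ⟨e, he, ?_, ?_⟩
    · rw [Nat.factorization_pow]; simpa using hval
    · obtain ⟨v, hv⟩ := hdiv w
      change cls k (sig (w ^ (e : ℤ)) g) = cls k g
      rw [zpow_natCast]
      have h1 : cls k (g * x) = cls k g := by rw [map_mul, cls_E hk hx, mul_one]
      rw [← cls_sig (w ^ e) h1, ← h1, sig_eq (g := g * x) (v := v) (by rw [h00, hv])]
      have hd : g * x ∈ Del (κ : R) κ := mul_mem hg (E2_le_Del _ _ hx)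
      rw [map_mul, map_mul, cls_E hk (Y_mem_E2 (hd.2.2.mul_left _).neg_right),
        cls_E hk (X_mem_E2 (hd.2.1.mul_left _)), one_mul, mul_one]
  have := key
  change cls k (sig (w ^ ((MM n ^ 2 : ℕ) : ℤ)) g) = cls k g at this
  rwa [zpow_natCast] at this

theorem sig_mem_Gam (u : Rˣ) {k : R} {g : G R} (hg : g ∈ Gam k) : sig u g ∈ Gam k := by
  rw [mem_Gam] at hg ⊢
  exact ⟨hg.1, hg.2.1.mul_left _, hg.2.2.1.mul_left _, hg.2.2.2⟩

/-- Comparing `sig_triv` for `g` and for its conjugate by `X s`: conjugation by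
`X ((u - 1) s)` acts trivially, where `u` is the unit of `sig_triv`. -/
theorem Hyp.X_triv (H : Hyp R n w) {k : R} {κ : ℕ} (hκ : κ ≠ 0)
    (hk : E (κ : R) ≤ (E k).normalCore) {g : G R} (hg : g ∈ Gam ((κ : R) ^ 2)) (s : R) :
    cls k (X ((((w ^ (MM n ^ 2) : Rˣ) : R) - 1) * s) * g *
      (X ((((w ^ (MM n ^ 2) : Rˣ) : R) - 1) * s))⁻¹) = cls k g := by
  set u := w ^ (MM n ^ 2) with hu
  have hD : ∀ x ∈ Gam ((κ : R) ^ 2), x ∈ Del (κ : R) κ :=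
    fun x hx => Gam_le_Del (by rw [pow_two]) hx
  have hg' := sig_mem_Gam u⁻¹ hg
  have hc : X s * sig u⁻¹ g * (X s)⁻¹ ∈ Gam ((κ : R) ^ 2) :=
    (inferInstance : (Gam ((κ : R) ^ 2)).Normal).conj_mem _ hg' _
  have h1 := H.sig_triv hκ hk (hD _ hc)
  have h2 := H.sig_triv hκ hk (hD _ hg')
  rw [← hu, sig_sig_inv] at h2
  rw [← hu, map_mul (sig u), map_mul (sig u), map_inv, sig_sig_inv, sig_X, map_mul, map_mul,
    map_mul, map_mul, map_inv, ← h2, map_inv] at h1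
  have h3 : X (((u : R) - 1) * s) = (X s)⁻¹ * X (u * s) := by
    rw [← X_neg, ← X_add]; congr 1; ring
  rw [h3]
  simp only [map_mul, map_inv, mul_inv_rev, inv_inv]
  calc _ = (cls k (X s))⁻¹ * (cls k (X (u * s)) * cls k g * (cls k (X (u * s)))⁻¹)
      * cls k (X s) := by group
    _ = _ := by rw [h1]; group

theorem Hyp.Y_triv (H : Hyp R n w) {k : R} {κ : ℕ} (hκ : κ ≠ 0)
    (hk : E (κ : R) ≤ (E k).normalCore) {g : G R} (hg : g ∈ Gam ((κ : R) ^ 2)) (s : R) :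
    cls k (Y ((((w ^ (MM n ^ 2) : Rˣ) : R) - 1) * s) * g *
      (Y ((((w ^ (MM n ^ 2) : Rˣ) : R) - 1) * s))⁻¹) = cls k g := by
  set u := w ^ (MM n ^ 2) with hu
  have hD : ∀ x ∈ Gam ((κ : R) ^ 2), x ∈ Del (κ : R) κ :=
    fun x hx => Gam_le_Del (by rw [pow_two]) hx
  have hg' := sig_mem_Gam u⁻¹ hg
  have hc : Y (u * s) * sig u⁻¹ g * (Y (u * s))⁻¹ ∈ Gam ((κ : R) ^ 2) :=
    (inferInstance : (Gam ((κ : R) ^ 2)).Normal).conj_mem _ hg' _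
  have h1 := H.sig_triv hκ hk (hD _ hc)
  have h2 := H.sig_triv hκ hk (hD _ hg')
  rw [← hu, sig_sig_inv] at h2
  rw [← hu, map_mul (sig u), map_mul (sig u), map_inv, sig_sig_inv, sig_Y,
    Units.inv_mul_cancel_left, map_mul, map_mul, map_mul, map_mul, map_inv, ← h2, map_inv] at h1
  have h3 : Y (((u : R) - 1) * s) = (Y s)⁻¹ * Y (u * s) := by
    rw [← Y_neg, ← Y_add]; congr 1; ring
  rw [h3]
  simp only [map_mul, map_inv, mul_inv_rev, inv_inv]
  calc _ = (cls k (Y s))⁻¹ * (cls k (Y (u * s)) * cls k g * (cls k (Y (u * s)))⁻¹)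
      * cls k (Y s) := by group
    _ = _ := by rw [← h1]; group

/-- Extension of scalars to the fraction field. -/
abbrev io : G R →* G (FractionRing R) := Matrix.SpecialLinearGroup.map (algebraMap R (FractionRing R))

@[simp] theorem io_apply (g : G R) (i j) : io g i j = algebraMap R (FractionRing R) (g i j) := rfl

theorem io_inj : Function.Injective (io : G R →* G (FractionRing R)) := by
  intro g h hgh
  have : ∀ i j, g i j = h i j := fun i j => by
    apply IsFractionRing.injective R (FractionRing R)
    rw [← io_apply, ← io_apply, hgh]
  ext <;> apply this

@[simp] theorem io_X (s : R) : io (X s) = X (algebraMap R (FractionRing R) s) := by ext <;> simp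
@[simp] theorem io_Y (s : R) : io (Y s) = Y (algebraMap R (FractionRing R) s) := by ext <;> simp

/-- `φ` moves matrices of deep level only by elementary matrices of prescribed level. -/
def Zf (φ : G (FractionRing R) →* G (FractionRing R)) : Prop :=
  ∀ k : ℕ, k ≠ 0 → ∃ κ : ℕ, κ ≠ 0 ∧ ∀ g ∈ Gam (κ : R), ∃ e ∈ E (k : R), φ (io g) = io (e * g)

theorem Zf.comp {φ ψ : G (FractionRing R) →* G (FractionRing R)} (hψ : Zf (R := R) ψ)
    (hφ : Zf (R := R) φ) : Zf (R := R) (ψ.comp φ) := by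
  intro k hk
  obtain ⟨κ₁, h₁, hh₁⟩ := hψ k hk
  obtain ⟨κ₂, h₂, hh₂⟩ := hφ (k * κ₁) (mul_ne_zero hk h₁)
  refine ⟨κ₁ * κ₂, mul_ne_zero h₁ h₂, fun g hg => ?_⟩
  rw [Nat.cast_mul] at hg
  obtain ⟨e, he, hge⟩ := hh₂ g (Gam_mono (Dvd.intro_left _ rfl) hg)
  rw [Nat.cast_mul] at he
  obtain ⟨e', he', hge'⟩ := hh₁ (e * g) (mul_mem (E_le_Gam (Dvd.intro_left _ rfl) he)
    (Gam_mono (Dvd.intro _ rfl) hg))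
  refine ⟨e' * e, mul_mem he' (E2_mono (Dvd.intro _ rfl) (Dvd.intro _ rfl) he), ?_⟩
  rw [MonoidHom.comp_apply, hge, hge', mul_assoc]

theorem exists_frac (H : Hyp R n w) (f : (FractionRing R)ˣ) : ∃ N : ℕ, N ≠ 0 ∧
    (∃ a : R, (f : FractionRing R) * N = algebraMap R _ a) ∧
    ∃ a : R, ((f⁻¹ : (FractionRing R)ˣ) : FractionRing R) * N = algebraMap R _ a := by
  have key : ∀ f : FractionRing R, ∃ N : ℕ, N ≠ 0 ∧ ∃ a : R, f * N = algebraMap R _ a := by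
    intro f
    obtain ⟨p, q, hq, hf⟩ := IsFractionRing.div_surjective R f
    have hq0 := nonZeroDivisors.ne_zero hq
    obtain ⟨N, hN, c, hc⟩ := H.dvd q hq0
    refine ⟨N, hN, p * c, ?_⟩
    have h1 : (algebraMap R (FractionRing R)) q ≠ 0 := by
      rwa [Ne, FaithfulSMul.algebraMap_eq_zero_iff]
    rw [← hf, ← map_natCast (algebraMap R (FractionRing R)), hc]
    simp only [map_mul]
    field_simp
  obtain ⟨N₁, h₁, a₁, ha₁⟩ := key f
  obtain ⟨N₂, h₂, a₂, ha₂⟩ := key (f⁻¹ : (FractionRing R)ˣ)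
  refine ⟨N₁ * N₂, mul_ne_zero h₁ h₂, ⟨a₁ * N₂, ?_⟩, ⟨a₂ * N₁, ?_⟩⟩
  · rw [Nat.cast_mul, ← mul_assoc, ha₁]; simp
  · rw [Nat.cast_mul, mul_comm (N₁ : FractionRing R), ← mul_assoc, ha₂]; simp

/-- Diagonal conjugation by an element of the fraction field is defined on matrices of deep
level. -/
theorem sig_frac {f : (FractionRing R)ˣ} {N : ℕ}
    (h1 : ∃ a : R, (f : FractionRing R) * N = algebraMap R _ a)
    (h2 : ∃ a : R, ((f⁻¹ : (FractionRing R)ˣ) : FractionRing R) * N = algebraMap R _ a)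
    {k : R} : (∀ g ∈ Gam (k * N), ∃ g' ∈ Gam k, sig f (io g) = io g') ∧
      ∀ e ∈ E (k * N), ∃ e' ∈ E k, sig f (io e) = io e' := by
  obtain ⟨a₁, ha₁⟩ := h1
  obtain ⟨a₂, ha₂⟩ := h2
  constructor
  · intro g hg
    rw [mem_Gam] at hg
    obtain ⟨h00, ⟨b, hb⟩, ⟨c, hc⟩, h11⟩ := hg
    have hb' : (f : FractionRing R) * algebraMap R _ (g 0 1) = algebraMap R _ (k * a₁ * b) := by
      rw [hb]; simp only [map_mul, map_natCast, ← ha₁]; ring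
    have hc' : ((f⁻¹ : (FractionRing R)ˣ) : FractionRing R) * algebraMap R _ (g 1 0)
        = algebraMap R _ (k * a₂ * c) := by
      rw [hc]; simp only [map_mul, map_natCast, ← ha₂]; ring
    refine ⟨mk4 (g 0 0) (k * a₁ * b) (k * a₂ * c) (g 1 1) ?_, ?_, ?_⟩
    · apply IsFractionRing.injective R (FractionRing R)
      have := congrArg (algebraMap R (FractionRing R)) (det4 g)
      rw [map_sub, map_mul, map_mul (algebraMap R (FractionRing R)) (_ * _) _, ← hb', ← hc', ← this]
      simp only [map_sub, map_mul]
      linear_combination (-algebraMap R (FractionRing R) (g 0 1) *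
        algebraMap R (FractionRing R) (g 1 0)) * f.mul_inv
    · rw [mem_Gam]
      refine ⟨(Dvd.intro _ rfl).trans h00, ?_, ?_, (Dvd.intro _ rfl).trans h11⟩
      · exact ⟨a₁ * b, by simp; ring⟩
      · exact ⟨a₂ * c, by simp; ring⟩
    · ext
      · simp
      · exact hb'
      · exact hc'
      · simp
  · suffices h : E (k * N) ≤ ((E k).map io).comap ((sig f).comp io) by
      intro e he
      obtain ⟨e', he', h'⟩ := h he
      exact ⟨e', he', h'.symm⟩
    refine E2_le (fun r => ⟨X (k * (a₁ * r)), X_mem_E2 (Dvd.intro _ rfl), ?_⟩)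
      (fun r => ⟨Y (k * (a₂ * r)), Y_mem_E2 (Dvd.intro _ rfl), ?_⟩)
    · rw [MonoidHom.comp_apply, io_X, io_X, sig_X]
      congr 1; simp only [map_mul, map_natCast, ← ha₁]; ring
    · rw [MonoidHom.comp_apply, io_Y, io_Y, sig_Y]
      congr 1; simp only [map_mul, map_natCast, ← ha₂]; ring

theorem Zf.conj_sig (H : Hyp R n w) {φ : G (FractionRing R) →* G (FractionRing R)}
    (hφ : Zf (R := R) φ) (f : (FractionRing R)ˣ) :
    Zf (R := R) ((sig f⁻¹).comp (φ.comp (sig f))) := by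
  intro k hk
  obtain ⟨N, hN, h1, h2⟩ := exists_frac H f
  obtain ⟨κ, hκ, h⟩ := hφ (k * N) (mul_ne_zero hk hN)
  refine ⟨κ * N, mul_ne_zero hκ hN, fun g hg => ?_⟩
  rw [Nat.cast_mul] at hg
  obtain ⟨g', hg', hgg⟩ := (sig_frac h1 h2).1 g hg
  obtain ⟨e, he, hee⟩ := h g' hg'
  rw [Nat.cast_mul] at he
  obtain ⟨e', he', hee'⟩ := (sig_frac (f := f⁻¹) h2 (by simpa using h1)).2 e he
  refine ⟨e', he', ?_⟩
  rw [MonoidHom.comp_apply, MonoidHom.comp_apply, hgg, hee, map_mul, map_mul, map_mul, hee', ← hgg,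
    sig_inv_sig]

/-- Conjugation as a homomorphism. -/
abbrev cj (g : G (FractionRing R)) : G (FractionRing R) →* G (FractionRing R) :=
  (MulAut.conj g).toMonoidHom

theorem cj_apply (g h : G (FractionRing R)) : cj (R := R) g h = g * h * g⁻¹ := rfl

theorem Hyp.q_ne (H : Hyp R n w) : ((w ^ (MM n ^ 2) : Rˣ) : R) - 1 ≠ 0 := by
  rw [sub_ne_zero]
  exact fun h => H.unit (MM n ^ 2) (pow_ne_zero _ (MM_ne n)) (Units.ext h)

theorem Hyp.Zf_X (H : Hyp R n w) (s : FractionRing R) : Zf (R := R) (cj (X s)) := by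
  rcases eq_or_ne s 0 with rfl | hs
  · exact fun k hk => ⟨1, one_ne_zero, fun g _ => ⟨1, one_mem _, by simp⟩⟩
  set q : R := ((w ^ (MM n ^ 2) : Rˣ) : R) - 1 with hq
  have hq0 : algebraMap R (FractionRing R) q ≠ 0 := by
    rw [Ne, FaithfulSMul.algebraMap_eq_zero_iff]; exact H.q_ne
  have h1 : Zf (R := R) (cj (X (algebraMap R (FractionRing R) q))) := by
    intro k hk
    obtain ⟨κ, hκ, h⟩ := H.core hk
    refine ⟨κ ^ 2, pow_ne_zero _ hκ, fun g hg => ?_⟩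
    rw [Nat.cast_pow] at hg
    have := H.X_triv hκ h hg 1
    rw [← hq, mul_one, cls_eq] at this
    refine ⟨_, Subgroup.normalCore_le _ this, ?_⟩
    rw [inv_mul_cancel_right, cj_apply, map_mul, map_mul, map_inv, io_X]
  have h2 := h1.conj_sig H (Units.mk0 (algebraMap R (FractionRing R) q / s) (div_ne_zero hq0 hs))
  convert h2 using 1
  ext1 g
  rw [MonoidHom.comp_apply, MonoidHom.comp_apply, cj_apply, cj_apply, map_mul, map_mul, map_inv,
    sig_inv_sig, sig_X]
  have : ((Units.mk0 (algebraMap R (FractionRing R) q / s) (div_ne_zero hq0 hs))⁻¹ :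
      (FractionRing R)ˣ) * algebraMap R (FractionRing R) q = s := by
    simp only [Units.val_inv_eq_inv_val, Units.val_mk0]
    field_simp
  rw [this]

theorem Hyp.Zf_Y (H : Hyp R n w) (s : FractionRing R) : Zf (R := R) (cj (Y s)) := by
  rcases eq_or_ne s 0 with rfl | hs
  · exact fun k hk => ⟨1, one_ne_zero, fun g _ => ⟨1, one_mem _, by simp⟩⟩
  set q : R := ((w ^ (MM n ^ 2) : Rˣ) : R) - 1 with hq
  have hq0 : algebraMap R (FractionRing R) q ≠ 0 := by
    rw [Ne, FaithfulSMul.algebraMap_eq_zero_iff]; exact H.q_ne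
  have h1 : Zf (R := R) (cj (Y (algebraMap R (FractionRing R) q))) := by
    intro k hk
    obtain ⟨κ, hκ, h⟩ := H.core hk
    refine ⟨κ ^ 2, pow_ne_zero _ hκ, fun g hg => ?_⟩
    rw [Nat.cast_pow] at hg
    have := H.Y_triv hκ h hg 1
    rw [← hq, mul_one, cls_eq] at this
    refine ⟨_, Subgroup.normalCore_le _ this, ?_⟩
    rw [inv_mul_cancel_right, cj_apply, map_mul, map_mul, map_inv, io_Y]
  have h2 := h1.conj_sig H (Units.mk0 (s / algebraMap R (FractionRing R) q) (div_ne_zero hs hq0))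
  convert h2 using 1
  ext1 g
  rw [MonoidHom.comp_apply, MonoidHom.comp_apply, cj_apply, cj_apply, map_mul, map_mul, map_inv,
    sig_inv_sig, sig_Y, inv_inv, Units.val_mk0, div_mul_cancel₀ _ hq0]

/-- Over the fraction field every conjugation is a product of conjugations by elementary
matrices. -/
theorem Hyp.Zf_cj (H : Hyp R n w) (g : G (FractionRing R)) : Zf (R := R) (cj g) := by
  have hm : ∀ g h : G (FractionRing R), Zf (R := R) (cj g) → Zf (R := R) (cj h) →
      Zf (R := R) (cj (g * h)) := fun g h hg hh => by
    have : cj (R := R) (g * h) = (cj g).comp (cj h) := by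
      ext1 x; simp only [MonoidHom.comp_apply, cj_apply]; group
    rw [this]; exact hg.comp hh
  have key : ∀ g : G (FractionRing R), g 1 0 ≠ 0 → Zf (R := R) (cj g) := by
    intro g hg
    have h1 : g = X ((g 0 0 - 1) / g 1 0) * Y (g 1 0) * X ((g 1 1 - 1) / g 1 0) := by
      have := det4 g
      ext
      · simp; field_simp; ring
      · simp; field_simp; linear_combination -this
      · simp
      · simp; field_simp; ring
    rw [h1]
    exact hm _ _ (hm _ _ (H.Zf_X _) (H.Zf_Y _)) (H.Zf_X _)
  by_cases hc : g 1 0 = 0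
  · have h1 : g = Y (-1) * (Y 1 * g) := by rw [← mul_assoc, ← Y_add]; simp
    rw [h1]
    refine hm _ _ (H.Zf_Y _) (key _ ?_)
    have := det4 g
    rw [hc, mul_zero, sub_zero] at this
    simpa [hc] using left_ne_zero_of_mul_eq_one this
  · exact key g hc

/-- Diagonal conjugation by the square `f²` is an inner automorphism, by the matrix
`diag(f, f⁻¹)`. -/
theorem Hyp.Zf_sq (H : Hyp R n w) (f : (FractionRing R)ˣ) : Zf (R := R) (sig (f ^ 2)) := by
  have h := H.Zf_cj (mk4 (f : FractionRing R) 0 0 ↑f⁻¹ (by simp))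
  convert h using 1
  ext1 x
  rw [cj_apply]
  ext
  · simp; field_simp
  · simp; ring
  · simp; field_simp
  · simp; field_simp

/-- The image of `Del κ κ` in the quotient by the normal core is central. -/
theorem Hyp.cent (H : Hyp R n w) {k : R} {κ : ℕ} (hκ : κ ≠ 0)
    (hk : E (κ : R) ≤ (E k).normalCore) {g : G R} (hg : g ∈ Del (κ : R) κ) (h : G R) :
    cls k h * cls k g = cls k g * cls k h := by
  obtain ⟨κ', hκ', hz⟩ := H.Zf_cj (io h) κ hκ
  have := H.finN hκ'
  obtain ⟨e, he, γ, hγ, rfl⟩ := reduction_left (f := (κ' : R)) hg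
  obtain ⟨e', he', hee⟩ := hz γ hγ
  rw [cj_apply, ← map_inv, ← map_mul, ← map_mul] at hee
  have h1 := congrArg (cls k) (io_inj hee)
  rw [map_mul (cls k) e γ, cls_E hk he, one_mul]
  rw [map_mul, map_mul, map_mul (cls k) e' γ, cls_E hk he', one_mul, map_inv, mul_inv_eq_iff_eq_mul] at h1
  exact h1

end Triv

end SLU

namespace SLU

/-! ### Diagonal conjugation by odd primes -/

section Primes

set_option linter.unusedSectionVars false

variable {R : Type*} [CommRing R] [IsDomain R] [CharZero R] {n : ℕ} {w : Rˣ}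

/-- `B` is obtained from `A` by diagonal conjugation by the element `f` of `R`, which need not be
a unit. -/
def IsD (f : R) (A B : G R) : Prop :=
  B 0 0 = A 0 0 ∧ B 0 1 = f * A 0 1 ∧ A 1 0 = f * B 1 0 ∧ B 1 1 = A 1 1

theorem IsD.mul {f : R} {A B A' B' : G R} (h : IsD f A B) (h' : IsD f A' B') :
    IsD f (A * A') (B * B') := by
  obtain ⟨h1, h2, h3, h4⟩ := h
  obtain ⟨h1', h2', h3', h4'⟩ := h'
  refine ⟨?_, ?_, ?_, ?_⟩
  · simp only [mul00, h1, h2, h1', h3']; ring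
  · simp only [mul01, h1, h2, h2', h4']; ring
  · simp only [mul10, h3, h3', h1', h4]; ring
  · simp only [mul11, h3, h2', h4, h4']; ring

theorem isD_X (f s : R) : IsD f (X s) (X (f * s)) := by simp [IsD]
theorem isD_Y (f s : R) : IsD f (Y (f * s)) (Y s) := by simp [IsD]

/-- A nonzero element of `R` as a unit of the fraction field. -/
noncomputable def fu (f : R) (hf : f ≠ 0) : (FractionRing R)ˣ :=
  Units.mk0 (algebraMap R (FractionRing R) f) (by
    rwa [Ne, FaithfulSMul.algebraMap_eq_zero_iff])

@[simp] theorem fu_val (f : R) (hf : f ≠ 0) :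
    (fu f hf : FractionRing R) = algebraMap R (FractionRing R) f := rfl

theorem IsD.sig {f : R} (hf : f ≠ 0) {A B : G R} (h : IsD f A B) :
    sig (fu f hf) (io A) = io B := by
  obtain ⟨h1, h2, h3, h4⟩ := h
  ext
  · rw [sig00, io_apply, io_apply, h1]
  · rw [sig01, io_apply, io_apply, h2, map_mul, fu_val]
  · rw [sig10, io_apply, io_apply, h3, map_mul, ← fu_val f hf, Units.inv_mul_cancel_left]
  · rw [sig11, io_apply, io_apply, h4]

theorem isD_E2 {f κ : R} {e : G R} (he : e ∈ E2 κ (κ * f)) : ∃ e' ∈ E κ, IsD f e e' := by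
  induction he using Subgroup.closure_induction with
  | mem x hx =>
    obtain ⟨r, rfl | rfl⟩ := hx
    · exact ⟨X (f * (κ * r)), X_mem_E2 ⟨f * r, by ring⟩, isD_X _ _⟩
    · refine ⟨Y (κ * r), Y_mem_E2 (Dvd.intro _ rfl), ?_⟩
      rw [mul_right_comm, mul_comm]
      exact isD_Y _ _
  | one => exact ⟨1, one_mem _, by simp [IsD]⟩
  | mul x y _ _ hx hy =>
    obtain ⟨x', h1, h2⟩ := hx
    obtain ⟨y', h3, h4⟩ := hy
    exact ⟨x' * y', mul_mem h1 h3, h2.mul h4⟩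
  | inv x _ hx =>
    obtain ⟨x', h1, h2, h3, h4, h5⟩ := hx
    refine ⟨x'⁻¹, inv_mem h1, ?_⟩
    simp [IsD, h2, h3, h4, h5]

/-- Diagonal conjugation by `f` preserves classes, on its natural domain, once it is known to do
so on matrices of deep level. -/
theorem Hyp.cls_isD (H : Hyp R n w) {k : R} {κ : ℕ} (hκ : κ ≠ 0)
    (hk : E (κ : R) ≤ (E k).normalCore) {f : R} (hf : f ≠ 0) (hz : Zf (R := R) (sig (fu f hf)))
    {A B : G R} (hA : A ∈ Del (κ : R) (κ * f)) (hAB : IsD f A B) : cls k A = cls k B := by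
  obtain ⟨κ', hκ', h⟩ := hz κ hκ
  have := H.finN hκ'
  obtain ⟨e, he, γ, hγ, rfl⟩ := reduction_left (f := (κ' : R)) hA
  obtain ⟨e', he', hee⟩ := isD_E2 he
  obtain ⟨e'', he'', hγ'⟩ := h γ hγ
  have h1 := hAB.sig hf
  rw [map_mul, map_mul, hee.sig hf, hγ', ← map_mul] at h1
  rw [← io_inj h1, map_mul, map_mul, map_mul, cls_E hk he', cls_E hk he'',
    cls_E hk (E2_mono dvd_rfl (Dvd.intro _ rfl) he), one_mul, one_mul]

theorem cls_row {k : R} {κ : ℕ} (hk : E (κ : R) ≤ (E k).normalCore) {g h : G R}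
    (h0 : g 0 0 = h 0 0) (h1 : g 0 1 = h 0 1) (hg : (κ : R) ∣ g 1 0) (hh : (κ : R) ∣ h 1 0) :
    cls k g = cls k h := by
  rw [same_row h0 h1, map_mul, cls_E hk (Y_mem_E2 ((hh.mul_right _).sub (hg.mul_left _))), one_mul]

theorem cls_row_one {k : R} {κ : ℕ} (hk : E (κ : R) ≤ (E k).normalCore) {g : G R}
    (h0 : g 0 0 = 1) (h1 : (κ : R) ∣ g 0 1) (hg : (κ : R) ∣ g 1 0) : cls k g = 1 := by
  rw [cls_row hk (h := X (g 0 1)) (by simp [h0]) (by simp) hg (by simp)]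
  exact cls_E hk (X_mem_E2 h1)

/-- The case in which the first entry of the row is `1 - fy²`. -/
theorem Hyp.cls_special (H : Hyp R n w) {k : R} {κ : ℕ} (hκ : κ ≠ 0)
    (hk : E (κ : R) ≤ (E k).normalCore) {f y : R} (hf : (κ : R) ^ 2 ∣ f)
    {g h : G R} (hgh : IsD f g h) (ha : g 0 0 = 1 - f * y ^ 2) (hb : (κ : R) ∣ g 0 1)
    (hc : (κ : R) ∣ h 1 0) : cls k g = cls k h := by
  obtain ⟨h00, h01, h10, h11⟩ := hgh
  have hcg : (κ : R) ∣ g 1 0 := by rw [h10]; exact hc.mul_left _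
  rcases eq_or_ne y 0 with rfl | hy
  · have h1 : g 0 0 = 1 := by simpa using ha
    rw [cls_row_one hk h1 hb hcg, cls_row_one hk (h00.trans h1) (by rw [h01]; exact hb.mul_left _) hc]
  have hy2 : y ^ 2 ≠ 0 := pow_ne_zero _ hy
  have hz : Zf (R := R) (sig (fu (y ^ 2) hy2)) := by
    convert H.Zf_sq (fu y hy) using 2
    ext; simp
  have hdet := det4 g
  set g₅ := Y (-(h 1 0)) * h with hg₅
  have h5a : g₅ 0 0 = 1 - f * y ^ 2 := by rw [← ha]; simp [g₅, h00]
  have h5b : g₅ 0 1 = f * g 0 1 := by simp [g₅, h01]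
  have h5c : g₅ 1 0 = f * y ^ 2 * h 1 0 := by
    simp only [g₅, mul10, Y10, Y11, h00, ha]; ring
  have h5 : cls k g₅ = cls k h := by
    rw [hg₅, map_mul, cls_E hk (Y_mem_E2 hc.neg_right), one_mul]
  have hd5 := det4 g₅
  set g₆ := mk4 (g₅ 0 0) (y ^ 2 * g₅ 0 1) (f * h 1 0) (g₅ 1 1) (by
    rw [h5c] at hd5; linear_combination hd5) with hg₆
  have h56 : IsD (y ^ 2) g₅ g₆ := ⟨rfl, rfl, by rw [h5c]; simp [g₆]; ring, rfl⟩
  obtain ⟨f', hf'⟩ := hf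
  have h6 : cls k g₅ = cls k g₆ := by
    refine H.cls_isD hκ hk hy2 hz ⟨?_, ?_, ?_⟩ h56
    · rw [h5a, hf']; exact ⟨-f', by ring⟩
    · rw [h5b]; exact hb.mul_left _
    · rw [h5c, hf']; exact ⟨κ * f' * h 1 0, by ring⟩
  have h7 : cls k (g * X (-(g 0 1))) = cls k g₆ := by
    refine cls_row hk ?_ ?_ ?_ ?_
    · simp [g₆, h5a, ha]
    · simp only [g₆, mul01, X01, X11, mk4_01, h5b, ha]; ring
    · simpa using hcg
    · simp only [g₆, mk4_10]; exact hc.mul_left _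
  rw [← h5, h6, ← h7, map_mul, cls_E hk (X_mem_E2 hb.neg_right), mul_one]

/-- Representation of a residue class by a norm form: `b` modulo `ρ` can be replaced by a
`b₁ ≡ 1 (mod L)` for which some `β - y²` is divisible by `L²b₁`, where `fβ = 1 - ρ`. -/
theorem Hyp.norm_form (H : Hyp R n w) {ρ L : ℕ} (hρ : ρ ≠ 0) (hodd : Odd ρ)
    {f β σ b : R} (hfβ : f * β = 1 - ρ) (hβ : (L : R) ^ 2 ∣ β) (hσ : (ρ : R) ∣ f - σ ^ 2)
    (hb : IsCoprime b (ρ : R)) : ∃ b₁ y : R, (ρ : R) ∣ b₁ - b ∧ (L : R) ^ 2 * b₁ ∣ β - y ^ 2 := by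
  obtain ⟨j, hj⟩ := hodd
  obtain ⟨β', hβ'⟩ := hβ
  obtain ⟨τ, hτ⟩ := hσ
  have hjR : (ρ : R) = 2 * j + 1 := by rw [hj]; push_cast; ring
  -- `1 + j` is the inverse of `2` modulo `ρ`
  set x₀ : R := (1 + j) * (b + 1)
  set y₀ : R := (1 + j) * (σ * (b - 1))
  have h0 : (ρ : R) ∣ x₀ ^ 2 - β * y₀ ^ 2 - b := by
    refine ⟨(1 + j) ^ 2 * (b - 1) ^ 2 * (1 + β * τ) + b * (2 * j + 3), ?_⟩
    simp only [x₀, y₀]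
    linear_combination ((1 + (j : R)) ^ 2 * (b - 1) ^ 2 * β) * hτ
      - ((1 + (j : R)) ^ 2 * (b - 1) ^ 2) * hfβ - b * (2 * j + 3) * hjR
  obtain ⟨Y₁, hY₁, hYρ⟩ : ∃ Y₁ : R, Y₁ ≠ 0 ∧ (ρ : R) ∣ Y₁ - y₀ := by
    by_cases h : y₀ = 0
    · exact ⟨ρ, Nat.cast_ne_zero.2 hρ, by simp [h]⟩
    · exact ⟨y₀, h, by simp⟩
  -- the relation `fβ + ρ = 1` makes `ρ` and `L` coprime
  have hρL : (ρ : R) + L * (f * L * β') = 1 := by rw [hβ'] at hfβ; linear_combination hfβ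
  set X₁ : R := ρ + L * (f * L * β') * x₀ with hX₁
  obtain ⟨d, hd⟩ := h0
  obtain ⟨e, he⟩ := hYρ
  obtain ⟨p, q, hpq⟩ := hb
  have := H.fin _ hY₁
  have htop : Ideal.span {X₁} ⊔ Ideal.span {(ρ : R) * L} ⊔ Ideal.span {Y₁} = ⊤ := by
    rw [Ideal.eq_top_iff_one]
    set I := Ideal.span {X₁} ⊔ Ideal.span {(ρ : R) * L} ⊔ Ideal.span {Y₁}
    have i1 : X₁ ∈ I := Ideal.mem_sup_left (Ideal.mem_sup_left (Ideal.mem_span_singleton_self _))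
    have i2 : (ρ : R) * L ∈ I :=
      Ideal.mem_sup_left (Ideal.mem_sup_right (Ideal.mem_span_singleton_self _))
    have i3 : Y₁ ∈ I := Ideal.mem_sup_right (Ideal.mem_span_singleton_self _)
    rw [← Ideal.Quotient.eq_zero_iff_mem] at i1 i2 i3 ⊢
    set π := Ideal.Quotient.mk I
    rw [map_mul] at i2
    rw [hX₁, map_add, map_mul, map_mul] at i1
    have hρL' := congrArg π hρL
    rw [map_add, map_mul, map_one] at hρL'
    -- `ρ` lies in the ideal, since `ρ² = ρ·X₁` modulo `ρL` and `ρ` is prime to `L`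
    have hρ0 : π ρ = 0 := by
      linear_combination (-π (f * L * β') * (π x₀ - 1) ) * i2 + π ρ * i1 - π ρ * hρL'
    have hx0 : π x₀ = 0 := by
      linear_combination i1 - π x₀ * hρL' + (π x₀ - 1) * hρ0
    have he' := congrArg π he
    have hd' := congrArg π hd
    have hpq' := congrArg π hpq
    simp only [map_sub, map_mul, map_pow, map_add, map_one] at he' hd' hpq' ⊢
    have hy0 : π y₀ = 0 := by linear_combination -he' + i3 - π e * hρ0
    linear_combination -hpq' - π p * hd' + (π p * π x₀) * hx0 - π p * π β * π y₀ * hy0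
      + (π q - π p * π d) * hρ0
  obtain ⟨t, u, v, ht⟩ := exists_coprime_add htop
  set X₂ := X₁ + ρ * L * t with hX₂
  set b₁ := X₂ ^ 2 - β * Y₁ ^ 2 with hb₁
  have hX₂L : ∃ c, X₂ = 1 + L * c := by
    refine ⟨f * L * β' * (x₀ - 1) + ρ * t, ?_⟩
    rw [hX₂, hX₁]; linear_combination hρL
  obtain ⟨c, hc⟩ := hX₂L
  have hcop1 : IsCoprime (L : R) b₁ := by
    refine ⟨-(2 * c + L * c ^ 2 - L * β' * Y₁ ^ 2), 1, ?_⟩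
    rw [hb₁, hc, hβ']; ring
  have hcop2 : IsCoprime Y₁ b₁ := by
    have h1 : IsCoprime Y₁ (X₂ ^ 2) := (show IsCoprime Y₁ X₂ from ⟨v, u, by
      linear_combination ht⟩).pow_right
    have h2 : b₁ = X₂ ^ 2 + Y₁ * (-β * Y₁) := by rw [hb₁]; ring
    rw [h2]
    exact (IsCoprime.add_mul_left_right_iff).2 h1
  obtain ⟨a', c', hac⟩ := hcop1.mul_left hcop2
  refine ⟨b₁, L * (a' * X₂), ?_, ?_⟩
  · have e1 : X₂ = x₀ + ρ * (1 - x₀ + L * t) := by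
      rw [hX₂, hX₁]; linear_combination x₀ * hρL
    have e2 : Y₁ = y₀ + ρ * e := by linear_combination he
    refine ⟨d + (2 * x₀ * (1 - x₀ + L * t) + ρ * (1 - x₀ + L * t) ^ 2)
      - β * (2 * y₀ * e + ρ * e ^ 2), ?_⟩
    rw [hb₁, e1, e2]; linear_combination hd
  · refine (hcop1.pow_left (m := 2)).mul_dvd ?_ ?_
    · rw [hβ']; exact ⟨β' - (a' * X₂) ^ 2, by ring⟩
    · refine (hcop2.symm.pow_right (n := 2)).dvd_of_dvd_mul_left
        (⟨-1 + X₂ ^ 2 * c' * (2 - c' * b₁), ?_⟩ : b₁ ∣ Y₁ ^ 2 * (β - (L * (a' * X₂)) ^ 2))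
      have e3 : a' * (L * Y₁) = 1 - c' * b₁ := by linear_combination hac
      have e4 : Y₁ ^ 2 * (L * (a' * X₂)) ^ 2 = (1 - c' * b₁) ^ 2 * X₂ ^ 2 := by
        rw [← e3]; ring
      rw [mul_sub, e4]
      linear_combination -hb₁

theorem exists_sq_mod {r ρ : ℕ} (hr : r.Prime) (hr2 : r ≠ 2) (hρ : ρ.Prime) (h4 : ρ % 4 = 1)
    (h1 : ρ ≡ 1 [MOD r]) : ∃ s : ℕ, (ρ : R) ∣ (r : R) - (s : R) ^ 2 := by
  have := Fact.mk hr
  have := Fact.mk hρ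
  have h2 : IsSquare (r : ZMod ρ) := by
    rw [ZMod.exists_sq_eq_prime_iff_of_mod_four_eq_one h4 hr2, (ZMod.natCast_eq_natCast_iff _ _ _).2 h1]
    exact ⟨1, by simp⟩
  obtain ⟨s, hs⟩ := h2
  refine ⟨s.val, ?_⟩
  have h3 : r ≡ s.val ^ 2 [MOD ρ] := by
    rw [← ZMod.natCast_eq_natCast_iff, hs]; push_cast; rw [ZMod.natCast_zmod_val]; ring
  have := dvd_sub_of_modEq (R := R) h3
  push_cast at this
  exact this

/-- Diagonal conjugation by `rκ²` preserves classes at deep level. -/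
theorem Hyp.cls_prime (H : Hyp R n w) {k : R} {κ : ℕ} (hκ : κ ≠ 0)
    (hk : E (κ : R) ≤ (E k).normalCore) (h4 : 4 ∣ κ) {r : ℕ} (hr : r.Prime) (hr2 : r ≠ 2)
    {g h : G R} (hg : g ∈ Gam (((r * κ ^ 3) ^ 3 : ℕ) : R))
    (hgh : IsD ((r * κ ^ 2 : ℕ) : R) g h) : cls k g = cls k h := by
  set L := r * κ ^ 3 with hL
  set f : R := ((r * κ ^ 2 : ℕ) : R) with hf
  have hL0 : L ≠ 0 := mul_ne_zero hr.ne_zero (pow_ne_zero _ hκ)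
  have hLf : (L : R) = κ * f := by rw [hL, hf]; push_cast; ring
  have hf0 : f ≠ 0 := Nat.cast_ne_zero.2 (mul_ne_zero hr.ne_zero (pow_ne_zero _ hκ))
  have hgD : g ∈ Del (L : R) L := Gam_le_Del (by push_cast; exact ⟨L, by ring⟩) hg
  obtain ⟨b, Q, t, hQ, hLQ, htQ, ht1, hbL, hrow⟩ := H.rowDir hL0 hL0 hgD
  obtain ⟨ρ, hρQ, hρ, hρt⟩ := exists_prime_modEq hQ htQ 2
  obtain ⟨e, he, h00, h01⟩ := hrow ρ hρt
  have hρ1 : ρ ≡ 1 [MOD L ^ 2 * L] := (hρt.of_dvd hLQ).trans ht1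
  have hLL : L ∣ L ^ 2 * L := Dvd.intro_left _ rfl
  have hρ4 : ρ % 4 = 1 :=
    hρ1.of_dvd ((h4.trans (hL ▸ ((dvd_pow_self κ three_ne_zero).mul_left _))).trans hLL)
  obtain ⟨s, hs⟩ := exists_sq_mod (R := R) hr hr2 hρ hρ4
    (hρ1.of_dvd ((Dvd.intro _ rfl : r ∣ L).trans hLL))
  obtain ⟨β₀, hβ₀⟩ := dvd_sub_of_modEq (R := R) hρ1.symm
  have hmain : ∀ e ∈ E (L : R), ∃ e' ∈ E (κ : R), IsD f e e' := fun e he => by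
    refine isD_E2 (E2_mono ?_ ?_ he)
    · rw [hLf]; exact Dvd.intro _ rfl
    · rw [hLf]
  have hκL : (κ : R) ∣ L := by rw [hLf]; exact Dvd.intro _ rfl
  have hcopb : IsCoprime b (ρ : R) := by
    have := (row_coprime (g * e)).symm
    rw [h00, h01] at this
    exact this.of_mul_left_right
  obtain ⟨b₁, y, ⟨x₁, hb₁⟩, y₁, hy⟩ := H.norm_form (L := L) (f := f) (β := L ^ 2 * (κ * β₀))
    (σ := κ * s) hρ.ne_zero (hρ.odd_of_ne_two (by omega))
    (by push_cast at hβ₀; rw [hβ₀, hLf]; ring) (Dvd.intro _ rfl)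
    (by
      obtain ⟨c, hc⟩ := hs
      exact ⟨κ ^ 2 * c, by rw [hf]; push_cast; linear_combination κ ^ 2 * hc⟩) hcopb
  -- elementary moves turning the row `(ρ, Lb)` into `(1 - fy², Lb₁)`
  set x := e * (X (L * x₁) * Y (L * (f * y₁))) with hx
  have hxE : x ∈ E (L : R) := mul_mem he
    (mul_mem (X_mem_E2 (Dvd.intro _ rfl)) (Y_mem_E2 (Dvd.intro _ rfl)))
  obtain ⟨x', hx'E, hxx'⟩ := hmain x hxE
  have hgx := hgh.mul hxx'
  have hxe : g * x = (g * e) * (X (L * x₁) * Y (L * (f * y₁))) := by rw [hx, mul_assoc]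
  have hgxD : g * x ∈ Del (L : R) L := mul_mem hgD (E2_le_Del _ _ hxE)
  have key := H.cls_special hκ hk (f := f) (y := y) (by rw [hf]; push_cast; exact ⟨r, by ring⟩) hgx
    (by
      rw [hxe]
      simp only [mul00 (g * e), mul00 (X _), mul10 (X _), h00, h01, X00, X01, X10, X11, Y00, Y10]
      push_cast at hβ₀
      linear_combination (L ^ 2 * f * y₁) * hb₁.symm + f * hy.symm - hβ₀ - (L ^ 2 * β₀) * hLf)
    (hκL.trans hgxD.2.1)
    (by
      obtain ⟨c, hc⟩ := hgxD.2.2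
      have h5 := hgx.2.2.1
      rw [hc, hLf] at h5
      exact ⟨c, (mul_left_cancel₀ hf0 (by rw [← h5]; ring)).symm⟩)
  rwa [map_mul (cls k) g x, map_mul (cls k) h x', cls_E hk hx'E,
    cls_E hk (E2_mono hκL hκL hxE), mul_one, mul_one] at key

/-- Diagonal conjugation by an odd prime `r`: it differs from the one by `rκ²` by a square. -/
theorem Hyp.Zf_prime (H : Hyp R n w) {r : ℕ} (hr : r.Prime) (hr2 : r ≠ 2) :
    Zf (R := R) (sig (fu (r : R) (Nat.cast_ne_zero.2 hr.ne_zero))) := by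
  intro k hk
  obtain ⟨κ₀, hκ₀, hc₀⟩ := H.core hk
  set κ := 4 * κ₀ with hκdef
  have hκ : κ ≠ 0 := mul_ne_zero four_ne_zero hκ₀
  have hd : (κ₀ : R) ∣ (κ : R) := by rw [hκdef]; push_cast; exact Dvd.intro_left _ rfl
  have hc : E (κ : R) ≤ (E (k : R)).normalCore := (E2_mono hd hd).trans hc₀
  have hf0 : ((r * κ ^ 2 : ℕ) : R) ≠ 0 :=
    Nat.cast_ne_zero.2 (mul_ne_zero hr.ne_zero (pow_ne_zero _ hκ))
  have hκR : (κ : R) ≠ 0 := Nat.cast_ne_zero.2 hκ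
  set L := (r * κ ^ 3) ^ 3 with hL
  have hL0 : L ≠ 0 := pow_ne_zero _ (mul_ne_zero hr.ne_zero (pow_ne_zero _ hκ))
  obtain ⟨κ', hκ', hz⟩ := H.Zf_sq (fu (κ : R) hκR)⁻¹ (k * L) (mul_ne_zero hk hL0)
  refine ⟨κ' * L, mul_ne_zero hκ' hL0, fun g hg => ?_⟩
  rw [Nat.cast_mul] at hg
  obtain ⟨e, he, hee⟩ := hz g (Gam_mono (Dvd.intro _ rfl) hg)
  rw [Nat.cast_mul] at he
  have hx : e * g ∈ Gam (L : R) := mul_mem (E_le_Gam (Dvd.intro_left _ rfl) he)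
    (Gam_mono (Dvd.intro_left _ rfl) hg)
  set x := e * g with hxdef
  obtain ⟨-, -, ⟨c, hc'⟩, -⟩ := mem_Gam.1 hx
  have hdx := det4 x
  have hLR : (L : R) = ((r * κ ^ 2 : ℕ) : R) * (r ^ 2 * κ ^ 7) := by
    rw [hL]; push_cast; ring
  set h := mk4 (x 0 0) (((r * κ ^ 2 : ℕ) : R) * x 0 1) (r ^ 2 * κ ^ 7 * c) (x 1 1) (by
    rw [hc', hLR] at hdx; linear_combination hdx) with hh
  have hxh : IsD ((r * κ ^ 2 : ℕ) : R) x h := ⟨rfl, rfl, by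
    rw [hc', hLR]; simp only [h, mk4_10]; ring, rfl⟩
  have h1 := H.cls_prime hκ hc (Dvd.intro _ rfl) hr hr2 hx hxh
  rw [eq_comm, cls_eq] at h1
  refine ⟨h * x⁻¹ * e, mul_mem (Subgroup.normalCore_le _ h1)
    (E2_mono (Dvd.intro _ rfl) (Dvd.intro _ rfl) he), ?_⟩
  have h2 : fu (r : R) (Nat.cast_ne_zero.2 hr.ne_zero) =
      fu ((r * κ ^ 2 : ℕ) : R) hf0 * (fu (κ : R) hκR)⁻¹ ^ 2 := by
    rw [inv_pow, eq_mul_inv_iff_mul_eq]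
    ext; simp
  rw [h2, sig_mul, hee, hxh.sig hf0, mul_assoc, ← hxdef, inv_mul_cancel_right]

end Primes

end SLU

namespace SLU

/-! ### Finiteness of the quotient -/

section Count

set_option linter.unusedSectionVars false

variable {R : Type*} [CommRing R] [IsDomain R] [CharZero R] {n : ℕ} {w : Rˣ}

/-- The second entry of the first row of a matrix of `Del κ κ` can be moved by `E κ` to `κp` for
all `p` in a residue class whose modulus is prime to any given number. -/
theorem Hyp.colDir (H : Hyp R n w) {κ m : ℕ} (hκ : κ ≠ 0) (hm : m ≠ 0) {g : G R}
    (hg : g ∈ Del (κ : R) κ) : ∃ N z : ℕ, N ≠ 0 ∧ N.Coprime m ∧ z.Coprime N ∧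
      ∀ p : ℕ, p ≡ z [MOD N] → ∃ e ∈ E (κ : R), (g * e) 0 1 = κ * p := by
  obtain ⟨⟨a', ha⟩, ⟨b, hb⟩, -⟩ := hg
  have hco : IsCoprime (κ ^ 2 * b) (g 0 0) := by
    have h1 : IsCoprime (κ : R) (g 0 0) := ⟨-(κ * a'), 1, by linear_combination ha⟩
    have h2 := (row_coprime g).symm
    rw [hb] at h2
    exact (h1.pow_left).mul_left h2.of_mul_left_right
  obtain ⟨x, hx, hz⟩ := H.cyc _ _ hco m hm
  set a := g 0 0 + κ ^ 2 * b * x with hadef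
  obtain ⟨N, hN0, hN⟩ := H.char (H.ne_zero_of_cyc hz)
  have hab : IsCoprime a b := by
    have h2 := row_coprime g
    rw [hb] at h2
    have h3 := h2.of_mul_right_right
    have h4 : a = g 0 0 + b * (κ ^ 2 * x) := by rw [hadef]; ring
    rw [h4]
    exact h3.add_mul_left_left _
  obtain ⟨z, hz1⟩ := hz b
  obtain ⟨p, q, hpq⟩ := hab
  obtain ⟨z', hz2⟩ := hz q
  have hzz : (N : ℤ) ∣ z * z' - 1 := by
    rw [← hN]
    push_cast
    obtain ⟨c1, hc1⟩ := hz1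
    obtain ⟨c2, hc2⟩ := hz2
    exact ⟨-(p + c1 * q + z * c2), by linear_combination (-q) * hc1 - z * hc2 + hpq⟩
  obtain ⟨z₁, hz₁⟩ : ∃ z₁ : ℕ, (N : ℤ) ∣ z₁ - z := by
    refine ⟨(z % N).toNat, ?_⟩
    rw [Int.toNat_of_nonneg (Int.emod_nonneg _ (by exact_mod_cast hN0))]
    exact ⟨-(z / N), by have := Int.mul_ediv_add_emod z N; linarith⟩
  refine ⟨N, z₁, hN0, H.coprime_char hN0 hN hx, ?_, fun P hP => ?_⟩
  · rw [← Nat.isCoprime_iff_coprime]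
    obtain ⟨c1, hc1⟩ := hzz
    obtain ⟨c2, hc2⟩ := hz₁
    exact ⟨z', -(c1 + c2 * z'), by linear_combination z' * hc2 + hc1⟩
  · have h2 : a ∣ ((P - z : ℤ) : R) := by
      rw [hN]
      have := (Nat.modEq_iff_dvd.1 hP.symm).add hz₁
      simpa using this
    obtain ⟨c1, hc1⟩ := hz1
    obtain ⟨c2, hc2⟩ := h2
    push_cast at hc2
    refine ⟨Y (κ * x) * X (κ * (c2 - c1)), mul_mem (Y_mem_E2 (Dvd.intro _ rfl))
      (X_mem_E2 (Dvd.intro _ rfl)), ?_⟩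
    simp [hb]
    linear_combination (-(κ : R) * (c2 - c1)) * hadef + κ * hc1 - κ * hc2

theorem Hyp.colDir_finset (H : Hyp R n w) {κ m : ℕ} (hκ : κ ≠ 0) (hm : m ≠ 0) (s : Finset (G R)) :
    (∀ g ∈ s, g ∈ Del (κ : R) κ) → ∃ N z : ℕ, N ≠ 0 ∧ N.Coprime m ∧ z.Coprime N ∧
      ∀ p : ℕ, p ≡ z [MOD N] → ∀ g ∈ s, ∃ e ∈ E (κ : R), (g * e) 0 1 = κ * p := by
  classical
  induction s using Finset.induction_on with
  | empty => exact fun _ => ⟨1, 1, one_ne_zero, by simp, by simp, by simp⟩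
  | insert g s _ ih =>
    intro hs
    obtain ⟨N₁, z₁, h1, h2, h3, h4⟩ := ih fun g hg => hs g (Finset.mem_insert_of_mem hg)
    obtain ⟨N₂, z₂, h1', h2', h3', h4'⟩ := H.colDir hκ (mul_ne_zero hm h1)
      (hs g (Finset.mem_insert_self _ _))
    obtain ⟨z, hz1, hz2⟩ := Nat.chineseRemainder (h2'.coprime_mul_left_right).symm z₁ z₂
    refine ⟨N₁ * N₂, z, mul_ne_zero h1 h1', Nat.Coprime.mul_left h2 h2'.coprime_mul_right_right,
      Nat.Coprime.mul_right ?_ ?_, fun p hp x hx => ?_⟩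
    · rw [Nat.Coprime, hz1.gcd_eq]; exact h3
    · rw [Nat.Coprime, hz2.gcd_eq]; exact h3'
    · rcases Finset.mem_insert.1 hx with rfl | hx
      · exact h4' p ((hp.of_dvd (Dvd.intro_left _ rfl)).trans hz2)
      · exact h4 p ((hp.of_dvd (Dvd.intro _ rfl)).trans hz1) x hx

/-- The matrices of `Del κ κ` whose lower left entry is divisible by `κℓ`. -/
def D0 (κ ℓ : R) : Subgroup (G R) where
  carrier := {A | A ∈ Del κ κ ∧ κ * ℓ ∣ A 1 0}
  one_mem' := ⟨one_mem _, by simp⟩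
  mul_mem' := by
    rintro A B ⟨h1, h2⟩ ⟨h3, h4⟩
    refine ⟨mul_mem h1 h3, ?_⟩
    rw [mul10]
    exact (h2.mul_right _).add (h4.mul_left _)
  inv_mem' := by
    rintro A ⟨h1, h2⟩
    exact ⟨inv_mem h1, by rw [inv10]; exact h2.neg_right⟩

theorem exists_isD {κ ℓ : R} (A : D0 κ ℓ) : ∃ B ∈ Del κ κ, IsD ℓ A.1 B := by
  obtain ⟨A, ⟨h1, h2, h3⟩, c, hc⟩ := A
  have h := det4 A
  refine ⟨mk4 (A 0 0) (ℓ * A 0 1) (κ * c) (A 1 1) (by rw [hc] at h; linear_combination h),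
    ⟨h1, h2.mul_left _, Dvd.intro _ rfl⟩, rfl, rfl, ?_, rfl⟩
  simp only [mk4_10, hc]; ring

/-- Diagonal conjugation by `ℓ` as a homomorphism. -/
noncomputable def dl {κ ℓ : R} (hl : ℓ ≠ 0) : D0 κ ℓ →* G R :=
  MonoidHom.mk' (fun A => (exists_isD A).choose) fun A B => by
    have h1 := (exists_isD (A * B)).choose_spec.2
    have h2 := (exists_isD A).choose_spec.2.mul (exists_isD B).choose_spec.2
    apply io_inj
    rw [← h1.sig hl, ← h2.sig hl]
    rfl

theorem dl_mem {κ ℓ : R} (hl : ℓ ≠ 0) (A : D0 κ ℓ) : dl hl A ∈ Del κ κ :=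
  (exists_isD A).choose_spec.1
theorem dl_isD {κ ℓ : R} (hl : ℓ ≠ 0) (A : D0 κ ℓ) : IsD ℓ A.1 (dl hl A) :=
  (exists_isD A).choose_spec.2

/-- Reduction of the upper left entry modulo `ℓ`. -/
def chi (κ ℓ : R) : D0 κ ℓ →* R ⧸ Ideal.span {ℓ} where
  toFun A := Ideal.Quotient.mk _ (A.1 0 0)
  map_one' := by simp
  map_mul' A B := by
    rw [← map_mul, Ideal.Quotient.eq, Ideal.mem_span_singleton]
    change ℓ ∣ (A.1 * B.1) 0 0 - _
    rw [mul00, add_sub_cancel_left]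
    exact ((Dvd.intro_left _ rfl).trans B.2.2).mul_left _

/-- The key subgroup: its order is controlled by the prime `ℓ`, and it contains the classes of all
matrices whose first row can be moved to have second entry `κℓ`. -/
theorem Hyp.exists_P (H : Hyp R n w) {k : R} {κ : ℕ} (hκ : κ ≠ 0)
    (hk : E (κ : R) ≤ (E k).normalCore) {ℓ : ℕ} (hl : ℓ.Prime) (hl2 : ℓ ≠ 2)
    (hlκ : ℓ.Coprime κ) : ∃ P : Subgroup (G R ⧸ (E k).normalCore), Nat.card P ∣ ee n ℓ ∧
      (∀ x ∈ P, ∃ A ∈ Del (κ : R) κ, x = cls k A) ∧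
      ∀ g ∈ Del (κ : R) κ, ∀ e ∈ E (κ : R), (g * e) 0 1 = κ * ℓ → cls k g ∈ P := by
  have hl0 : (ℓ : R) ≠ 0 := Nat.cast_ne_zero.2 hl.ne_zero
  let Θ : D0 (κ : R) ℓ →* G R ⧸ (E k).normalCore :=
    MonoidHom.mk' (fun A => cls k (dl hl0 A * A.1⁻¹)) fun A B => by
      have h1 := H.cent hκ hk A.2.1 (dl hl0 B * B.1⁻¹)
      rw [map_mul (dl hl0), Subgroup.coe_mul, mul_inv_rev, mul_assoc, map_mul, ← mul_assoc (dl hl0 B),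
        map_mul (cls k) _ (A.1)⁻¹, map_inv (cls k) A.1, map_mul (cls k) (dl hl0 A) _, map_inv,
        mul_assoc]
      congr 1
      rw [eq_inv_mul_iff_mul_eq, ← mul_assoc, ← h1, mul_inv_cancel_right]
  have hker : ((chi (κ : R) ℓ).toHomUnits).ker ≤ Θ.ker := by
    intro A hA
    have h1 : chi (κ : R) ℓ A = 1 := by
      rw [MonoidHom.mem_ker] at hA
      have := congrArg Units.val hA
      simpa using this
    have h2 : (ℓ : R) ∣ A.1 0 0 - 1 := by
      rw [← Ideal.mem_span_singleton, ← Ideal.Quotient.eq]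
      exact h1.trans (map_one _).symm
    have h3 : A.1 ∈ Del (κ : R) (κ * ℓ) := by
      refine ⟨?_, A.2.1.2.1, A.2.2⟩
      rw [← mul_assoc]
      refine IsCoprime.mul_dvd ?_ A.2.1.1 h2
      have := isCoprime_cast (R := R) hlκ.symm
      exact this.mul_left this
    have h4 := H.cls_isD hκ hk hl0 (H.Zf_prime hl hl2) h3 (dl_isD hl0 A)
    change cls k (dl hl0 A * A.1⁻¹) = 1
    rw [map_mul, map_inv, h4, mul_inv_cancel]
  refine ⟨Θ.range, ?_, ?_, ?_⟩
  · rw [← Subgroup.index_ker]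
    refine (Subgroup.index_dvd_of_le hker).trans ?_
    rw [Subgroup.index_ker]
    exact (Subgroup.card_subgroup_dvd_card _).trans (H.units_card hl)
  · rintro _ ⟨A, rfl⟩
    exact ⟨_, mul_mem (dl_mem hl0 A) (inv_mem A.2.1), rfl⟩
  · intro g hg e he hge
    have hD : g * e ∈ Del (κ : R) κ := mul_mem hg (E2_le_Del _ _ he)
    obtain ⟨⟨a', ha⟩, -, hc⟩ := hD
    have hdet := det4 (g * e)
    set h := g * e with hh
    set A : G R := mk4 (h 0 0) κ (ℓ * h 1 0) (h 1 1) (by rw [hge] at hdet; linear_combination hdet)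
    have hAD : A ∈ Del (κ : R) κ := ⟨⟨a', ha⟩, dvd_rfl, hc.mul_left _⟩
    have hA0 : A ∈ D0 (κ : R) ℓ := ⟨hAD, by
      rw [mul_comm]; exact mul_dvd_mul dvd_rfl hc⟩
    have hAh : IsD (ℓ : R) A h := ⟨rfl, by rw [hge]; simp only [A, mk4_01]; ring, rfl, rfl⟩
    have h1 : dl hl0 ⟨A, hA0⟩ = h := by
      apply io_inj
      rw [← (dl_isD hl0 _).sig hl0, ← hAh.sig hl0]
    have h2 : cls k A = 1 := by
      have h3 : cls k (A * Y (-(κ * a'))) = 1 := by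
        refine cls_row_one hk ?_ ?_ ?_
        · simp [A]; linear_combination ha
        · simp [A]
        · rw [mul10]
          exact ((hc.mul_left _).mul_right _).add
            ((Dvd.intro _ rfl : (κ : R) ∣ κ * a').neg_right.mul_left _)
      rwa [map_mul, cls_E hk (Y_mem_E2 (Dvd.intro _ rfl : (κ : R) ∣ κ * a').neg_right),
        mul_one] at h3
    refine ⟨⟨A, hA0⟩, ?_⟩
    change cls k (dl hl0 ⟨A, hA0⟩ * A⁻¹) = _
    rw [h1, map_mul, map_inv, h2, inv_one, mul_one, hh, map_mul, cls_E hk he, mul_one]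

theorem cc_coprime (n : ℕ) : (cc n).Coprime (MM n ^ 2) := by
  apply Nat.coprime_of_dvd
  intro lam hl h1 h2
  have h3 := hl.dvd_of_dvd_pow h2
  obtain ⟨c, hc, hcc, -⟩ := exists_control n lam hl
  rw [hcc h3, mu, if_pos h3] at hc
  exact (Nat.not_coprime_of_dvd_of_dvd hl.one_lt h1 h2) hc

theorem dvd_of_fact {a b : ℕ} (ha : a ≠ 0) (hb : b ≠ 0)
    (h : ∀ p, p.Prime → a.factorization p ≤ b.factorization p) : a ∣ b := by
  rw [← Nat.factorization_le_iff_dvd ha hb]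
  intro p
  by_cases hp : p.Prime
  · exact h p hp
  · simp [Nat.factorization_eq_zero_of_not_prime _ hp]

/-- Every class of `Del κ κ` has order dividing `MM n`. -/
theorem Hyp.order_dvd (H : Hyp R n w) {k : R} {κ : ℕ} (hκ : κ ≠ 0)
    (hk : E (κ : R) ≤ (E k).normalCore) {g : G R} (hg : g ∈ Del (κ : R) κ) :
    orderOf (cls k g) ∣ MM n := by
  have key : ∀ lam, lam.Prime → orderOf (cls k g) ≠ 0 ∧
      (orderOf (cls k g)).factorization lam ≤ (MM n).factorization lam := by
    intro lam hlam
    obtain ⟨c, hc, -, hctl⟩ := exists_control n lam hlam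
    obtain ⟨N, z, hN, hNm, hz, hrow⟩ := H.colDir hκ (mu_ne (n := n) hlam) hg
    obtain ⟨t, ht1, ht2⟩ := Nat.chineseRemainder hNm z c
    obtain ⟨ℓ, hℓ, hp, hℓt⟩ := exists_prime_modEq (a := t) (mul_ne_zero hN (mu_ne (n := n) hlam))
      (Nat.Coprime.mul_right (by rw [Nat.Coprime, ht1.gcd_eq]; exact hz)
        (by rw [Nat.Coprime, ht2.gcd_eq]; exact hc)) (κ + lam + 2)
    obtain ⟨P, hP, -, hPg⟩ := H.exists_P hκ hk hp (by omega)
      (Nat.coprime_of_lt_prime hκ (by omega) hp)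
    obtain ⟨e, he, hge⟩ := hrow ℓ ((hℓt.of_dvd (Dvd.intro _ rfl)).trans ht1)
    have h1 : orderOf (cls k g) ∣ ee n ℓ :=
      (Subgroup.orderOf_dvd_natCard P (hPg g hg e he hge)).trans hP
    refine ⟨ne_zero_of_dvd_ne_zero (ee_ne hp) h1, le_trans ?_ (hctl ℓ hp (by omega)
      (Or.inl ((hℓt.of_dvd (Dvd.intro_left _ rfl)).trans ht2)))⟩
    exact (Nat.factorization_le_iff_dvd (ne_zero_of_dvd_ne_zero (ee_ne hp) h1) (ee_ne hp)).2 h1 lam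
  exact dvd_of_fact (key 2 Nat.prime_two).1 (MM_ne n) fun p hp => (key p hp).2

/-- Any finite set of classes of `Del κ κ` lies in a subgroup of order dividing `MM n`. -/
theorem Hyp.finset_P (H : Hyp R n w) {k : R} {κ : ℕ} (hκ : κ ≠ 0)
    (hk : E (κ : R) ≤ (E k).normalCore) {s : Finset (G R)} (hs : ∀ g ∈ s, g ∈ Del (κ : R) κ) :
    ∃ P : Subgroup (G R ⧸ (E k).normalCore), Nat.card P ∣ MM n ∧ ∀ g ∈ s, cls k g ∈ P := by
  have hM : MM n ^ 2 ≠ 0 := pow_ne_zero _ (MM_ne n)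
  obtain ⟨N, z, hN, hNm, hz, hrow⟩ := H.colDir_finset hκ hM s hs
  obtain ⟨t, ht1, ht2⟩ := Nat.chineseRemainder hNm z (cc n)
  obtain ⟨ℓ, hℓ, hp, hℓt⟩ := exists_prime_modEq (a := t) (mul_ne_zero hN hM)
    (Nat.Coprime.mul_right (by rw [Nat.Coprime, ht1.gcd_eq]; exact hz)
      (by rw [Nat.Coprime, ht2.gcd_eq]; exact cc_coprime n)) (κ + MM n + 2)
  obtain ⟨P, hP, hPA, hPg⟩ := H.exists_P hκ hk hp (by omega)
    (Nat.coprime_of_lt_prime hκ (by omega) hp)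
  have hP0 : Nat.card P ≠ 0 := ne_zero_of_dvd_ne_zero (ee_ne hp) hP
  have : Finite P := Nat.finite_of_card_ne_zero hP0
  refine ⟨P, dvd_of_fact hP0 (MM_ne n) fun lam hlam => ?_, fun g hg => ?_⟩
  · by_cases hlM : lam ∣ MM n
    · obtain ⟨c, -, hcc, hctl⟩ := exists_control n lam hlam
      have h1 := Nat.le_of_dvd (Nat.pos_of_ne_zero (MM_ne n)) hlM
      refine le_trans ((Nat.factorization_le_iff_dvd hP0 (ee_ne hp)).2 hP lam)
        (hctl ℓ hp (by omega) (Or.inl ?_))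
      rw [hcc hlM, mu, if_pos hlM]
      exact (hℓt.of_dvd (Dvd.intro_left _ rfl)).trans ht2
    · -- by Cauchy's theorem, such a prime would be the order of an element of `P`
      rw [Nat.factorization_eq_zero_of_not_dvd]
      · exact Nat.zero_le _
      intro hd
      have := Fact.mk hlam
      obtain ⟨x, hx⟩ := exists_prime_orderOf_dvd_card' lam hd
      obtain ⟨A, hA, hxA⟩ := hPA x x.2
      rw [← Subgroup.orderOf_coe, hxA] at hx
      exact hlM (hx ▸ H.order_dvd hκ hk hA)
  · obtain ⟨e, he, hge⟩ := hrow ℓ ((hℓt.of_dvd (Dvd.intro _ rfl)).trans ht1) g hg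
    exact hPg g (hs g hg) e he hge

/-- The image of a congruence subgroup in the quotient by the normal core has at most `MM n`
elements, since any finite subset of it lies in a subgroup of such order. -/
theorem Hyp.finiteIndex (H : Hyp R n w) {k : ℕ} (hk : k ≠ 0) : (E (k : R)).FiniteIndex := by
  obtain ⟨κ, hκ, hc⟩ := H.core hk
  have hκ2 : κ ^ 2 ≠ 0 := pow_ne_zero _ hκ
  have := H.finN hκ2
  have hfi : (Gam ((κ ^ 2 : ℕ) : R)).FiniteIndex := finiteIndex_Gam
  set Γ := Gam ((κ ^ 2 : ℕ) : R) with hΓ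
  have hΓD : ∀ g ∈ Γ, g ∈ Del (κ : R) κ := fun g hg =>
    Gam_le_Del (by push_cast; rw [pow_two]) hg
  have hfin : (Γ.map (cls (k : R)) : Set (G R ⧸ (E (k : R)).normalCore)).Finite := by
    by_contra hinf
    obtain ⟨t, ht, htc⟩ := Set.Infinite.exists_subset_card_eq hinf (MM n + 1)
    choose! f hf using (fun x (hx : x ∈ t) => ht hx : ∀ x ∈ t, ∃ g, g ∈ Γ ∧ cls (k : R) g = x)
    classical
    obtain ⟨P, hP, hPs⟩ := H.finset_P hκ hc (s := t.image f) (fun g hg => by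
      obtain ⟨x, hx, rfl⟩ := Finset.mem_image.1 hg
      exact hΓD _ (hf x hx).1)
    have hP0 : Nat.card P ≠ 0 := ne_zero_of_dvd_ne_zero (MM_ne n) hP
    have : Finite P := Nat.finite_of_card_ne_zero hP0
    have h1 : (t : Set (G R ⧸ (E (k : R)).normalCore)) ⊆ P := fun x hx => by
      have := hPs (f x) (Finset.mem_image_of_mem f hx)
      rwa [(hf x hx).2] at this
    have h2 := Set.ncard_le_ncard h1 (Set.toFinite _)
    rw [Set.ncard_coe_finset, htc] at h2
    have h3 : (P : Set (G R ⧸ (E (k : R)).normalCore)).ncard = Nat.card P := rfl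
    have := Nat.le_of_dvd (Nat.pos_of_ne_zero (MM_ne n)) hP
    omega
  have : Finite (Γ.map (cls (k : R))) := hfin
  have hidx : (Γ.map (cls (k : R))).index ≠ 0 :=
    ne_zero_of_dvd_ne_zero hfi.index_ne_zero
      (Subgroup.index_map_dvd Γ (QuotientGroup.mk'_surjective _))
  have hcard : Nat.card (G R ⧸ (E (k : R)).normalCore) ≠ 0 := by
    rw [← (Γ.map (cls (k : R))).card_mul_index]
    exact mul_ne_zero Nat.card_pos.ne' hidx
  have hN : (E (k : R)).normalCore.FiniteIndex := ⟨hcard⟩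
  exact Subgroup.finiteIndex_of_le (Subgroup.normalCore_le _)

end Count

end SLU

namespace SLU

/-! ### Arithmetic of localized orders -/

section Localized

set_option linter.unusedSectionVars false

/-- `R` is presented as a ring of fractions of `B` inside the field `K`, and `e` generates the
additive group of `B`. -/
structure Loc {B R K : Type*} [CommRing B] [CommRing R] [Field K] {n : ℕ}
    (A : B →+* R) (ι : R →+* K) (e : Fin n → B) : Prop where
  inj : Function.Injective ι
  frac : ∀ r : R, ∃ s b : B, IsUnit (A s) ∧ r * A s = A b
  gen : ∀ b : B, ∃ z : Fin n → ℤ, b = ∑ l, (z l : B) * e l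
  fieldFrac : ∀ x : K, ∃ b c : B, c ≠ 0 ∧ x * ι (A c) = ι (A b)

variable {B R K : Type*} [CommRing B] [IsDomain B] [CommRing R] [IsDomain R] [CharZero R]
  [Field K] [NumberField K] {n : ℕ} {A : B →+* R} {ι : R →+* K} {e : Fin n → B}

theorem Loc.integral (L : Loc A ι e) : Algebra.IsIntegral ℤ B := by
  classical
  have : Module.Finite ℤ B := by
    refine ⟨⟨Finset.univ.image e, ?_⟩⟩
    rw [eq_top_iff]
    rintro b -
    obtain ⟨z, rfl⟩ := L.gen b
    refine Submodule.sum_mem _ fun l _ => ?_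
    rw [← zsmul_eq_mul]
    exact Submodule.smul_mem _ _ (Submodule.subset_span (by simp))
  infer_instance

theorem Loc.dvdB (L : Loc A ι e) {b : B} (hb : b ≠ 0) : ∃ N : ℕ, N ≠ 0 ∧ b ∣ (N : B) := by
  have := L.integral
  have h := Ideal.comap_ne_bot_of_integral_mem (R := ℤ) hb (Ideal.mem_span_singleton_self b)
    (Algebra.IsIntegral.isIntegral b)
  obtain ⟨z, hz, hz0⟩ := Submodule.exists_mem_ne_zero_of_ne_bot h
  refine ⟨z.natAbs, by simpa using hz0, ?_⟩
  have hz' : b ∣ (z : B) := by simpa [Ideal.mem_comap, Ideal.mem_span_singleton] using hz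
  rcases Int.natAbs_eq z with h | h
  · rw [h] at hz'; simpa using hz'
  · rw [h] at hz'; simpa using hz'

theorem Loc.dvd (L : Loc A ι e) {r : R} (hr : r ≠ 0) : ∃ N : ℕ, N ≠ 0 ∧ r ∣ (N : R) := by
  obtain ⟨s, b, hs, hb⟩ := L.frac r
  have hb0 : b ≠ 0 := by
    rintro rfl
    rw [map_zero] at hb
    exact (mul_ne_zero hr hs.ne_zero) hb
  obtain ⟨N, hN, c, hc⟩ := L.dvdB hb0
  refine ⟨N, hN, A s * A c, ?_⟩
  rw [← mul_assoc, hb, ← map_mul, ← hc, map_natCast]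

/-- The quotient of `R` by `N` is covered by the reductions of the `N ^ n` combinations
of the generators of `B` with coefficients in `[0, N)`. -/
theorem Loc.cover (L : Loc A ι e) {N : ℕ} (hN : N ≠ 0) :
    Function.Surjective (fun z : Fin n → Fin N =>
      Ideal.Quotient.mk (Ideal.span {(N : R)}) (A (∑ l, ((z l : ℕ) : B) * e l))) := by
  set π := Ideal.Quotient.mk (Ideal.span {(N : R)})
  set F := fun z : Fin n → Fin N => π (A (∑ l, ((z l : ℕ) : B) * e l)) with hF
  have hπN : π (N : R) = 0 := Ideal.Quotient.eq_zero_iff_mem.2 (Ideal.mem_span_singleton_self _)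
  have hB : ∀ b : B, ∃ z, F z = π (A b) := by
    intro b
    obtain ⟨z, rfl⟩ := L.gen b
    have hN' : (0 : ℤ) < N := by positivity
    refine ⟨fun l => ⟨(z l % N).toNat, ?_⟩, ?_⟩
    · have := Int.emod_lt_of_pos (z l) hN'
      have := Int.emod_nonneg (z l) hN'.ne'
      omega
    · simp only [hF, map_sum, map_mul, map_natCast, map_intCast]
      refine Finset.sum_congr rfl fun l _ => ?_
      congr 1
      have h1 : (((z l % N).toNat : ℕ) : ℤ) = z l - N * (z l / N) := by
        rw [Int.toNat_of_nonneg (Int.emod_nonneg (z l) hN'.ne'), Int.emod_def]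
      have h2 := congrArg (Int.cast (R := R ⧸ Ideal.span {(N : R)})) h1
      rw [map_natCast] at hπN
      rw [Int.cast_natCast, Int.cast_sub, Int.cast_mul, Int.cast_natCast, hπN, zero_mul,
        sub_zero] at h2
      exact h2
  have hfin : (Set.range (π.comp A)).Finite := by
    refine (Set.finite_range F).subset ?_
    rintro _ ⟨b, rfl⟩
    exact hB b
  -- multiplication by a unit is injective on the finite image of `B`, hence onto
  have hsurj : ∀ r, ∃ b, π r = π (A b) := by
    intro r
    obtain ⟨s, b, hs, hb⟩ := L.frac r
    have : Finite (Set.range (π.comp A)) := hfin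
    have hu : IsUnit (π (A s)) := hs.map π
    have hinj : Function.Injective (fun t : Set.range (π.comp A) =>
        (⟨π (A s) * t, by
          obtain ⟨_, c, rfl⟩ := t
          exact ⟨s * c, by simp⟩⟩ : Set.range (π.comp A))) := by
      intro x y hxy
      exact Subtype.ext (hu.mul_left_cancel (Subtype.ext_iff.1 hxy))
    obtain ⟨⟨_, c, rfl⟩, hc⟩ := (Finite.surjective_of_injective hinj)
      ⟨π (A b), b, rfl⟩
    refine ⟨c, hu.mul_left_cancel ?_⟩
    have := Subtype.ext_iff.1 hc
    simp only [RingHom.comp_apply] at this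
    rw [this, ← hb, map_mul, mul_comm]
  intro x
  obtain ⟨r, rfl⟩ := Ideal.Quotient.mk_surjective x
  obtain ⟨b, hb⟩ := hsurj r
  rw [hb]
  exact hB b

theorem Loc.finN (L : Loc A ι e) {N : ℕ} (hN : N ≠ 0) : Finite (R ⧸ Ideal.span {(N : R)}) :=
  Finite.of_surjective _ (L.cover hN)

theorem Loc.card (L : Loc A ι e) {N : ℕ} (hN : N ≠ 0) :
    Nat.card (R ⧸ Ideal.span {(N : R)}) ≤ N ^ n := by
  refine (Nat.card_le_card_of_surjective _ (L.cover hN)).trans ?_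
  simp

theorem Loc.fin (L : Loc A ι e) {r : R} (hr : r ≠ 0) : Finite (R ⧸ Ideal.span {r}) := by
  obtain ⟨N, hN, hd⟩ := L.dvd hr
  have := L.finN hN
  exact Finite.of_surjective _ (Ideal.Quotient.factor_surjective
    (Ideal.span_singleton_le_span_singleton.2 hd))

theorem Loc.surj (L : Loc A ι e) {c : R} (hc : c ≠ 0) (r : R) : ∃ b : B, c ∣ r - A b := by
  obtain ⟨N, hN, hd⟩ := L.dvd hc
  obtain ⟨z, hz⟩ := L.cover hN (Ideal.Quotient.mk _ r)
  exact ⟨_, hd.trans (Ideal.mem_span_singleton.1 (Ideal.Quotient.eq.1 hz.symm))⟩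

/-- Avoiding a large prime: since `|R / p| ≤ p ^ n`, there are at most `n` maximal ideals
above `p`, and each of them excludes at most one value of `t < p`. -/
theorem Loc.avoid (L : Loc A ι e) {a b : R} (hab : IsCoprime a b) {p : ℕ} (hp : p.Prime)
    (hn : n < p) : ∃ t : ℕ, IsCoprime (b + a * t) (p : R) := by
  by_contra! hcon
  have hM : ∀ t : Fin (n + 1), ∃ M : Ideal R, M.IsMaximal ∧ b + a * (t : ℕ) ∈ M ∧ (p : R) ∈ M := by
    intro t
    have h := hcon t
    rw [← Ideal.isCoprime_span_singleton_iff, Ideal.isCoprime_iff_sup_eq] at h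
    obtain ⟨M, hM, hle⟩ := Ideal.exists_le_maximal _ h
    exact ⟨M, hM, hle (Ideal.mem_sup_left (Ideal.mem_span_singleton_self _)),
      hle (Ideal.mem_sup_right (Ideal.mem_span_singleton_self _))⟩
  choose M hmax h1 h2 using hM
  have hne : Pairwise fun s t => M s ≠ M t := by
    intro s t hst heq
    have hst' : (s : ℕ) ≠ t := fun h => hst (Fin.ext h)
    have h3 : a * (((s : ℕ) : ℤ) - ((t : ℕ) : ℤ) : ℤ) ∈ M t := by
      have := (M t).sub_mem (heq ▸ h1 s) (h1 t)
      convert this using 1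
      push_cast
      ring
    have hco : IsCoprime (((s : ℕ) : ℤ) - ((t : ℕ) : ℤ)) (p : ℤ) := by
      rw [isCoprime_comm, Prime.coprime_iff_not_dvd (Nat.prime_iff_prime_int.1 hp)]
      intro hd
      have := Int.eq_zero_of_abs_lt_dvd hd (by rw [abs_lt]; omega)
      omega
    obtain ⟨u, v, huv⟩ := hco
    have ha : a ∈ M t := by
      have h4 : a = (u : R) * (a * (((s : ℕ) : ℤ) - ((t : ℕ) : ℤ) : ℤ)) + (a * v) * p := by
        have := congrArg (Int.cast (R := R)) huv
        push_cast at this ⊢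
        linear_combination -a * this
      rw [h4]
      exact (M t).add_mem ((M t).mul_mem_left _ h3) ((M t).mul_mem_left _ (h2 t))
    have hb : b ∈ M t := (Ideal.add_mem_iff_left _ ((M t).mul_mem_right _ ha)).1 (h1 t)
    obtain ⟨u, v, huv⟩ := hab
    exact (hmax t).ne_top ((M t).eq_top_iff_one.2
      (huv ▸ (M t).add_mem ((M t).mul_mem_left _ ha) ((M t).mul_mem_left _ hb)))
  have hcop : Pairwise (Function.onFun IsCoprime M) := fun s t hst =>
    Ideal.isCoprime_iff_sup_eq.2 ((hmax s).coprime_of_ne (hmax t) (hne hst))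
  have hsurj := Ideal.pi_quotient_surjective hcop
  have := L.finN hp.ne_zero
  have hle : ∀ t, Ideal.span {(p : R)} ≤ M t := fun t => by
    rw [Ideal.span_singleton_le_iff_mem]; exact h2 t
  have hsurj' : Function.Surjective (fun x : R ⧸ Ideal.span {(p : R)} =>
      fun t => Ideal.Quotient.factor (hle t) x) := by
    intro x
    obtain ⟨r, hr⟩ := hsurj x
    exact ⟨Ideal.Quotient.mk _ r, funext fun t => by simpa using hr t⟩
  have hc1 := (Nat.card_le_card_of_surjective _ hsurj').trans (L.card hp.ne_zero)
  rw [Nat.card_pi] at hc1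
  have hc2 : ∀ t, p ≤ Nat.card (R ⧸ M t) := by
    intro t
    have : Finite (R ⧸ M t) := Finite.of_surjective _ (Ideal.Quotient.factor_surjective (hle t))
    have := (hmax t)
    have : Nontrivial (R ⧸ M t) := Ideal.Quotient.nontrivial_iff.2 (hmax t).ne_top
    have : Fact p.Prime := ⟨hp⟩
    have h3 : addOrderOf (1 : R ⧸ M t) = p := by
      refine addOrderOf_eq_prime ?_ one_ne_zero
      rw [nsmul_one]
      have := Ideal.Quotient.eq_zero_iff_mem.2 (h2 t)
      simpa using this
    exact Nat.le_of_dvd Nat.card_pos (h3 ▸ addOrderOf_dvd_natCard (1 : R ⧸ M t))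
  have hc3 := Finset.prod_le_prod' (s := Finset.univ) fun t _ => hc2 t
  rw [Finset.prod_const, Finset.card_univ, Fintype.card_fin] at hc3
  exact absurd (hc3.trans hc1) (not_le.2 (Nat.pow_lt_pow_right hp.one_lt (Nat.lt_succ_self n)))

theorem coprime_congr {x y c : R} (h : IsCoprime x c) (hd : c ∣ y - x) : IsCoprime y c := by
  obtain ⟨k, hk⟩ := hd
  have : y = x + c * k := by linear_combination hk
  rw [this]
  exact h.add_mul_left_left _

/-- Chinese remaindering of the local choices, keeping the shift divisible by `q`. -/
theorem Loc.avoid_finset (L : Loc A ι e) {a b : R} (hab : IsCoprime a b) {q : ℕ}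
    (hq : n.factorial ∣ q) (hbq : IsCoprime b (q : R)) (s : Finset ℕ) :
    (∀ p ∈ s, p.Prime) → ∃ j : ℕ, q ∣ j ∧ ∀ p ∈ s, IsCoprime (b + a * j) (p : R) := by
  classical
  induction s using Finset.induction_on with
  | empty => exact fun _ => ⟨0, by simp, by simp⟩
  | insert p s hps ih =>
    intro hs
    have hp := hs p (Finset.mem_insert_self _ _)
    obtain ⟨j, hqj, hj⟩ := ih fun p hp => hs p (Finset.mem_insert_of_mem hp)
    by_cases hpq : p ∣ q
    · refine ⟨j, hqj, fun p' hp' => ?_⟩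
      rcases Finset.mem_insert.1 hp' with rfl | hp'
      · refine coprime_congr (x := b) (hbq.of_isCoprime_of_dvd_right (Nat.cast_dvd_cast hpq)) ?_
        obtain ⟨c, hc⟩ := (Nat.cast_dvd_cast (hpq.trans hqj) : (p' : R) ∣ (j : R))
        exact ⟨a * c, by linear_combination a * hc⟩
      · exact hj p' hp'
    · have hnp : n < p := by
        by_contra! h
        exact hpq (((hp.dvd_factorial).2 h).trans hq)
      obtain ⟨t, ht⟩ := L.avoid hab hp hnp
      have hco : (q * ∏ x ∈ s, x).Coprime p := by
        refine Nat.Coprime.mul_left ((hp.coprime_iff_not_dvd.2 hpq).symm)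
          (Nat.Coprime.prod_left fun x hx => ?_)
        exact (Nat.coprime_primes (hs x (Finset.mem_insert_of_mem hx)) hp).2
          fun h => hps (h ▸ hx)
      obtain ⟨j', h1, h2⟩ := Nat.chineseRemainder hco j t
      have key : ∀ {c i : ℕ}, j' ≡ i [MOD c] → (c : R) ∣ (b + a * j') - (b + a * i) := by
        intro c i h
        obtain ⟨d, hd⟩ := Nat.modEq_iff_dvd.1 h.symm
        have := congrArg (Int.cast (R := R)) hd
        push_cast at this
        exact ⟨a * d, by linear_combination a * this⟩
      refine ⟨j', ((h1.of_dvd (Dvd.intro _ rfl)).dvd_iff dvd_rfl).2 hqj, fun p' hp' => ?_⟩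
      rcases Finset.mem_insert.1 hp' with rfl | hp'
      · exact coprime_congr ht (key h2)
      · exact coprime_congr (hj p' hp')
          (key (h1.of_dvd (Dvd.dvd.mul_left (Finset.dvd_prod_of_mem _ hp') q)))

theorem coprime_of_primes {x : R} (d : ℕ) :
    d ≠ 0 → (∀ p : ℕ, p.Prime → p ∣ d → IsCoprime x (p : R)) → IsCoprime x (d : R) := by
  induction d using Nat.recOnMul with
  | zero => exact fun h => absurd rfl h
  | one => intro _ _; simpa using isCoprime_one_right
  | prime p hp => exact fun _ h => h p hp dvd_rfl
  | mul a b ha hb =>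
    intro h0 h
    rw [Nat.cast_mul]
    exact (ha (left_ne_zero_of_mul h0) fun p hp hd => h p hp (hd.mul_right _)).mul_right
      (hb (right_ne_zero_of_mul h0) fun p hp hd => h p hp (hd.mul_left _))

/-- Clearing denominators in a polynomial expression in `b / a`. -/
theorem clear_denom {a b : R} {θ : K} (hθ : θ * ι a = ι b) (g : Polynomial ℤ) :
    ∃ (N : ℕ) (h : R), ι h = ι a ^ N * Polynomial.aeval θ g := by
  induction g using Polynomial.induction_on' with
  | add f g hf hg =>
    obtain ⟨N₁, h₁, e₁⟩ := hf
    obtain ⟨N₂, h₂, e₂⟩ := hg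
    refine ⟨N₁ + N₂, h₁ * a ^ N₂ + h₂ * a ^ N₁, ?_⟩
    simp only [map_add, map_mul, map_pow, e₁, e₂]
    ring
  | monomial k c =>
    refine ⟨k, c * b ^ k, ?_⟩
    simp only [map_mul, map_pow, ← hθ, map_intCast, Polynomial.aeval_monomial,
      algebraMap_int_eq, eq_intCast]
    ring

/-- Some `b / a + q i ϑ` generates `K`, by the pigeonhole principle on the finitely many
subfields of `K`. -/
theorem exists_primitive {ϑ : K} (hϑ : IntermediateField.adjoin ℚ {ϑ} = ⊤) (y : K) {q : ℕ}
    (hq : q ≠ 0) : ∃ i : ℕ, IntermediateField.adjoin ℚ {y + q * i * ϑ} = ⊤ := by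
  have : Finite (IntermediateField ℚ K) :=
    Field.finite_intermediateField_of_exists_primitive_element ℚ K ⟨ϑ, hϑ⟩
  obtain ⟨i, j, hij, h⟩ := Finite.exists_ne_map_eq_of_infinite
    (fun i : ℕ => IntermediateField.adjoin ℚ {y + q * i * ϑ})
  refine ⟨i, ?_⟩
  rw [eq_top_iff, ← hϑ, IntermediateField.adjoin_simple_le_iff]
  set F := IntermediateField.adjoin ℚ {y + q * i * ϑ} with hF
  have h1 : y + q * i * ϑ ∈ F := IntermediateField.mem_adjoin_simple_self _ _
  have h2 : y + q * j * ϑ ∈ F := by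
    have := IntermediateField.mem_adjoin_simple_self ℚ (y + q * j * ϑ)
    rwa [← h] at this
  have h3 := F.sub_mem h1 h2
  have hij' : (i : K) - j ≠ 0 := sub_ne_zero.2 (Nat.cast_injective.ne hij)
  have hq' : (q : K) ≠ 0 := Nat.cast_ne_zero.2 hq
  have h4 : ϑ = (y + q * i * ϑ - (y + q * j * ϑ)) * ((q : K) * (i - j))⁻¹ := by
    field_simp
    ring
  rw [h4]
  exact F.mul_mem h3 (F.inv_mem (F.mul_mem (natCast_mem F q)
    (F.sub_mem (natCast_mem F i) (natCast_mem F j))))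

theorem exists_int_poly {θ : K} (hθ : IntermediateField.adjoin ℚ {θ} = ⊤) (x : K) :
    ∃ (d : ℕ) (f : Polynomial ℤ), d ≠ 0 ∧ (d : K) * x = Polynomial.aeval θ f := by
  have hx : x ∈ (IntermediateField.adjoin ℚ {θ}).toSubalgebra := by
    rw [hθ]; trivial
  rw [IntermediateField.adjoin_simple_toSubalgebra_of_isAlgebraic (Algebra.IsAlgebraic.isAlgebraic θ),
    Algebra.adjoin_singleton_eq_range_aeval] at hx
  obtain ⟨g, hg⟩ := hx
  replace hg : x = Polynomial.aeval θ g := hg.symm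
  subst hg
  obtain ⟨c, hc, h⟩ := IsLocalization.integerNormalization_spec (nonZeroDivisors ℤ) g
  set f := IsLocalization.integerNormalization (nonZeroDivisors ℤ) g
  have h1 : Polynomial.aeval θ f = (c : K) * Polynomial.aeval θ g := by
    rw [← Polynomial.aeval_map_algebraMap ℚ, h]
    simp
  refine ⟨c.natAbs, f * Polynomial.C c.sign, by simpa using nonZeroDivisors.ne_zero hc, ?_⟩
  rw [map_mul, h1]
  have h2 : ((c.natAbs : ℤ) : K) = (c * c.sign : ℤ) := by
    rw [Int.mul_sign_self]
  rw [Int.cast_natCast, Int.cast_mul] at h2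
  rw [h2, Polynomial.aeval_C, algebraMap_int_eq, eq_intCast]
  ring

theorem Loc.exists_theta (L : Loc A ι e) :
    ∃ t : B, IntermediateField.adjoin ℚ {ι (A t)} = ⊤ := by
  obtain ⟨x, hx⟩ := Field.exists_primitive_element ℚ K
  obtain ⟨b, c, hc, hbc⟩ := L.fieldFrac x
  obtain ⟨N, hN, d, hd⟩ := L.dvdB hc
  refine ⟨b * d, ?_⟩
  have hN' : (N : K) ≠ 0 := Nat.cast_ne_zero.2 hN
  have h1 : ι (A (b * d)) = x * N := by
    have : ((N : ℕ) : K) = ι (A c) * ι (A d) := by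
      rw [← map_mul, ← map_mul, ← hd, map_natCast, map_natCast]
    rw [this, map_mul, map_mul, ← hbc]
    ring
  rw [h1, eq_top_iff, ← hx, IntermediateField.adjoin_simple_le_iff]
  set F := IntermediateField.adjoin ℚ {x * (N : K)}
  have h2 : x * (N : K) ∈ F := IntermediateField.mem_adjoin_simple_self _ _
  have h3 : x = x * N * (N : K)⁻¹ := by field_simp
  rw [h3]
  exact F.mul_mem h2 (F.inv_mem (natCast_mem F N))

/-- Every unimodular row `(a, b)` can be changed by an elementary operation so that `R`
modulo its second entry is a quotient of `ℤ`. -/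
theorem Loc.cyc (L : Loc A ι e) {a b : R} (hab : IsCoprime a b) {m : ℕ} (hm : m ≠ 0) :
    ∃ x, IsCoprime (b + a * x) (m : R) ∧ ∀ r : R, ∃ z : ℤ, b + a * x ∣ r - z := by
  rcases eq_or_ne a 0 with rfl | ha
  · have hb : IsUnit b := isCoprime_zero_left.1 hab
    refine ⟨0, ?_, fun r => ⟨0, ?_⟩⟩
    · simpa using (isCoprime_one_left (x := (m : R))).of_isCoprime_of_dvd_left hb.dvd
    · simpa using hb.dvd
  set q := n.factorial * m with hqdef
  have hq : q ≠ 0 := mul_ne_zero (Nat.factorial_ne_zero _) hm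
  have := L.finN hq
  obtain ⟨x₀, hx₀⟩ := exists_coprime_add' (y := (q : R)) hab.symm
  obtain ⟨ϑ, hϑ⟩ := L.exists_theta
  have hιa : ι a ≠ 0 := (map_ne_zero_iff ι L.inj).2 ha
  obtain ⟨i, hi⟩ := exists_primitive hϑ (ι (b + a * x₀) / ι a) hq
  set b₀ := b + a * (x₀ + q * i * A ϑ) with hb₀
  set θ := ι (b + a * x₀) / ι a + q * i * ι (A ϑ) with hθ
  have hθa : θ * ι a = ι b₀ := by
    rw [hθ, hb₀]
    simp only [map_add, map_mul, map_natCast]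
    field_simp
    ring
  have hab₀ : IsCoprime a b₀ := (hab.symm.add_mul_left_left _).symm
  have hb₀q : IsCoprime b₀ (q : R) :=
    coprime_congr hx₀ ⟨a * i * A ϑ, by rw [hb₀]; ring⟩
  choose d f hd hf using fun l => exists_int_poly hi (ι (A (e l)))
  set D := ∏ l, d l with hD
  have hD0 : D ≠ 0 := Finset.prod_ne_zero_iff.2 fun l _ => hd l
  -- a shift `j` divisible by `q` making `b₀ + a j` nonzero and prime to all denominators
  obtain ⟨j, hqj, hjD, hj0⟩ : ∃ j : ℕ, q ∣ j ∧ IsCoprime (b₀ + a * j) (D : R) ∧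
      b₀ + a * j ≠ 0 := by
    obtain ⟨j, hqj, hj⟩ := L.avoid_finset hab₀ (Dvd.intro _ rfl) hb₀q D.primeFactors
      fun p hp => Nat.prime_of_mem_primeFactors hp
    have hjD := coprime_of_primes D hD0 fun p hp hd =>
      hj p (Nat.mem_primeFactors.2 ⟨hp, hd, hD0⟩)
    by_cases h0 : b₀ + a * j = 0
    · refine ⟨j + q * D, (Nat.dvd_add_right hqj).2 (Dvd.intro _ rfl), ?_, ?_⟩
      · exact coprime_congr hjD ⟨a * q, by push_cast; ring⟩
      · have h1 : b₀ + a * ((j + q * D : ℕ) : R) = a * ((q * D : ℕ) : R) := by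
          push_cast
          linear_combination h0
        rw [h1]
        exact mul_ne_zero ha (Nat.cast_ne_zero.2 (mul_ne_zero hq hD0))
    · exact ⟨j, hqj, hjD, h0⟩
  set b₁ := b₀ + a * j with hb₁
  have hab₁ : IsCoprime a b₁ := (hab₀.symm.add_mul_left_left _).symm
  have hfinb := L.fin hj0
  have hb₁eq : b + a * (x₀ + q * i * A ϑ + j) = b₁ := by rw [hb₁, hb₀]; ring
  refine ⟨x₀ + q * i * A ϑ + j, ?_, ?_⟩
  · rw [hb₁eq]
    refine IsCoprime.of_isCoprime_of_dvd_right (y := (q : R)) (coprime_congr hb₀q ?_)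
      (Nat.cast_dvd_cast (Dvd.intro_left _ rfl))
    obtain ⟨c, hc⟩ := (Nat.cast_dvd_cast hqj : (q : R) ∣ (j : R))
    exact ⟨a * c, by rw [hb₁]; linear_combination a * hc⟩
  rw [hb₁eq]
  have hgen : ∀ l, ∃ z : ℤ, b₁ ∣ A (e l) - z := by
    intro l
    obtain ⟨g, hg⟩ := Polynomial.dvd_iff_isRoot.2
      (show (f l - Polynomial.C ((f l).eval (-(j : ℤ)))).IsRoot (-(j : ℤ)) by simp)
    obtain ⟨N, h, hh⟩ := clear_denom hθa g
    set c := (f l).eval (-(j : ℤ)) with hc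
    have h1 : a ^ (N + 1) * (d l * A (e l) - c) = b₁ * h := by
      apply L.inj
      have h2 := congrArg (Polynomial.aeval θ) hg
      rw [map_sub, map_mul, map_sub, Polynomial.aeval_C, Polynomial.aeval_C, Polynomial.aeval_X,
        algebraMap_int_eq, eq_intCast, eq_intCast, ← hf, Int.cast_neg, Int.cast_natCast] at h2
      have h3 : ι b₁ = θ * ι a + ι a * j := by rw [hb₁, hθa]; simp
      simp only [map_mul, map_pow, map_sub, map_natCast, map_intCast, h3, hh]
      rw [h2]
      ring
    have h2 : b₁ ∣ d l * A (e l) - c :=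
      (hab₁.symm.pow_right (n := N + 1)).dvd_of_dvd_mul_left (h1 ▸ dvd_mul_right _ _)
    have hdl : IsCoprime b₁ (d l : R) := hjD.of_isCoprime_of_dvd_right
      (Nat.cast_dvd_cast (Finset.dvd_prod_of_mem _ (Finset.mem_univ l)))
    -- `d l` is a unit in a finite ring, so one of its powers is an inverse
    obtain ⟨k, hk⟩ : ∃ k : ℕ, b₁ ∣ (d l : R) ^ (k + 1) - 1 := by
      obtain ⟨u, v, huv⟩ := hdl
      set π := Ideal.Quotient.mk (Ideal.span {b₁})
      have hπ : π b₁ = 0 := Ideal.Quotient.eq_zero_iff_mem.2 (Ideal.mem_span_singleton_self _)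
      have hun : IsUnit (π (d l : R)) := by
        refine IsUnit.of_mul_eq_one (π v) ?_
        rw [← map_mul, ← map_one π, ← huv, map_add, map_mul π u, hπ, mul_zero, zero_add, mul_comm]
      obtain ⟨w, hw⟩ := hun
      have hpos := orderOf_pos w
      refine ⟨orderOf w - 1, ?_⟩
      rw [← Ideal.mem_span_singleton, ← Ideal.Quotient.eq, Nat.sub_add_cancel hpos]
      change π _ = π _
      rw [map_pow, ← hw, ← Units.val_pow_eq_pow_val, pow_orderOf_eq_one, map_one, Units.val_one]
    obtain ⟨s, hs⟩ := h2
    obtain ⟨t, ht⟩ := hk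
    refine ⟨(d l : ℤ) ^ k * c, (d l : R) ^ k * s - A (e l) * t, ?_⟩
    push_cast
    linear_combination (d l : R) ^ k * hs - A (e l) * ht
  choose z hz using hgen
  intro r
  obtain ⟨β, hβ⟩ := L.surj hj0 r
  obtain ⟨y, rfl⟩ := L.gen β
  refine ⟨∑ l, y l * z l, ?_⟩
  have h1 : b₁ ∣ ∑ l, (y l : R) * (A (e l) - z l) :=
    Finset.dvd_sum fun l _ => (hz l).mul_left _
  have h2 := hβ.add h1
  convert h2 using 1
  simp only [map_sum, map_mul, map_intCast, mul_sub, Finset.sum_sub_distrib, Int.cast_sum,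
    Int.cast_mul]
  ring

theorem exists_unit_infinite (hι : Function.Injective ι) (hu : Infinite Rˣ) :
    ∃ w : Rˣ, ∀ m : ℕ, m ≠ 0 → w ^ m ≠ 1 := by
  by_contra! h
  have hfin := NumberField.Embeddings.finite_of_norm_le K ℂ 1
  refine Set.infinite_univ_iff.2 hu (Set.Finite.of_finite_image (f := fun w : Rˣ => ι w)
    (hfin.subset ?_) ?_)
  · rintro _ ⟨w, -, rfl⟩
    obtain ⟨m, hm, hw⟩ := h w
    have h1 : ι (w : R) ^ m = 1 := by
      rw [← map_pow, ← Units.val_pow_eq_pow_val, hw, Units.val_one, map_one]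
    refine ⟨IsIntegral.of_pow (Nat.pos_of_ne_zero hm) (h1 ▸ isIntegral_one), fun φ => ?_⟩
    have h2 : ‖φ (ι (w : R))‖ ^ m = 1 := by rw [← norm_pow, ← map_pow, h1]; simp
    exact ((pow_eq_one_iff_of_nonneg (norm_nonneg _) hm).1 h2).le
  · intro x _ y _ hxy
    exact Units.ext (hι hxy)

theorem Loc.hyp (L : Loc A ι e) (hu : Infinite Rˣ) : ∃ w : Rˣ, Hyp R n w := by
  obtain ⟨w, hw⟩ := exists_unit_infinite L.inj hu
  exact ⟨w, fun r hr => L.dvd hr, fun r hr => L.fin hr, fun p hp => L.card hp.ne_zero,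
    fun a b hab m hm => L.cyc hab hm, hw⟩

end Localized

end SLU

namespace SLU

/-! ### The localized order as a ring of fractions in the number field -/

/-- The localization `R` of the order `B` satisfies `Loc` for its canonical embedding in `K`. -/
theorem exists_loc (K : Type*) [Field K] [NumberField K]
    (B : Subalgebra ℤ K) (hB : (Subalgebra.toSubmodule B).FG) [IsFractionRing B K]
    (S : Submonoid B) (hS : (0 : B) ∉ S)
    (R : Type*) [CommRing R] [IsDomain R] [Algebra B R] [IsLocalization S R] :
    ∃ (n : ℕ) (ι : R →+* K) (e : Fin n → B), Loc (algebraMap B R) ι e := by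
  have hval : Function.Injective (algebraMap B K) := IsFractionRing.injective B K
  have hunit : ∀ y : S, IsUnit (algebraMap B K y) := fun y =>
    isUnit_iff_ne_zero.2 fun h => hS ((map_eq_zero_iff _ hval).1 h ▸ y.2)
  set ι : R →+* K := IsLocalization.lift hunit with hι
  have hιA : ∀ b : B, ι (algebraMap B R b) = algebraMap B K b := fun b =>
    IsLocalization.lift_eq hunit b
  have hfrac : ∀ r : R, ∃ s b : B, IsUnit (algebraMap B R s) ∧
      r * algebraMap B R s = algebraMap B R b := by
    intro r
    obtain ⟨⟨b, s⟩, h⟩ := IsLocalization.surj S r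
    exact ⟨s, b, IsLocalization.map_units R s, h⟩
  have hinj : Function.Injective ι := by
    rw [injective_iff_map_eq_zero]
    intro r hr
    obtain ⟨s, b, hs, hb⟩ := hfrac r
    have h1 : algebraMap B K b = 0 := by rw [← hιA, ← hb, map_mul, hr, zero_mul]
    rw [(map_eq_zero_iff _ hval).1 h1, map_zero] at hb
    exact (mul_eq_zero.1 hb).resolve_right hs.ne_zero
  obtain ⟨n, v, hv⟩ := Submodule.fg_iff_exists_fin_generating_family.1 hB
  have hmem : ∀ l, v l ∈ B := fun l => by
    have : v l ∈ Subalgebra.toSubmodule B := hv ▸ Submodule.subset_span ⟨l, rfl⟩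
    exact this
  refine ⟨n, ι, fun l => ⟨v l, hmem l⟩, hinj, hfrac, fun b => ?_, fun x => ?_⟩
  · have hb : (b : K) ∈ Submodule.span ℤ (Set.range v) := by rw [hv]; exact b.2
    obtain ⟨z, hz⟩ := (Submodule.mem_span_range_iff_exists_fun ℤ).1 hb
    refine ⟨z, Subtype.ext ?_⟩
    rw [← hz]
    simp
  · obtain ⟨b, c, hc, rfl⟩ := IsFractionRing.div_surjective (A := B) x
    have hc0 := nonZeroDivisors.ne_zero hc
    refine ⟨b, c, hc0, ?_⟩
    rw [hιA, hιA]
    exact div_mul_cancel₀ _ ((map_ne_zero_iff _ hval).2 hc0)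

end SLU

theorem finite_index_of_unipotent_closure_localization
    (K : Type*) [Field K] [NumberField K]
    (B : Subalgebra ℤ K) (hB : (Subalgebra.toSubmodule B).FG)
    [IsFractionRing B K]
    (S : Submonoid B) (hS : (0 : B) ∉ S)
    (R : Type*) [CommRing R] [IsDomain R] [Algebra B R] [IsLocalization S R]
    (hu : Infinite Rˣ) :
    ∀ α : Rˣ, (α : R) ^ 2 ≠ 1 →
      (Subgroup.closure (upperUnip α ∪ lowerUnip α)).FiniteIndex := by
  intro α hα
  obtain ⟨n, ι, e, L⟩ := SLU.exists_loc K B hB S hS R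
  have : CharZero R := RingHom.charZero ι
  obtain ⟨w, H⟩ := L.hyp hu
  obtain ⟨N, hN, c, hc⟩ := L.dvd (sub_ne_zero.2 hα)
  have := H.finiteIndex hN
  refine Subgroup.finiteIndex_of_le (H := SLU.E (N : R)) (SLU.E2_le (fun r => ?_) fun r => ?_)
  · refine Subgroup.subset_closure (Or.inl ⟨c * r, ?_⟩)
    ext i j
    fin_cases i <;> fin_cases j <;> simp [hc, mul_assoc]
  · refine Subgroup.subset_closure (Or.inr ⟨c * r, ?_⟩)
    ext i j
    fin_cases i <;> fin_cases j <;> simp [hc, mul_assoc]
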